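/- Let n be a natural number and p a prime with p ≥ n, and let λ_1 ≥ ⋯ ≥ λ_t be a partition of n. Then there is a bijection between: (i) the set of isomorphism classes of groups P of order p^n of type (λ_1,…,λ_t) — meaning that for every i ≥ 0 the number of elements x ∈ P with x^{p^i} = 1 equals p^{∑_{j=1}^t min(λ_j, i)} — in which ⁅x,y⁆^p = 1 for all x,y ∈ P; and (ii) the set of isomorphism classes of nilpotent Lie algebras L over R_n = (ℤ/pℤ)[X]/(X^n) with p^n elements, of type (λ_1,…,λ_t) — meaning that for every i ≥ 0 the number of elements x ∈ L with T^i • x = 0 equals p^{∑_{j=1}^t min(λ_j, i)} — in which T•⁅a,b⁆ = 0 for all a,b ∈ L, where T is the image of X in R_n. -/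

import Mathlib

set_option synthInstance.maxHeartbeats 1000000

open Polynomial
open scoped commutatorElement

/-- The ring `R_n = (ℤ/pℤ)[X]/(Xⁿ)`. -/
noncomputable abbrev Rn (p n : ℕ) : Type :=
  Polynomial (ZMod p) ⧸ Ideal.span {(X : Polynomial (ZMod p)) ^ n}

/-- `T`, the image of `X` in `R_n`. -/
noncomputable def Tn (p n : ℕ) : Rn p n := Ideal.Quotient.mk _ X

/-- Bundled groups `P` of order `p ^ n`, of type `(λ₁, …, λ_t)` (i.e. with
`|{x : x ^ (p ^ i) = 1}| = p ^ ∑ⱼ min (λⱼ) i` for all `i`), in which `⁅x, y⁆ ^ p = 1`. -/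
def TypedGroup (p n t : ℕ) (lam : Fin t → ℕ) : Type 1 :=
  { q : Σ G : Type, Group G //
      letI := q.2
      Nat.card q.1 = p ^ n ∧
        (∀ i : ℕ, Nat.card {x : q.1 // x ^ p ^ i = 1} = p ^ (∑ j, min (lam j) i)) ∧
        ∀ x y : q.1, ⁅x, y⁆ ^ p = 1 }

/-- Group isomorphism between two bundled groups. -/
def typedGroupIsoRel (p n t : ℕ) (lam : Fin t → ℕ)
    (q₁ q₂ : TypedGroup p n t lam) : Prop :=
  letI := q₁.1.2; letI := q₂.1.2
  Nonempty (q₁.1.1 ≃* q₂.1.1)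

/-- Bundled nilpotent `R_n`-Lie algebras `L` with `p ^ n` elements, of type `(λ₁, …, λ_t)`
(i.e. with `|{x : Tⁱ • x = 0}| = p ^ ∑ⱼ min (λⱼ) i` for all `i`), in which `T • ⁅a, b⁆ = 0`. -/
def TypedLie (p n t : ℕ) (lam : Fin t → ℕ) : Type 1 :=
  { q : Σ (L : Type) (lr : LieRing L), @LieAlgebra (Rn p n) L _ lr //
      letI := q.2.1; letI := q.2.2
      Nat.card q.1 = p ^ n ∧
        (∀ i : ℕ, Nat.card {x : q.1 // (Tn p n) ^ i • x = 0} = p ^ (∑ j, min (lam j) i)) ∧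
        LieRing.IsNilpotent q.1 ∧
        ∀ a b : q.1, Tn p n • ⁅a, b⁆ = 0 }

/-- `R_n`-linear Lie algebra isomorphism between two bundled Lie algebras. -/
def typedLieIsoRel (p n t : ℕ) (lam : Fin t → ℕ)
    (q₁ q₂ : TypedLie p n t lam) : Prop :=
  letI := q₁.1.2.1; letI := q₁.1.2.2; letI := q₂.1.2.1; letI := q₂.1.2.2
  Nonempty (q₁.1.1 ≃ₗ⁅Rn p n⁆ q₂.1.1)

/-!
The bijection is composed of two.

Groups of class less than `p` whose exponent divides `N = p ^ n` correspond to Lie rings of class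
less than `p` killed by `N`. In the free associative algebra with all words of length at least `p`
set to zero, the criterion of Dynkin, Specht and Wever shows that `log (exp u * exp v)` is a Lie
element whenever `u` and `v` are, which turns the Lie elements into a group. A comparison of leading
terms along the lower central series identifies the subgroup generated by the letters with the free
group of class less than `p` and exponent dividing `N`, and shows that it is the whole group. So sum
and bracket are conversely given by group words. Under the correspondence `p ^ i`-th powers become
multiples by `p ^ i`, and `⁅x, y⁆ ^ p = 1` becomes `p • ⁅x, y⁆ = 0`: the groups of the theorem
correspond to Lie algebras over `ℤ`, with `p` in the role of `T`.

Let `O` be a principal ideal domain, `π` a prime of `O` with residue field `F`, and `L` a Lie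
algebra over `O` of type `λ` with `π • ⁅L, L⁆ = 0`. The bracket factors through `L / π L` and takes
values in the kernel of `π`. Both are identified with `F ^ t`, and on both of them isomorphisms act
through matrices over `F`, so the classification of such `L` involves only `F` and `λ`. It is
therefore the same for `(ℤ, p)` and for `((ℤ/p)[X], X)`, hence for `R_n = (ℤ/p)[X] / (X ^ n)`.
-/

namespace Lazard

section TruncExp

open Finset

variable {k : Type*} [CommRing k] {R : Type*} [Ring R] [Algebra k R] {p : ℕ}

/-- The truncated exponential `∑_{m < p} uᵐ / m!`. It is meaningful only when `(p - 1)!` is a unit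
of `k`, since `Ring.inverse` takes the value `0` on non-units. -/
noncomputable def truncExp (k : Type*) [CommRing k] {R : Type*} [Ring R] [Algebra k R] (p : ℕ)
    (u : R) : R :=
  ∑ m ∈ range p, Ring.inverse (m.factorial : k) • u ^ m

theorem map_truncExp {S : Type*} [Ring S] [Algebra k S] (f : R →ₐ[k] S) (p : ℕ) (u : R) :
    f (truncExp k p u) = truncExp k p (f u) := by
  simp [truncExp]

theorem truncExp_zero (hp : 0 < p) : truncExp k p (0 : R) = 1 := by
  obtain ⟨q, rfl⟩ := Nat.exists_eq_add_of_lt hp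
  simp [truncExp, sum_range_succ']

theorem truncExp_eq_one_add_add (hp : 2 ≤ p) (u : R) :
    truncExp k p u = 1 + u +
      ∑ m ∈ range (p - 2), Ring.inverse ((m + 2).factorial : k) • u ^ (m + 2) := by
  obtain ⟨q, rfl⟩ := Nat.exists_eq_add_of_le' hp
  rw [truncExp, sum_range_succ', sum_range_succ']
  simp only [zero_add, Nat.factorial_one, Nat.factorial_zero, Nat.cast_one, Ring.inverse_one,
    one_smul, pow_zero, pow_one, Nat.add_sub_cancel]
  abel

theorem inverse_factorial_mul_choose (hk : IsUnit ((p - 1).factorial : k)) {m : ℕ} (hm : m < p)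
    {x : ℕ × ℕ} (hx : x ∈ antidiagonal m) :
    Ring.inverse (m.factorial : k) * (m.choose x.1 : k) =
      Ring.inverse (x.1.factorial : k) * Ring.inverse (x.2.factorial : k) := by
  have hm' : IsUnit (m.factorial : k) := hk.natCast_factorial_of_le (by lia)
  rw [Nat.castChoose_eq hm' hx, mul_assoc, Ring.inverse_mul_cancel_left _ _ hm']

theorem sum_range_sum_range_eq_sum_antidiagonal {M : Type*} [AddCommMonoid M] (f : ℕ → ℕ → M)
    (hf : ∀ i j, p ≤ i + j → f i j = 0) :
    ∑ i ∈ range p, ∑ j ∈ range p, f i j = ∑ m ∈ range p, ∑ x ∈ antidiagonal m, f x.1 x.2 := by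
  rw [← sum_product', sum_sigma']
  refine (sum_bij_ne_zero (fun x _ _ ↦ x.2) ?_ ?_ ?_ fun _ _ _ ↦ rfl).symm
  · rintro ⟨m, i, j⟩ h _
    simp only [mem_sigma, mem_range, HasAntidiagonal.mem_antidiagonal, mem_product] at h ⊢
    lia
  · rintro ⟨m, i, j⟩ h _ ⟨m', i', j'⟩ h' _ e
    simp_all only [mem_sigma, mem_range, HasAntidiagonal.mem_antidiagonal, Prod.mk.injEq,
      Sigma.mk.injEq]
    lia
  · rintro ⟨i, j⟩ - h0
    have hij : i + j < p := not_le.1 fun hle ↦ h0 (hf _ _ hle)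
    exact ⟨⟨i + j, i, j⟩, by simpa using hij, h0, rfl⟩

theorem truncExp_add_apply {V : Type*} [AddCommGroup V] [Module k V]
    (hk : IsUnit ((p - 1).factorial : k)) {s t : Module.End k V} (hst : Commute s t) {b : V}
    (hb : ∀ i j, p ≤ i + j → (s ^ i) ((t ^ j) b) = 0) :
    truncExp k p (s + t) b = truncExp k p s (truncExp k p t b) := by
  calc truncExp k p (s + t) b
    _ = ∑ m ∈ range p, ∑ x ∈ antidiagonal m,
          (Ring.inverse (x.1.factorial : k) * Ring.inverse (x.2.factorial : k)) •
            (s ^ x.1) ((t ^ x.2) b) := by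
        simp only [truncExp, LinearMap.sum_apply, LinearMap.smul_apply]
        refine sum_congr rfl fun m hm ↦ ?_
        rw [hst.add_pow', LinearMap.sum_apply, smul_sum]
        refine sum_congr rfl fun x hx ↦ ?_
        rw [LinearMap.smul_apply, Module.End.mul_apply, ← Nat.cast_smul_eq_nsmul k, smul_smul,
          inverse_factorial_mul_choose hk (mem_range.1 hm) hx]
    _ = ∑ i ∈ range p, ∑ j ∈ range p,
          (Ring.inverse (i.factorial : k) * Ring.inverse (j.factorial : k)) •
            (s ^ i) ((t ^ j) b) :=
        (sum_range_sum_range_eq_sum_antidiagonal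
          (fun i j ↦ (Ring.inverse (i.factorial : k) * Ring.inverse (j.factorial : k)) •
            (s ^ i) ((t ^ j) b)) fun i j h ↦ by simp [hb i j h]).symm
    _ = truncExp k p s (truncExp k p t b) := by
        simp only [truncExp, LinearMap.sum_apply, LinearMap.smul_apply, map_sum, map_smul,
          smul_sum, smul_smul]
        rw [sum_comm]
        simp only [mul_comm]

theorem truncExp_add (hk : IsUnit ((p - 1).factorial : k)) {s t : R} (hst : Commute s t)
    (h : ∀ i j, p ≤ i + j → s ^ i * t ^ j = 0) :
    truncExp k p (s + t) = truncExp k p s * truncExp k p t := by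
  have := truncExp_add_apply hk (hst.map (Algebra.lmul k R)) (b := 1) fun i j hij ↦ by
    rw [← map_pow, ← map_pow]
    simpa using h i j hij
  rw [← map_add, ← map_truncExp, ← map_truncExp, ← map_truncExp] at this
  simpa using this

theorem truncExp_mulLeft_sub_mulRight (hk : IsUnit ((p - 1).factorial : k)) {a b : R}
    (h : ∀ i j, p ≤ i + j → a ^ i * b * a ^ j = 0) :
    truncExp k p (LinearMap.mulLeft k a - LinearMap.mulRight k a) b =
      truncExp k p a * b * truncExp k p (-a) := by
  have hneg : -LinearMap.mulRight k a = LinearMap.mulRight k (-a) := by ext; simp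
  rw [sub_eq_add_neg, hneg, truncExp_add_apply hk (LinearMap.commute_mulLeft_right a (-a))]
  · simp [truncExp, LinearMap.pow_mulLeft, LinearMap.pow_mulRight, sum_mul, mul_sum, mul_assoc]
  · intro i j hij
    rw [LinearMap.pow_mulLeft, LinearMap.pow_mulRight, neg_pow']
    simp [← mul_assoc, h i j hij]

end TruncExp

/-- A decreasing multiplicative filtration of an algebra by submodules whose `p`-th layer is
zero. Only the layers of positive index matter; the zeroth one need not be everything. -/
structure NilFiltration (k : Type*) [CommRing k] (R : Type*) [Ring R] [Algebra k R] (p : ℕ) where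
  layer : ℕ → Submodule k R
  antitone : Antitone layer
  mul_mem : ∀ {i j a b}, a ∈ layer i → b ∈ layer j → a * b ∈ layer (i + j)
  layer_eq_bot : layer p = ⊥

namespace NilFiltration

open Finset

variable {k : Type*} [CommRing k] {R : Type*} [Ring R] [Algebra k R] {p : ℕ}
  (F : NilFiltration k R p)

theorem pow_mem {u : R} {m : ℕ} (hu : u ∈ F.layer m) (j : ℕ) :
    u ^ (j + 1) ∈ F.layer (m * (j + 1)) := by
  induction j with
  | zero => simpa using hu
  | succ j ih => exact pow_succ u (j + 1) ▸ F.mul_mem ih hu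

theorem eq_zero_of_mem {a : R} {m : ℕ} (h : p ≤ m) (ha : a ∈ F.layer m) : a = 0 := by
  simpa [F.layer_eq_bot] using F.antitone h ha

theorem pow_mul_pow_eq_zero (hp : 0 < p) {u v : R} (hu : u ∈ F.layer 1) (hv : v ∈ F.layer 1)
    {i j : ℕ} (h : p ≤ i + j) : u ^ i * v ^ j = 0 := by
  have hu' (i) := one_mul (i + 1) ▸ F.pow_mem hu i
  have hv' (j) := one_mul (j + 1) ▸ F.pow_mem hv j
  match i, j with
  | 0, 0 => lia
  | 0, j + 1 => simpa using F.eq_zero_of_mem (by lia) (hv' j)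
  | i + 1, 0 => simpa using F.eq_zero_of_mem (by lia) (hu' i)
  | i + 1, j + 1 => exact F.eq_zero_of_mem (by lia) (F.mul_mem (hu' i) (hv' j))

include F in
theorem truncExp_sub_one_sub_mem (hp : 2 ≤ p) {u : R} {m : ℕ} (hm : 1 ≤ m) (hu : u ∈ F.layer m) :
    truncExp k p u - 1 - u ∈ F.layer (m + 1) := by
  rw [truncExp_eq_one_add_add hp, sub_sub, add_sub_cancel_left]
  refine Submodule.sum_mem _ fun j _ ↦ Submodule.smul_mem _ _ ?_
  exact F.antitone (by nlinarith) (F.pow_mem hu (j + 1))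

theorem truncExp_sub_one_mem (hp : 2 ≤ p) {u : R} {m : ℕ} (hm : 1 ≤ m) (hu : u ∈ F.layer m) :
    truncExp k p u - 1 ∈ F.layer m := by
  simpa using add_mem (F.antitone m.le_succ (F.truncExp_sub_one_sub_mem hp hm hu)) hu

theorem pow_sub_pow_mem {s t : R} {j : ℕ} (hs : s ∈ F.layer 1) (ht : t ∈ F.layer 1)
    (h : s - t ∈ F.layer j) (m : ℕ) : s ^ (m + 2) - t ^ (m + 2) ∈ F.layer (j + 1) := by
  induction m with
  | zero =>
    have e : s ^ 2 - t ^ 2 = s * (s - t) + (s - t) * t := by noncomm_ring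
    exact e ▸ add_mem (add_comm 1 j ▸ F.mul_mem hs h) (F.mul_mem h ht)
  | succ m ih =>
    have e : s ^ (m + 3) - t ^ (m + 3) =
        s * (s ^ (m + 2) - t ^ (m + 2)) + (s - t) * t ^ (m + 2) := by
      rw [pow_succ' s (m + 2), pow_succ' t (m + 2)]; noncomm_ring
    exact e ▸ add_mem (F.antitone (by lia) (F.mul_mem hs ih))
      (F.antitone (by lia) (F.mul_mem h (F.pow_mem ht (m + 1))))

theorem truncExp_sub_truncExp_sub_mem (hp : 2 ≤ p) {s t : R} {j : ℕ} (hs : s ∈ F.layer 1)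
    (ht : t ∈ F.layer 1) (h : s - t ∈ F.layer j) :
    truncExp k p s - truncExp k p t - (s - t) ∈ F.layer (j + 1) := by
  have e : truncExp k p s - truncExp k p t - (s - t) = ∑ m ∈ range (p - 2),
      Ring.inverse ((m + 2).factorial : k) • (s ^ (m + 2) - t ^ (m + 2)) := by
    simp only [truncExp_eq_one_add_add hp, smul_sub, sum_sub_distrib]
    abel
  exact e ▸ Submodule.sum_mem _ fun m _ ↦ Submodule.smul_mem _ _ (F.pow_sub_pow_mem hs ht h m)

include F in
theorem truncExp_injOn (hp : 2 ≤ p) : Set.InjOn (truncExp k p) (F.layer 1 : Set R) := by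
  intro s hs t ht h
  have key (j : ℕ) : s - t ∈ F.layer (j + 1) := by
    induction j with
    | zero => exact sub_mem hs ht
    | succ j ih => 
      have := F.truncExp_sub_truncExp_sub_mem hp hs ht ih
      simpa [h] using neg_mem this
  exact sub_eq_zero.1 (F.eq_zero_of_mem p.le_succ (key p))

theorem exists_truncExp_eq (hp : 2 ≤ p) {g : R} (hg : g - 1 ∈ F.layer 1) :
    ∃ u ∈ F.layer 1, truncExp k p u = g := by
  have key (j : ℕ) : ∃ u ∈ F.layer 1, truncExp k p u - g ∈ F.layer (j + 1) := by
    induction j with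
    | zero =>
      refine ⟨0, zero_mem _, ?_⟩
      simpa [truncExp_zero (show 0 < p by lia)] using neg_mem hg
    | succ j ih =>
      obtain ⟨u, hu, h⟩ := ih
      have hu' : u - (truncExp k p u - g) ∈ F.layer 1 := sub_mem hu (F.antitone (by lia) h)
      refine ⟨_, hu', ?_⟩
      convert F.truncExp_sub_truncExp_sub_mem hp (j := j + 1) hu' hu (by simpa using neg_mem h)
        using 1
      abel
  obtain ⟨u, hu, h⟩ := key p
  exact ⟨u, hu, sub_eq_zero.1 (F.eq_zero_of_mem p.le_succ h)⟩

theorem mem_layer_of_truncExp_sub_one_mem (hp : 2 ≤ p) {u : R} (hu : u ∈ F.layer 1) {m : ℕ}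
    (h : truncExp k p u - 1 ∈ F.layer m) : u ∈ F.layer m := by
  have key (j : ℕ) (hj : j + 1 ≤ m) : u ∈ F.layer (j + 1) := by
    induction j with
    | zero => exact hu
    | succ j ih =>
      simpa using sub_mem (F.antitone hj h) (F.truncExp_sub_one_sub_mem hp (by lia) (ih (by lia)))
  rcases m with _ | m
  · exact F.antitone zero_le_one hu
  · exact key m le_rfl

end NilFiltration

/-! ### Truncated free associative algebras -/

section LongWords

variable (k ι : Type*) [CommRing k]

/-- The elements of the free associative algebra all of whose words have length at least `d`. -/
noncomputable def longWords (d : ℕ) : Submodule k (MonoidAlgebra k (FreeMonoid ι)) :=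
  Submodule.span k (MonoidAlgebra.of k (FreeMonoid ι) '' {w | d ≤ w.length})

theorem longWords_zero : longWords k ι 0 = ⊤ := by
  refine eq_top_iff.2 fun a _ ↦ ?_
  induction a using MonoidAlgebra.induction_on with
  | of w => exact Submodule.subset_span ⟨w, Nat.zero_le _, rfl⟩
  | add a b ha hb => exact add_mem (ha trivial) (hb trivial)
  | smul c a ha => exact Submodule.smul_mem _ _ (ha trivial)

theorem longWords_mul_longWords (i j : ℕ) :
    longWords k ι i * longWords k ι j ≤ longWords k ι (i + j) := by
  rw [longWords, longWords, Submodule.span_mul_span, ← Set.image_mul]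
  refine Submodule.span_mono (Set.image_mono ?_)
  rintro _ ⟨v, hv, w, hw, rfl⟩
  exact (add_le_add hv hw).trans_eq (FreeMonoid.length_mul v w).symm

theorem longWords_antitone : Antitone (longWords k ι) := fun _ _ h ↦
  Submodule.span_mono (Set.image_mono fun _ hw ↦ h.trans hw)

/-- `longWords` as an ideal. -/
noncomputable def longIdeal (p : ℕ) : Ideal (MonoidAlgebra k (FreeMonoid ι)) where
  __ := longWords k ι p
  smul_mem' a b hb := by
    have ha : a ∈ longWords k ι 0 := longWords_zero k ι ▸ trivial
    exact zero_add p ▸ longWords_mul_longWords k ι 0 p (Submodule.mul_mem_mul ha hb)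

instance (p : ℕ) : (longIdeal k ι p).IsTwoSided where
  mul_mem_of_left {a} b ha := by
    have hb : b ∈ longWords k ι 0 := longWords_zero k ι ▸ trivial
    exact longWords_mul_longWords k ι p 0 (Submodule.mul_mem_mul ha hb)

/-- The free associative `k`-algebra on the letters `ι`, truncated by killing all words of length
at least `p`. -/
def TruncFree (p : ℕ) : Type _ := MonoidAlgebra k (FreeMonoid ι) ⧸ longIdeal k ι p

end LongWords

namespace TruncFree

variable {k ι : Type*} [CommRing k] {p : ℕ}

noncomputable instance : Ring (TruncFree k ι p) :=
  inferInstanceAs (Ring (MonoidAlgebra k (FreeMonoid ι) ⧸ longIdeal k ι p))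

noncomputable instance : Algebra k (TruncFree k ι p) :=
  inferInstanceAs (Algebra k (MonoidAlgebra k (FreeMonoid ι) ⧸ longIdeal k ι p))

noncomputable instance : LieRing (TruncFree k ι p) := .ofAssociativeRing

noncomputable instance : LieAlgebra k (TruncFree k ι p) := .ofAssociativeAlgebra

variable (k ι p) in
/-- The quotient map onto the truncated algebra. -/
noncomputable def mk : MonoidAlgebra k (FreeMonoid ι) →ₐ[k] TruncFree k ι p :=
  Ideal.Quotient.mkₐ k (longIdeal k ι p)

variable (k p) in
/-- The class of a word. -/
noncomputable def word : FreeMonoid ι →* TruncFree k ι p :=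
  (mk k ι p : MonoidAlgebra k (FreeMonoid ι) →* TruncFree k ι p).comp (MonoidAlgebra.of k _)

variable (k p) in
/-- The class of a letter. -/
noncomputable def letter (i : ι) : TruncFree k ι p := word k p (.of i)

theorem mk_surjective : Function.Surjective (mk k ι p) := Ideal.Quotient.mkₐ_surjective k _

theorem word_of_mul (i : ι) (w : FreeMonoid ι) :
    word k p (.of i * w) = letter k p i * word k p w := map_mul ..

theorem word_eq_zero {w : FreeMonoid ι} (h : p ≤ w.length) : word k p w = 0 :=
  Ideal.Quotient.eq_zero_iff_mem.2 (Submodule.subset_span ⟨w, h, rfl⟩)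

@[elab_as_elim]
theorem induction {P : TruncFree k ι p → Prop} (word : ∀ w, P (word k p w))
    (add : ∀ a b, P a → P b → P (a + b)) (smul : ∀ (c : k) a, P a → P (c • a))
    (a : TruncFree k ι p) : P a := by
  obtain ⟨a, rfl⟩ := mk_surjective a
  induction a using MonoidAlgebra.induction_on with
  | of w => exact word w
  | add a b ha hb => exact map_add (mk k ι p) a b ▸ add _ _ ha hb
  | smul c a ha => exact map_smul (mk k ι p) c a ▸ smul _ _ ha

theorem linearMap_ext {M : Type*} [AddCommMonoid M] [Module k M] {f g : TruncFree k ι p →ₗ[k] M}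
    (h : ∀ w, f (word k p w) = g (word k p w)) : f = g := by
  ext a
  induction a using induction with
  | word w => exact h w
  | add a b ha hb => rw [map_add, map_add, ha, hb]
  | smul c a ha => rw [map_smul, map_smul, ha]

section Lift

variable {M : Type*} [AddCommGroup M] [Module k M] (f : FreeMonoid ι → M)
  (hf : ∀ w, p ≤ w.length → f w = 0)

/-- The linear map with prescribed values on words. -/
noncomputable def liftLinear : TruncFree k ι p →ₗ[k] M :=
  Submodule.liftQ ((longIdeal k ι p).restrictScalars k)
      (Finsupp.linearCombination k f ∘ₗ (MonoidAlgebra.coeffLinearEquiv k).toLinearMap)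
      (Submodule.span_le.2 <| by rintro _ ⟨w, hw, rfl⟩; simp [hf w hw]) ∘ₗ
    (Submodule.Quotient.restrictScalarsEquiv k (longIdeal k ι p)).symm.toLinearMap

@[simp]
theorem liftLinear_word (w : FreeMonoid ι) : liftLinear f hf (word k p w) = f w := by
  change Finsupp.linearCombination k f (MonoidAlgebra.coeffLinearEquiv k (.of k _ w)) = f w
  simp

end Lift

section LiftAlg

variable {S : Type*} [Ring S] [Algebra k S] (f : ι → S)
  (hf : ∀ w : FreeMonoid ι, p ≤ w.length → FreeMonoid.lift f w = 0)

/-- The algebra homomorphism with prescribed values on letters. -/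
noncomputable def liftAlg : TruncFree k ι p →ₐ[k] S :=
  AlgHom.ofLinearMap (liftLinear (FreeMonoid.lift f) hf)
    (by rw [← map_one (word k p), liftLinear_word, map_one])
    (by
      intro a b
      induction a using induction with
      | add a a' ha ha' => simp only [add_mul, map_add, ha, ha']
      | smul c a ha => simp only [smul_mul_assoc, map_smul, ha]
      | word v =>
        induction b using induction with
        | add b b' hb hb' => simp only [mul_add, map_add, hb, hb']
        | smul c b hb => simp only [mul_smul_comm, map_smul, hb]
        | word w => rw [← map_mul, liftLinear_word, liftLinear_word, liftLinear_word, map_mul])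

@[simp]
theorem liftAlg_word (w : FreeMonoid ι) : liftAlg f hf (word k p w) = FreeMonoid.lift f w :=
  liftLinear_word _ hf w

@[simp]
theorem liftAlg_letter (i : ι) : liftAlg f hf (letter k p i) = f i := by
  rw [letter, liftAlg_word, FreeMonoid.lift_eval_of]

end LiftAlg

section Layer

variable (k ι p) in
/-- The elements all of whose words have length at least `d`. -/
noncomputable def layer (d : ℕ) : Submodule k (TruncFree k ι p) :=
  (longWords k ι d).map (mk k ι p).toLinearMap

theorem layer_le_iff {d : ℕ} {N : Submodule k (TruncFree k ι p)} :
    layer k ι p d ≤ N ↔ ∀ w : FreeMonoid ι, d ≤ w.length → word k p w ∈ N := by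
  rw [layer, longWords, Submodule.map_span, Submodule.span_le, Set.image_image,
    Set.image_subset_iff]
  rfl

theorem word_mem_layer {d : ℕ} {w : FreeMonoid ι} (h : d ≤ w.length) :
    word k p w ∈ layer k ι p d := layer_le_iff.1 le_rfl w h

theorem letter_mem_layer_one (i : ι) : letter k p i ∈ layer k ι p 1 :=
  word_mem_layer le_rfl

theorem layer_zero : layer k ι p 0 = ⊤ := by
  rw [layer, longWords_zero, Submodule.map_top]
  exact LinearMap.range_eq_top.2 mk_surjective

theorem mem_layer_zero (a : TruncFree k ι p) : a ∈ layer k ι p 0 :=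
  by simp [layer_zero]

variable (k ι p) in
/-- The filtration of the truncated free algebra by word length. -/
noncomputable def filtration : NilFiltration k (TruncFree k ι p) p where
  layer := layer k ι p
  antitone := fun _ _ h ↦ Submodule.map_mono (longWords_antitone k ι h)
  mul_mem {i j} a b ha hb := by
    have h := Submodule.map_mono (f := (mk k ι p).toLinearMap) (longWords_mul_longWords k ι i j)
    rw [Submodule.map_mul] at h
    exact h (Submodule.mul_mem_mul ha hb)
  layer_eq_bot := eq_bot_iff.2 <| layer_le_iff.2 fun _ hw ↦ word_eq_zero hw

variable {a b : TruncFree k ι p} {i j : ℕ}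

theorem layer_antitone : Antitone (layer k ι p) :=
  (filtration k ι p).antitone

theorem mul_mem_layer (ha : a ∈ layer k ι p i)
    (hb : b ∈ layer k ι p j) :
    a * b ∈ layer k ι p (i + j) := (filtration k ι p).mul_mem ha hb

theorem pow_mem_layer (ha : a ∈ layer k ι p i) (j : ℕ) :
    a ^ j ∈ layer k ι p (i * j) := by
  cases j with
  | zero => exact mem_layer_zero _
  | succ j => exact (filtration k ι p).pow_mem ha j

theorem eq_zero_of_mem_layer (h : p ≤ i) (ha : a ∈ layer k ι p i) :
    a = 0 := (filtration k ι p).eq_zero_of_mem h ha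

theorem lie_mem_layer (ha : a ∈ layer k ι p i)
    (hb : b ∈ layer k ι p j) :
    ⁅a, b⁆ ∈ layer k ι p (i + j) :=
  sub_mem (mul_mem_layer ha hb) (add_comm j i ▸ mul_mem_layer hb ha)

theorem lift_mem_layer {κ : Type*} {f : κ → TruncFree k ι p}
    (hf : ∀ i, f i ∈ layer k ι p 1) (w : FreeMonoid κ) :
    FreeMonoid.lift f w ∈ layer k ι p w.length := by
  induction w using FreeMonoid.recOn with
  | one => exact mem_layer_zero _
  | of_mul i w ih =>
    rw [map_mul, FreeMonoid.lift_eval_of, FreeMonoid.length_mul]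
    exact mul_mem_layer (by simpa using hf i) ih

/-- The substitution of elements without constant term for the letters. -/
noncomputable def subst {κ : Type*} (f : κ → TruncFree k ι p)
    (hf : ∀ i, f i ∈ layer k ι p 1) :
    TruncFree k κ p →ₐ[k] TruncFree k ι p :=
  liftAlg f fun w hw ↦ eq_zero_of_mem_layer hw (lift_mem_layer hf w)

end Layer

section Euler

variable (k ι p) in
/-- The Euler derivation, multiplying each word by its length. -/
noncomputable def euler : TruncFree k ι p →ₗ[k] TruncFree k ι p :=
  liftLinear (fun w ↦ (w.length : k) • word k p w) fun w hw ↦ by rw [word_eq_zero hw, smul_zero]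

variable (k ι p) in
/-- The inverse of the Euler derivation on elements without constant term. -/
noncomputable def eulerInv : TruncFree k ι p →ₗ[k] TruncFree k ι p :=
  liftLinear (fun w ↦ Ring.inverse (w.length : k) • word k p w)
    fun w hw ↦ by rw [word_eq_zero hw, smul_zero]

theorem euler_word (w : FreeMonoid ι) :
    euler k ι p (word k p w) = (w.length : k) • word k p w := liftLinear_word ..

theorem eulerInv_word (w : FreeMonoid ι) :
    eulerInv k ι p (word k p w) = Ring.inverse (w.length : k) • word k p w := liftLinear_word ..

theorem euler_mul (a b : TruncFree k ι p) :
    euler k ι p (a * b) = euler k ι p a * b + a * euler k ι p b := by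
  induction a using induction with
  | add a a' ha ha' => simp only [add_mul, map_add, ha, ha']; abel
  | smul c a ha => simp only [smul_mul_assoc, map_smul, ha, smul_add]
  | word v =>
    induction b using induction with
    | add b b' hb hb' => simp only [mul_add, map_add, hb, hb']; abel
    | smul c b hb => simp only [mul_smul_comm, map_smul, hb, smul_add]
    | word w =>
      rw [← map_mul, euler_word, euler_word, euler_word, FreeMonoid.length_mul, map_mul,
        smul_mul_assoc, mul_smul_comm, ← add_smul, Nat.cast_add]

theorem euler_one : euler k ι p 1 = 0 := by
  rw [← map_one (word k p), euler_word]; simp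

theorem euler_letter (i : ι) : euler k ι p (letter k p i) = letter k p i := by
  rw [letter, euler_word]; simp

theorem euler_lie (a b : TruncFree k ι p) :
    euler k ι p ⁅a, b⁆ = ⁅euler k ι p a, b⁆ + ⁅a, euler k ι p b⁆ := by
  simp only [Ring.lie_def, map_sub, euler_mul]; abel

theorem euler_mem_layer {d : ℕ} {a : TruncFree k ι p}
    (ha : a ∈ layer k ι p d) :
    euler k ι p a ∈ layer k ι p d := by
  have h : layer k ι p d ≤ (layer k ι p d).comap (euler k ι p) := layer_le_iff.2 fun w hw ↦ by
    rw [Submodule.mem_comap, euler_word]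
    exact Submodule.smul_mem _ _ (word_mem_layer hw)
  exact h ha

theorem euler_mem_layer_one (a : TruncFree k ι p) :
    euler k ι p a ∈ layer k ι p 1 := by
  have h : layer k ι p 0 ≤ (layer k ι p 1).comap (euler k ι p) := layer_le_iff.2 fun w _ ↦ by
    rw [Submodule.mem_comap, euler_word]
    rcases Nat.eq_zero_or_pos w.length with hw | hw
    · simp [hw]
    · exact Submodule.smul_mem _ _ (word_mem_layer hw)
  exact h (mem_layer_zero a)

theorem eulerInv_mem_layer {d : ℕ} {a : TruncFree k ι p}
    (ha : a ∈ layer k ι p d) :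
    eulerInv k ι p a ∈ layer k ι p d := by
  have h : layer k ι p d ≤ (layer k ι p d).comap (eulerInv k ι p) := layer_le_iff.2 fun w hw ↦ by
    rw [Submodule.mem_comap, eulerInv_word]
    exact Submodule.smul_mem _ _ (word_mem_layer hw)
  exact h ha

theorem isUnit_natCast_of_lt (hk : IsUnit ((p - 1).factorial : k)) {m : ℕ} (hm : 0 < m)
    (h : m < p) : IsUnit (m : k) :=
  isUnit_of_dvd_unit (Nat.cast_dvd_cast (Nat.dvd_factorial hm (by lia))) hk

variable {a : TruncFree k ι p}

theorem euler_eulerInv (hk : IsUnit ((p - 1).factorial : k))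
    (ha : a ∈ layer k ι p 1) :
    euler k ι p (eulerInv k ι p a) = a := by
  have h : layer k ι p 1 ≤ LinearMap.eqLocus (euler k ι p ∘ₗ eulerInv k ι p) LinearMap.id :=
    layer_le_iff.2 fun w hw ↦ by
      rw [LinearMap.mem_eqLocus, LinearMap.comp_apply, eulerInv_word, map_smul, euler_word,
        smul_smul, LinearMap.id_apply]
      rcases lt_or_ge w.length p with hp | hp
      · rw [Ring.inverse_mul_cancel _ (isUnit_natCast_of_lt hk hw hp), one_smul]
      · rw [word_eq_zero hp, smul_zero]
  exact h ha

theorem eulerInv_euler (hk : IsUnit ((p - 1).factorial : k))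
    (ha : a ∈ layer k ι p 1) :
    eulerInv k ι p (euler k ι p a) = a := by
  have h : Commute (euler k ι p) (eulerInv k ι p) := linearMap_ext fun w ↦ by
    simp only [Module.End.mul_apply, euler_word, eulerInv_word, map_smul, smul_smul, mul_comm]
  exact (DFunLike.congr_fun h.eq a).symm.trans (euler_eulerInv hk ha)

end Euler

end TruncFree

open TruncFree

/-! ### The Dynkin–Specht–Wever criterion -/

/-- The standing assumptions on the coefficients: `(p - 1)!` is invertible, so that exponentials
truncated at degree `p` make sense. -/
class IsLazardBase (k : Type*) [CommRing k] (p : ℕ) : Prop where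
  two_le : 2 ≤ p
  isUnit_factorial : IsUnit ((p - 1).factorial : k)

/-- Lie rings of nilpotency class less than `p`. -/
class IsLazardLie (p : ℕ) (L : Type*) [LieRing L] : Prop where
  lowerCentralSeries_eq_bot : LieModule.lowerCentralSeries ℤ L L (p - 1) = ⊥

theorem IsLazardLie.eq_zero_of_mem {p : ℕ} {L : Type*} [LieRing L] [IsLazardLie p L] {m : ℕ}
    (hm : p ≤ m + 1) {x : L} (hx : x ∈ LieModule.lowerCentralSeries ℤ L L m) : x = 0 := by
  simpa [lowerCentralSeries_eq_bot] using
    LieModule.antitone_lowerCentralSeries ℤ L L (show p - 1 ≤ m by lia) hx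

theorem mem_of_mem_lowerCentralSeries_succ {L : Type*} [LieRing L] {F : ℕ → AddSubgroup L}
    (h0 : ∀ a b : L, ⁅a, b⁆ ∈ F 0) (h : ∀ m (a : L), ∀ b ∈ F m, ⁅a, b⁆ ∈ F (m + 1)) {m : ℕ} {x : L}
    (hx : x ∈ LieModule.lowerCentralSeries ℤ L L (m + 1)) : x ∈ F m := by
  have key {m : ℕ} {N : LieSubmodule ℤ L L} (hN : ∀ a : L, ∀ b ∈ N, ⁅a, b⁆ ∈ F m) {x : L}
      (hx : x ∈ ⁅(⊤ : LieIdeal ℤ L), N⁆) : x ∈ F m := by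
    rw [← LieSubmodule.mem_toSubmodule, LieSubmodule.lieIdeal_oper_eq_linear_span'] at hx
    induction hx using Submodule.span_induction with
    | mem x hx =>
      obtain ⟨a, -, b, hb, rfl⟩ := hx
      exact hN a b hb
    | zero => exact zero_mem _
    | add x y _ _ hx hy => exact add_mem hx hy
    | smul c x _ hx => exact zsmul_mem hx c
  induction m generalizing x with
  | zero => exact key (fun a b _ ↦ h0 a b) hx
  | succ m ih =>
    rw [LieModule.lowerCentralSeries_succ] at hx
    exact key (fun a b hb ↦ h m a b (ih hb)) hx

theorem IsLazardLie.of_filtration {p : ℕ} (hp : 2 ≤ p) {L : Type*} [LieRing L]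
    (F : ℕ → AddSubgroup L) (h0 : ∀ a b : L, ⁅a, b⁆ ∈ F 0)
    (h : ∀ m (a : L), ∀ b ∈ F m, ⁅a, b⁆ ∈ F (m + 1)) (hF : F (p - 2) = ⊥) : IsLazardLie p L where
  lowerCentralSeries_eq_bot := by
    rw [eq_bot_iff]
    intro x hx
    rw [show p - 1 = p - 2 + 1 by lia] at hx
    simpa [hF] using mem_of_mem_lowerCentralSeries_succ h0 h hx

section AffineOp

variable {k Λ : Type*} [CommRing k] [LieRing Λ] [LieAlgebra k Λ]

variable (k) in
/-- The affine vector field `v ↦ ⁅x, v⁆ + y` attached to `(x, y)`, in homogeneous coordinates. -/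
noncomputable def affineOp : Λ × Λ →ₗ[k] Module.End k (Λ × k) where
  toFun q := LinearMap.inl k Λ k ∘ₗ
    (LieModule.toEnd k Λ Λ q.1).coprod (LinearMap.toSpanSingleton k Λ q.2)
  map_add' q r := by ext <;> simp
  map_smul' c q := by ext <;> simp

@[simp]
theorem affineOp_apply (q : Λ × Λ) (x : Λ × k) :
    affineOp k q x = (⁅q.1, x.1⁆ + x.2 • q.2, 0) := by
  simp [affineOp]

theorem lie_affineOp (q r : Λ × Λ) :
    ⁅affineOp k q, affineOp k r⁆ = affineOp k (⁅q.1, r.1⁆, ⁅q.1, r.2⁆ - ⁅r.1, q.2⁆) := by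
  refine LinearMap.ext fun x ↦ Prod.ext ?_ ?_
  · simp only [Ring.lie_def, LinearMap.sub_apply, Module.End.mul_apply, affineOp_apply, lie_add,
      lie_smul, lie_lie, zero_smul, add_zero, smul_sub, Prod.fst_sub]
    abel
  · simp [Ring.lie_def]

end AffineOp

section Counit

variable {k ι : Type*} [CommRing k] {p : ℕ} [IsLazardBase k p]

variable (k ι p) in
/-- The constant term. -/
noncomputable def counit : TruncFree k ι p →ₐ[k] k :=
  liftAlg (fun _ ↦ 0) fun w hw ↦ by
    have := IsLazardBase.two_le (k := k) (p := p)
    cases w using FreeMonoid.casesOn with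
    | one => exact absurd hw (by simp only [FreeMonoid.length_one]; lia)
    | of_mul i w => simp

theorem counit_letter (i : ι) : counit k ι p (letter k p i) = 0 := liftAlg_letter ..

theorem counit_eq_zero {a : TruncFree k ι p} (ha : a ∈ layer k ι p 1) : counit k ι p a = 0 := by
  have h : layer k ι p 1 ≤ LinearMap.ker (counit k ι p).toLinearMap :=
    layer_le_iff.2 fun w hw ↦ by
      cases w using FreeMonoid.casesOn with
      | one => simp at hw
      | of_mul i w => simp [word_of_mul, counit_letter]
  exact h ha

theorem sub_counit_mem_layer_one (a : TruncFree k ι p) :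
    a - counit k ι p a • 1 ∈ layer k ι p 1 := by
  have h : layer k ι p 0 ≤ (layer k ι p 1).comap
      (LinearMap.id - (counit k ι p).toLinearMap.smulRight 1) := layer_le_iff.2 fun w _ ↦ by
    rw [Submodule.mem_comap]
    cases w using FreeMonoid.casesOn with
    | one => simp
    | of_mul i w =>
      have hw : word k p (.of i * w) ∈ layer k ι p 1 := word_mem_layer (by simp)
      simpa only [LinearMap.sub_apply, LinearMap.id_apply, LinearMap.smulRight_apply,
        AlgHom.toLinearMap_apply, counit_eq_zero hw, zero_smul, sub_zero] using hw
  exact h (mem_layer_zero a)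

theorem lie_mem_layer_succ {a b : TruncFree k ι p} {d : ℕ} (hb : b ∈ layer k ι p d) :
    ⁅a, b⁆ ∈ layer k ι p (d + 1) := by
  have h : ⁅a, b⁆ = ⁅a - counit k ι p a • 1, b⁆ := by simp [Ring.lie_def, sub_mul, mul_sub]
  exact h ▸ add_comm 1 d ▸ lie_mem_layer (sub_counit_mem_layer_one a) hb

instance : IsLazardLie p (TruncFree k ι p) := by
  have hp := IsLazardBase.two_le (k := k) (p := p)
  refine .of_filtration hp (fun m ↦ (layer k ι p (m + 2)).toAddSubgroup) (fun a b ↦ ?_)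
    (fun m a b hb ↦ lie_mem_layer_succ hb) ?_
  · have hb : ⁅a, b⁆ = ⁅a, b - counit k ι p b • 1⁆ := by simp [Ring.lie_def, sub_mul, mul_sub]
    exact hb ▸ lie_mem_layer_succ (sub_counit_mem_layer_one b)
  · rw [Nat.sub_add_cancel hp, show layer k ι p p = ⊥ from (filtration k ι p).layer_eq_bot]
    rfl

end Counit

section Dynkin

variable {k ι Λ : Type*} [CommRing k] {p : ℕ} [IsLazardBase k p]
  [LieRing Λ] [LieAlgebra k Λ] [IsLazardLie p Λ] (f : ι → Λ)

theorem lift_affineOp_mem (i : ι) (w : FreeMonoid ι) (x : Λ × k) :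
    (FreeMonoid.lift (fun i ↦ affineOp k (f i, f i)) (.of i * w) x).1 ∈
      LieModule.lowerCentralSeries ℤ Λ Λ w.length := by
  rw [map_mul, FreeMonoid.lift_eval_of, Module.End.mul_apply, affineOp_apply]
  induction w using FreeMonoid.recOn generalizing i with
  | one => exact LieSubmodule.mem_top _
  | of_mul j w ih =>
    have hsnd : (FreeMonoid.lift (fun i ↦ affineOp k (f i, f i)) (.of j * w) x).2 = 0 := by simp
    rw [hsnd, zero_smul, add_zero, FreeMonoid.length_mul, FreeMonoid.length_of, add_comm,
      LieModule.lowerCentralSeries_succ]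
    refine LieSubmodule.lie_mem_lie (LieSubmodule.mem_top _) ?_
    rw [map_mul, FreeMonoid.lift_eval_of, Module.End.mul_apply, affineOp_apply]
    exact ih j

/-- The representation of the truncated free algebra by affine vector fields on `Λ` in which the
letter `i` acts as `v ↦ ⁅f i, v⁆ + f i`. -/
noncomputable def affineAd : TruncFree k ι p →ₐ[k] Module.End k (Λ × k) :=
  liftAlg (fun i ↦ affineOp k (f i, f i)) fun w hw ↦ by
    have hp := IsLazardBase.two_le (k := k) (p := p)
    cases w using FreeMonoid.casesOn with
    | one => exact absurd hw (by simp only [FreeMonoid.length_one]; lia)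
    | of_mul i w =>
      refine LinearMap.ext fun x ↦ Prod.ext ?_ (by simp)
      refine IsLazardLie.eq_zero_of_mem (p := p) ?_ (lift_affineOp_mem f i w x)
      simpa [add_comm] using hw

theorem affineAd_letter (i : ι) : affineAd f (letter k p i) = affineOp k (f i, f i) :=
  liftAlg_letter ..

theorem affineAd_apply_snd (a : TruncFree k ι p) (x : Λ × k) :
    (affineAd f a x).2 = counit k ι p a * x.2 := by
  induction a using induction with
  | add a b ha hb => rw [map_add, map_add, add_mul, LinearMap.add_apply, Prod.snd_add, ha, hb]
  | smul c a ha =>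
    rw [map_smul, map_smul, LinearMap.smul_apply, Prod.smul_snd, smul_mul_assoc, ha]
  | word w =>
    cases w using FreeMonoid.casesOn with
    | one => simp
    | of_mul i w => simp [word_of_mul, counit_letter, affineAd_letter]

/-- The Dynkin operator, sending a word to the corresponding right-normed bracket. -/
noncomputable def dynkin : TruncFree k ι p →ₗ[k] Λ :=
  LinearMap.fst k Λ k ∘ₗ LinearMap.applyₗ (0, 1) ∘ₗ (affineAd f).toLinearMap

theorem affineAd_apply_zero_one (a : TruncFree k ι p) :
    affineAd f a (0, 1) = (dynkin f a, counit k ι p a) :=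
  Prod.ext rfl <| by rw [affineAd_apply_snd, mul_one]

theorem dynkin_mul (a b : TruncFree k ι p) :
    dynkin f (a * b) = (affineAd f a (dynkin f b, counit k ι p b)).1 := by
  rw [← affineAd_apply_zero_one, ← Module.End.mul_apply, ← map_mul]
  rfl

theorem dynkin_letter_mul (i : ι) (b : TruncFree k ι p) :
    dynkin f (letter k p i * b) = ⁅f i, dynkin f b⁆ + counit k ι p b • f i := by
  rw [dynkin_mul, affineAd_letter, affineOp_apply]

theorem dynkin_one : dynkin f (1 : TruncFree k ι p) = 0 := by
  simp [dynkin]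

theorem dynkin_letter (i : ι) : dynkin f (letter k p i) = f i := by
  simpa [dynkin_one] using dynkin_letter_mul f i (1 : TruncFree k ι p)

theorem dynkin_mem_layer {d : ℕ} {a : TruncFree k ι p} (ha : a ∈ layer k ι p d) :
    dynkin (letter k p) a ∈ layer k ι p d := by
  have hword (w : FreeMonoid ι) : dynkin (letter k p) (word k p w) ∈ layer k ι p w.length := by
    induction w using FreeMonoid.recOn with
    | one => simp [dynkin_one]
    | of_mul i w ih =>
      rw [word_of_mul, dynkin_letter_mul, FreeMonoid.length_mul, FreeMonoid.length_of]
      refine add_mem (lie_mem_layer (letter_mem_layer_one i) ih) ?_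
      rcases Nat.eq_zero_or_pos w.length with hw | hw
      · exact Submodule.smul_mem _ _ (hw ▸ letter_mem_layer_one i)
      · simp [counit_eq_zero (word_mem_layer hw)]
  have h : layer k ι p d ≤ (layer k ι p d).comap (dynkin (letter k p)) :=
    layer_le_iff.2 fun w hw ↦ layer_antitone hw (hword w)
  exact h ha

theorem dynkin_mem_layer_one (a : TruncFree k ι p) :
    dynkin (letter k p) a ∈ layer k ι p 1 := by
  have h : dynkin (letter k p) a = dynkin (letter k p) (a - counit k ι p a • 1) := by
    simp [dynkin_one]
  exact h ▸ dynkin_mem_layer (sub_counit_mem_layer_one a)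

theorem euler_dynkin (a : TruncFree k ι p) :
    euler k ι p (dynkin (letter k p) a) = dynkin (letter k p) (euler k ι p a) := by
  refine LinearMap.congr_fun (f := euler k ι p ∘ₗ dynkin (letter k p))
    (g := dynkin (letter k p) ∘ₗ euler k ι p) (linearMap_ext fun w ↦ ?_) a
  simp only [LinearMap.comp_apply]
  induction w using FreeMonoid.recOn with
  | one => simp [euler_one, dynkin_one]
  | of_mul i w ih =>
    simp only [word_of_mul, euler_mul, euler_letter, map_add, dynkin_letter_mul, euler_lie, ih,
      map_smul, counit_eq_zero (euler_mem_layer_one _), zero_smul]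
    abel

theorem dynkin_eulerInv {a : TruncFree k ι p} (ha : a ∈ layer k ι p 1) :
    dynkin (letter k p) (eulerInv k ι p a) = eulerInv k ι p (dynkin (letter k p) a) := by
  have hk := IsLazardBase.isUnit_factorial (k := k) (p := p)
  rw [← eulerInv_euler hk (dynkin_mem_layer (eulerInv_mem_layer ha)), euler_dynkin,
    euler_eulerInv hk ha]

/-- The key identity behind the Dynkin–Specht–Wever criterion. -/
theorem affineAd_dynkin (a : TruncFree k ι p) :
    affineAd f (dynkin (letter k p) a) = affineOp k (dynkin f a, dynkin f (euler k ι p a)) := by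
  refine LinearMap.congr_fun (f := (affineAd f).toLinearMap ∘ₗ dynkin (letter k p))
    (g := affineOp k ∘ₗ (dynkin f).prod (dynkin f ∘ₗ euler k ι p)) (linearMap_ext fun w ↦ ?_) a
  simp only [LinearMap.comp_apply, LinearMap.prod_apply, Function.prod_apply,
    AlgHom.toLinearMap_apply]
  induction w using FreeMonoid.recOn with
  | one => simp [euler_one, dynkin_one, ← Prod.zero_eq_mk]
  | of_mul i w ih =>
    have hlie (b : TruncFree k ι p) : affineAd f ⁅letter k p i, b⁆ =
        ⁅affineAd f (letter k p i), affineAd f b⁆ := by simp only [Ring.lie_def, map_sub, map_mul]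
    simp only [word_of_mul, dynkin_letter_mul, map_add, map_smul, hlie, ih, affineAd_letter,
      lie_affineOp, euler_mul, euler_letter, counit_eq_zero (euler_mem_layer_one _), zero_smul,
      add_zero]
    rw [← map_smul, ← map_add, Prod.smul_mk, Prod.mk_add_mk, ← lie_skew (f i)]
    congr 2
    abel

theorem dynkin_dynkin (a : TruncFree k ι p) :
    dynkin f (dynkin (letter k p) a) = dynkin f (euler k ι p a) := by
  simpa [affineAd_apply_zero_one] using
    congrArg Prod.fst (LinearMap.congr_fun (affineAd_dynkin f a) (0, 1))

end Dynkin

section LieElements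

variable {k ι : Type*} [CommRing k] {p : ℕ} [IsLazardBase k p]

variable (k ι p) in
/-- The Lie elements of the truncated free algebra, cut out by a form of the Dynkin–Specht–Wever
criterion that is visibly stable under brackets. -/
noncomputable def lieElements : LieSubalgebra k (TruncFree k ι p) where
  carrier := {u | u ∈ layer k ι p 1 ∧ affineAd (letter k p) u = affineOp k (u, euler k ι p u)}
  zero_mem' := ⟨zero_mem _, by simp [← Prod.zero_eq_mk]⟩
  add_mem' := by
    rintro a b ⟨ha, ha'⟩ ⟨hb, hb'⟩
    exact ⟨add_mem ha hb, by rw [map_add, ha', hb', map_add, ← map_add]; rfl⟩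
  smul_mem' := by
    rintro c a ⟨ha, ha'⟩
    exact ⟨Submodule.smul_mem _ _ ha, by rw [map_smul, ha', map_smul, ← map_smul]; rfl⟩
  lie_mem' := by
    rintro a b ⟨ha, ha'⟩ ⟨hb, hb'⟩
    have hlie : affineAd (letter k p) ⁅a, b⁆ =
        ⁅affineAd (letter k p) a, affineAd (letter k p) b⁆ := by
      simp only [Ring.lie_def, map_sub, map_mul]
    refine ⟨layer_antitone (by lia) (lie_mem_layer ha hb), ?_⟩
    rw [hlie, ha', hb', lie_affineOp, euler_lie, ← lie_skew b, sub_neg_eq_add, add_comm ⁅a, _⁆]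

theorem mem_layer_one_of_mem_lieElements {u : TruncFree k ι p} (hu : u ∈ lieElements k ι p) :
    u ∈ layer k ι p 1 := hu.1

theorem affineAd_of_mem_lieElements {u : TruncFree k ι p} (hu : u ∈ lieElements k ι p) :
    affineAd (letter k p) u = affineOp k (u, euler k ι p u) := hu.2

theorem dynkin_mem_lieElements (a : TruncFree k ι p) :
    dynkin (letter k p) a ∈ lieElements k ι p :=
  ⟨dynkin_mem_layer_one a, by rw [affineAd_dynkin, euler_dynkin]⟩

theorem dynkin_eulerInv_of_mem_lieElements {u : TruncFree k ι p} (hu : u ∈ lieElements k ι p) :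
    dynkin (letter k p) (eulerInv k ι p u) = u := by
  have h : dynkin (letter k p) u = euler k ι p u := by
    simpa [affineAd_apply_zero_one] using
      congrArg Prod.fst (LinearMap.congr_fun (affineAd_of_mem_lieElements hu) (0, 1))
  rw [dynkin_eulerInv hu.1, h, eulerInv_euler IsLazardBase.isUnit_factorial hu.1]

variable (k p) in
/-- The letters as Lie elements. -/
noncomputable def lieLetter (i : ι) : lieElements k ι p :=
  ⟨letter k p i, by
    simpa only [dynkin_letter] using dynkin_mem_lieElements (letter k p i)⟩

@[simp]
theorem coe_lieLetter (i : ι) : (lieLetter k p i : TruncFree k ι p) = letter k p i := rfl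

@[elab_as_elim]
theorem lieElements_induction {C : lieElements k ι p → Prop} (zero : C 0)
    (add : ∀ u v, C u → C v → C (u + v)) (smul : ∀ (c : k) u, C u → C (c • u))
    (letter : ∀ i, C (lieLetter k p i)) (lie : ∀ (i : ι) u, C u → C ⁅lieLetter k p i, u⁆)
    (u : lieElements k ι p) : C u := by
  have key (a : TruncFree k ι p) :
      C ⟨dynkin (TruncFree.letter k p) a, dynkin_mem_lieElements a⟩ := by
    induction a using induction with
    | add a b ha hb => convert add _ _ ha hb; exact map_add ..
    | smul c a ha => convert smul c _ ha; exact map_smul ..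
    | word w =>
      induction w using FreeMonoid.recOn with
      | one => convert zero; rw [map_one, dynkin_one]; rfl
      | of_mul i w ih =>
        convert add _ _ (lie i _ ih) (smul (counit k ι p (word k p w)) _ (letter i)) using 1
        exact Subtype.ext ((congrArg _ (word_of_mul i w)).trans (dynkin_letter_mul _ i _))
  convert key (eulerInv k ι p u)
  exact (dynkin_eulerInv_of_mem_lieElements u.2).symm

variable {Λ : Type*} [LieRing Λ] [LieAlgebra k Λ]

theorem lieElements_hom_ext {θ η : lieElements k ι p →ₗ⁅k⁆ Λ}
    (h : ∀ i, θ (lieLetter k p i) = η (lieLetter k p i)) : θ = η := by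
  ext u
  induction u using lieElements_induction with
  | zero => rw [map_zero, map_zero]
  | add u v hu hv => rw [map_add, map_add, hu, hv]
  | smul c u hu => rw [map_smul, map_smul, hu]
  | letter i => exact h i
  | lie i u hu => rw [LieHom.map_lie, LieHom.map_lie, hu, h]

variable [IsLazardLie p Λ] (f : ι → Λ)

/-- The universal property of the Lie elements: they form the free Lie algebra of class less than
`p`. -/
noncomputable def lieLift : lieElements k ι p →ₗ⁅k⁆ Λ where
  toFun u := dynkin f (eulerInv k ι p u)
  map_add' u v := by simp
  map_smul' c u := by simp
  map_lie' := by
    rintro ⟨u, hu⟩ ⟨v, hv⟩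
    have hv1 := eulerInv_mem_layer (mem_layer_one_of_mem_lieElements hv)
    have huv : u * eulerInv k ι p v ∈ layer k ι p 1 :=
      layer_antitone (by lia) (mul_mem_layer (mem_layer_one_of_mem_lieElements hu) hv1)
    have hlie : dynkin (letter k p) (u * eulerInv k ι p v) = ⁅u, v⁆ := by
      rw [dynkin_mul, dynkin_eulerInv_of_mem_lieElements hv, affineAd_of_mem_lieElements hu,
        counit_eq_zero hv1]
      simp
    change dynkin f (eulerInv k ι p ⁅u, v⁆) =
      ⁅dynkin f (eulerInv k ι p u), dynkin f (eulerInv k ι p v)⁆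
    rw [← hlie, ← dynkin_eulerInv huv, dynkin_dynkin,
      euler_eulerInv IsLazardBase.isUnit_factorial huv, dynkin_mul, counit_eq_zero hv1]
    conv_lhs => rw [← dynkin_eulerInv_of_mem_lieElements hu]
    simp [affineAd_dynkin]

theorem lieLift_lieLetter (i : ι) : lieLift f (lieLetter k p i) = f i := by
  change dynkin f (eulerInv k ι p (word k p (.of i))) = f i
  rw [eulerInv_word, FreeMonoid.length_of, Nat.cast_one, Ring.inverse_one, one_smul]
  exact dynkin_letter f i

end LieElements

/-! ### The Baker–Campbell–Hausdorff product -/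

theorem truncExp_apply_of_comp_eq {k V W : Type*} [CommRing k] [AddCommGroup V] [Module k V]
    [AddCommGroup W] [Module k W] {f : Module.End k V} {g : Module.End k W} {T : V →ₗ[k] W}
    (h : g ∘ₗ T = T ∘ₗ f) (p : ℕ) (x : V) : T (truncExp k p f x) = truncExp k p g (T x) := by
  simp only [truncExp, LinearMap.sum_apply, LinearMap.smul_apply, map_sum, map_smul]
  exact Finset.sum_congr rfl fun m _ ↦ congrArg _
    (LinearMap.congr_fun (Module.End.commute_pow_left_of_commute h m) x).symm

/-- A filtration of a module of length `p` filters its endomorphisms by how far they raise it. -/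
def NilFiltration.ofEnd {k V : Type*} [CommRing k] [AddCommGroup V] [Module k V] {p : ℕ}
    (G : ℕ → Submodule k V) (hG : Antitone G) (h0 : G 0 = ⊤) (hp : G p = ⊥) :
    NilFiltration k (Module.End k V) p where
  layer d :=
    { carrier := {f | ∀ m, ∀ v ∈ G m, f v ∈ G (m + d)}
      add_mem' := fun ha hb m v hv ↦ add_mem (ha m v hv) (hb m v hv)
      zero_mem' := fun m v _ ↦ zero_mem _
      smul_mem' := fun c f hf m v hv ↦ Submodule.smul_mem _ _ (hf m v hv) }
  antitone _ _ h _ hf m v hv := hG (by lia) (hf m v hv)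
  mul_mem {i j} a b ha hb m v hv := by
    rw [add_comm i, ← add_assoc]
    exact ha _ _ (hb m v hv)
  layer_eq_bot := eq_bot_iff.2 fun f hf ↦ LinearMap.ext fun v ↦ by
    simpa [hp] using hf 0 v (h0 ▸ trivial)

section MulSubEuler

variable {k ι : Type*} [CommRing k] {p : ℕ}

theorem mul_sub_one_mem_layer_one {a b : TruncFree k ι p} (ha : a - 1 ∈ layer k ι p 1)
    (hb : b - 1 ∈ layer k ι p 1) : a * b - 1 ∈ layer k ι p 1 := by
  have h : a * b - 1 = (a - 1) * b + (b - 1) := by noncomm_ring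
  have hmul : (a - 1) * b ∈ layer k ι p 1 := by
    simpa only [add_zero] using mul_mem_layer ha (mem_layer_zero b)
  exact h ▸ add_mem hmul hb

variable (k ι p) in
/-- The operator `a ↦ v * a - s • euler a` attached to `(v, s)`. It turns the affine vector field
of `u` and `euler u` into the commutator with multiplication by `u`. -/
noncomputable def mulSubEuler :
    TruncFree k ι p × k →ₗ[k] Module.End k (TruncFree k ι p) :=
  (LinearMap.mul k _).coprod (LinearMap.toSpanSingleton k _ (-euler k ι p))

theorem mulSubEuler_apply (x : TruncFree k ι p × k) (a : TruncFree k ι p) :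
    mulSubEuler k ι p x a = x.1 * a - x.2 • euler k ι p a := by
  simp [mulSubEuler, sub_eq_add_neg]

theorem mulSubEuler_comp_affineOp (u : TruncFree k ι p) :
    (LinearMap.mulLeft k (LinearMap.mulLeft k u) - LinearMap.mulRight k (LinearMap.mulLeft k u)) ∘ₗ
      mulSubEuler k ι p = mulSubEuler k ι p ∘ₗ affineOp k (u, euler k ι p u) := by
  refine LinearMap.ext fun x ↦ LinearMap.ext fun a ↦ ?_
  simp only [LinearMap.comp_apply, LinearMap.sub_apply, LinearMap.mulLeft_apply,
    LinearMap.mulRight_apply, Module.End.mul_apply, mulSubEuler_apply, affineOp_apply, euler_mul,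
    Ring.lie_def, zero_smul, sub_zero, add_mul, sub_mul, mul_sub, smul_mul_assoc, smul_add,
    mul_smul_comm, mul_assoc]
  abel

theorem truncExp_mulLeft (u : TruncFree k ι p) :
    truncExp k p (LinearMap.mulLeft k u) = LinearMap.mulLeft k (truncExp k p u) :=
  (map_truncExp (Algebra.lmul k (TruncFree k ι p)) p u).symm

end MulSubEuler

section Exponential

variable {k ι : Type*} [CommRing k] {p : ℕ} [IsLazardBase k p] {u v w : TruncFree k ι p}

theorem pow_mul_pow_eq_zero (hu : u ∈ layer k ι p 1) (hv : v ∈ layer k ι p 1) (i j : ℕ)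
    (h : p ≤ i + j) : u ^ i * v ^ j = 0 :=
  (filtration k ι p).pow_mul_pow_eq_zero
    (by have := IsLazardBase.two_le (k := k) (p := p); lia) hu hv h

theorem truncExp_truncFree_zero : truncExp k p (0 : TruncFree k ι p) = 1 :=
  truncExp_zero (by have := IsLazardBase.two_le (k := k) (p := p); lia)

theorem truncExp_add_of_commute (hu : u ∈ layer k ι p 1) (hv : v ∈ layer k ι p 1)
    (h : Commute u v) : truncExp k p (u + v) = truncExp k p u * truncExp k p v :=
  truncExp_add IsLazardBase.isUnit_factorial h (pow_mul_pow_eq_zero hu hv)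

theorem truncExp_mul_truncExp_neg (hu : u ∈ layer k ι p 1) :
    truncExp k p u * truncExp k p (-u) = 1 := by
  rw [← truncExp_add_of_commute hu (neg_mem hu) (Commute.refl u).neg_right, add_neg_cancel,
    truncExp_truncFree_zero]

theorem truncExp_neg_mul_truncExp (hu : u ∈ layer k ι p 1) :
    truncExp k p (-u) * truncExp k p u = 1 := by
  simpa using truncExp_mul_truncExp_neg (neg_mem hu)

theorem truncExp_neg_of_truncExp_eq_mul (hu : u ∈ layer k ι p 1) (hv : v ∈ layer k ι p 1)
    (hw : w ∈ layer k ι p 1) (h : truncExp k p w = truncExp k p u * truncExp k p v) :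
    truncExp k p (-w) = truncExp k p (-v) * truncExp k p (-u) := by
  refine left_inv_eq_right_inv (truncExp_neg_mul_truncExp hw) ?_
  rw [h, mul_assoc, ← mul_assoc (truncExp k p v), truncExp_mul_truncExp_neg hv, one_mul,
    truncExp_mul_truncExp_neg hu]

end Exponential

section Bch

variable {k ι : Type*} [CommRing k] {p : ℕ} [IsLazardBase k p]

variable (k ι p) in
/-- The filtration of `Module.End k (TruncFree k ι p × k)` in which the second factor has degree
zero. -/
noncomputable def affineFiltration : NilFiltration k (Module.End k (TruncFree k ι p × k)) p :=
  .ofEnd (fun m ↦ (layer k ι p m).prod (if m = 0 then ⊤ else ⊥))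
    (fun i j h ↦ Submodule.prod_mono (layer_antitone h) (by split_ifs <;> simp; lia))
    (by simp [layer_zero])
    (by
      have hp := IsLazardBase.two_le (k := k) (p := p)
      rw [if_neg (by lia), show layer k ι p p = ⊥ from (filtration k ι p).layer_eq_bot,
        Submodule.prod_bot])

theorem affineOp_mem_affineFiltration (x : TruncFree k ι p) {y : TruncFree k ι p}
    (hy : y ∈ layer k ι p 1) : affineOp k (x, y) ∈ (affineFiltration k ι p).layer 1 := by
  rintro m ⟨v, s⟩ ⟨hv, hs⟩
  rw [affineOp_apply]
  refine ⟨add_mem (lie_mem_layer_succ hv) ?_, by simp⟩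
  rcases Nat.eq_zero_or_pos m with rfl | hm
  · exact Submodule.smul_mem _ _ hy
  · have hs : s = 0 := by simpa [hm.ne'] using hs
    simp [hs]

theorem affineAd_mem_affineFiltration {u : TruncFree k ι p} (hu : u ∈ layer k ι p 1) :
    affineAd (letter k p) u ∈ (affineFiltration k ι p).layer 1 := by
  have hletter (i : ι) :
      affineAd (letter k p) (letter k p i) ∈ (affineFiltration k ι p).layer 1 := by
    rw [affineAd_letter]
    exact affineOp_mem_affineFiltration _ (letter_mem_layer_one i)
  have h : layer k ι p 1 ≤ ((affineFiltration k ι p).layer 1).comap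
      (affineAd (letter k p)).toLinearMap := layer_le_iff.2 fun w hw ↦ by
    rw [Submodule.mem_comap, AlgHom.toLinearMap_apply]
    induction w using FreeMonoid.recOn with
    | one => simp at hw
    | of_mul i w ih =>
      rw [word_of_mul, map_mul]
      cases w using FreeMonoid.casesOn with
      | one => simpa using hletter i
      | of_mul j w =>
        have hmul := (affineFiltration k ι p).mul_mem (hletter i) (ih (by simp))
        exact (affineFiltration k ι p).antitone (show 1 ≤ 1 + 1 by simp) hmul
  exact h hu

theorem mulSubEuler_truncExp_affineOp {u : TruncFree k ι p} (hu : u ∈ layer k ι p 1)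
    (x : TruncFree k ι p × k) :
    mulSubEuler k ι p (truncExp k p (affineOp k (u, euler k ι p u)) x) =
      LinearMap.mulLeft k (truncExp k p u) * mulSubEuler k ι p x *
        LinearMap.mulLeft k (truncExp k p (-u)) := by
  have hpow (j m : ℕ) {v : TruncFree k ι p} (hv : v ∈ layer k ι p m) :
      u ^ j * v ∈ layer k ι p (j + m) :=
    mul_mem_layer (by simpa using pow_mem_layer hu j) hv
  rw [truncExp_apply_of_comp_eq (mulSubEuler_comp_affineOp u), truncExp_mulLeft_sub_mulRight
    IsLazardBase.isUnit_factorial, ← truncExp_mulLeft, ← truncExp_mulLeft]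
  · congr 2
    ext a
    simp
  · refine fun i j hij ↦ LinearMap.ext fun a ↦ ?_
    simp only [Module.End.mul_apply, LinearMap.pow_mulLeft, LinearMap.mulLeft_apply,
      mulSubEuler_apply, LinearMap.zero_apply]
    have hj : u ^ j * a ∈ layer k ι p j := hpow j 0 (mem_layer_zero a)
    have hx : x.1 * (u ^ j * a) ∈ layer k ι p j := by
      simpa only [zero_add] using mul_mem_layer (mem_layer_zero x.1) hj
    exact eq_zero_of_mem_layer hij
      (hpow i j (sub_mem hx (Submodule.smul_mem _ _ (euler_mem_layer hj))))

theorem truncExp_affineOp_apply_snd (q : TruncFree k ι p × TruncFree k ι p)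
    (x : TruncFree k ι p × k) : (truncExp k p (affineOp k q) x).2 = x.2 := by
  have h : (0 : Module.End k k) ∘ₗ LinearMap.snd k (TruncFree k ι p) k =
      LinearMap.snd k (TruncFree k ι p) k ∘ₗ affineOp k q :=
    LinearMap.ext fun x ↦ by simp
  have hp := IsLazardBase.two_le (k := k) (p := p)
  simpa [truncExp_zero (k := k) (R := Module.End k k) (show 0 < p by lia)] using
    truncExp_apply_of_comp_eq h p x

theorem truncExp_affineOp_mul {u v w : TruncFree k ι p} (hu : u ∈ layer k ι p 1)
    (hv : v ∈ layer k ι p 1) (hw : w ∈ layer k ι p 1)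
    (h : truncExp k p w = truncExp k p u * truncExp k p v) :
    truncExp k p (affineOp k (w, euler k ι p w)) =
      truncExp k p (affineOp k (u, euler k ι p u)) *
        truncExp k p (affineOp k (v, euler k ι p v)) := by
  have hone (y : TruncFree k ι p × k) : mulSubEuler k ι p y 1 = y.1 := by
    simp [mulSubEuler_apply, euler_one]
  refine LinearMap.ext fun x ↦ Prod.ext ?_ ?_
  · rw [Module.End.mul_apply, ← hone, ← hone, mulSubEuler_truncExp_affineOp hw,
      mulSubEuler_truncExp_affineOp hu, mulSubEuler_truncExp_affineOp hv, h,
      truncExp_neg_of_truncExp_eq_mul hu hv hw h]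
    simp only [Module.End.mul_apply, LinearMap.mulLeft_apply, mul_assoc]
  · rw [Module.End.mul_apply]
    simp only [truncExp_affineOp_apply_snd]

/-- The Baker–Campbell–Hausdorff theorem. -/
theorem mem_lieElements_of_truncExp_eq_mul {u v w : TruncFree k ι p}
    (hu : u ∈ lieElements k ι p) (hv : v ∈ lieElements k ι p) (hw : w ∈ layer k ι p 1)
    (h : truncExp k p w = truncExp k p u * truncExp k p v) : w ∈ lieElements k ι p := by
  have key : truncExp k p (affineAd (letter k p) w) =
      truncExp k p (affineOp k (w, euler k ι p w)) := by
    rw [truncExp_affineOp_mul hu.1 hv.1 hw h, ← affineAd_of_mem_lieElements hu,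
      ← affineAd_of_mem_lieElements hv, ← map_truncExp, ← map_truncExp, ← map_truncExp, h,
      map_mul]
  exact ⟨hw, (affineFiltration k ι p).truncExp_injOn (IsLazardBase.two_le k)
    (affineAd_mem_affineFiltration hw)
    (affineOp_mem_affineFiltration w (euler_mem_layer hw)) key⟩

theorem exists_truncExp_eq_mul (u v : lieElements k ι p) :
    ∃ w : lieElements k ι p, truncExp k p w.1 = truncExp k p u.1 * truncExp k p v.1 := by
  have hp := IsLazardBase.two_le (k := k) (p := p)
  have hsub (x : lieElements k ι p) : truncExp k p x.1 - 1 ∈ layer k ι p 1 :=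
    (filtration k ι p).truncExp_sub_one_mem hp le_rfl x.2.1
  obtain ⟨w, hw, h⟩ := (filtration k ι p).exists_truncExp_eq hp
    (mul_sub_one_mem_layer_one (hsub u) (hsub v))
  exact ⟨⟨w, mem_lieElements_of_truncExp_eq_mul u.2 v.2 hw h⟩, h⟩

/-- The Baker–Campbell–Hausdorff product `log (exp u * exp v)` of Lie elements. -/
noncomputable def bch (u v : lieElements k ι p) : lieElements k ι p :=
  (exists_truncExp_eq_mul u v).choose

theorem truncExp_bch (u v : lieElements k ι p) :
    truncExp k p (bch u v).1 = truncExp k p u.1 * truncExp k p v.1 :=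
  (exists_truncExp_eq_mul u v).choose_spec

theorem truncExp_coe_injective :
    Function.Injective fun u : lieElements k ι p ↦ truncExp k p u.1 := fun u v h ↦
  Subtype.ext ((filtration k ι p).truncExp_injOn (IsLazardBase.two_le k) u.2.1 v.2.1 h)

theorem bch_assoc (u v w : lieElements k ι p) : bch (bch u v) w = bch u (bch v w) :=
  truncExp_coe_injective (by simp only [truncExp_bch, mul_assoc])

theorem zero_bch (u : lieElements k ι p) : bch 0 u = u :=
  truncExp_coe_injective (by simp [truncExp_bch, truncExp_truncFree_zero])

theorem neg_bch (u : lieElements k ι p) : bch (-u) u = 0 :=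
  truncExp_coe_injective <| by
    simpa [truncExp_bch, truncExp_truncFree_zero] using truncExp_neg_mul_truncExp u.2.1

variable {κ : Type*}

theorem subst_coe (θ : lieElements k κ p →ₗ⁅k⁆ lieElements k ι p) (u : lieElements k κ p) :
    subst (fun i ↦ (θ (lieLetter k p i)).1) (fun i ↦ (θ (lieLetter k p i)).2.1) u.1 =
      (θ u).1 := by
  induction u using lieElements_induction with
  | zero => simp
  | add u v hu hv =>
    rw [map_add, AddMemClass.coe_add, AddMemClass.coe_add, map_add, hu, hv]
  | smul c u hu => rw [map_smul, SetLike.val_smul, SetLike.val_smul, map_smul, hu]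
  | letter i => exact liftAlg_letter ..
  | lie i u hu =>
    rw [LieHom.map_lie, LieSubalgebra.coe_bracket, LieSubalgebra.coe_bracket, Ring.lie_def,
      Ring.lie_def, map_sub, map_mul, map_mul, hu, coe_lieLetter, subst, liftAlg_letter]

theorem map_bch (θ : lieElements k κ p →ₗ⁅k⁆ lieElements k ι p) (u v : lieElements k κ p) :
    θ (bch u v) = bch (θ u) (θ v) :=
  truncExp_coe_injective <| by
    beta_reduce
    rw [truncExp_bch, ← subst_coe, ← subst_coe, ← subst_coe, ← map_truncExp, ← map_truncExp,
      ← map_truncExp, truncExp_bch, map_mul]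

end Bch

/-! ### Lower central series and words -/

section LowerCentralSeries

variable {G : Type*} [Group G]

theorem commutator_commutator_le_of_rotate (A B C N : Subgroup G) [N.Normal]
    (h₁ : ⁅⁅B, C⁆, A⁆ ≤ N) (h₂ : ⁅⁅C, A⁆, B⁆ ≤ N) : ⁅⁅A, B⁆, C⁆ ≤ N := by
  have key (K : Subgroup G) : K ≤ N ↔ K.map (QuotientGroup.mk' N) = ⊥ := by
    rw [Subgroup.map_eq_bot_iff, QuotientGroup.ker_mk']
  rw [key, Subgroup.map_commutator, Subgroup.map_commutator] at *
  exact Subgroup.commutator_commutator_eq_bot_of_rotate h₁ h₂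

theorem commutator_lowerCentralSeries_le (i j : ℕ) :
    ⁅(⊤ : Subgroup G).lowerCentralSeries i, (⊤ : Subgroup G).lowerCentralSeries j⁆ ≤
      (⊤ : Subgroup G).lowerCentralSeries (i + j + 1) := by
  induction j generalizing i with
  | zero => exact le_rfl
  | succ j ih =>
    rw [Subgroup.commutator_comm, Subgroup.lowerCentralSeries_succ]
    refine commutator_commutator_le_of_rotate _ _ _ _ ?_ ?_
    · rw [Subgroup.commutator_comm ⊤, show i + (j + 1) + 1 = i + 1 + j + 1 by lia]
      exact ih (i + 1)
    · exact Subgroup.commutator_mono (ih i) le_rfl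

variable (G) in
/-- The lower central series indexed from one, so that the indices of commutators add up. The
value at zero is the whole group. -/
def gamma (m : ℕ) : Subgroup G := (⊤ : Subgroup G).lowerCentralSeries (m - 1)

instance (m : ℕ) : (gamma G m).Normal := by unfold gamma; infer_instance

theorem gamma_antitone : Antitone (gamma G) := fun _ _ h ↦
  Subgroup.lowerCentralSeries_antitone _ (Nat.sub_le_sub_right h 1)

theorem mem_gamma_one (g : G) : g ∈ gamma G 1 := Subgroup.mem_top g

theorem gamma_succ {m : ℕ} (hm : 1 ≤ m) : gamma G (m + 1) = ⁅gamma G m, ⊤⁆ := by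
  obtain ⟨m, rfl⟩ := Nat.exists_eq_add_of_le' hm
  rfl

theorem map_mem_gamma {G' : Type*} [Group G'] (f : G →* G') {m : ℕ} {g : G}
    (hg : g ∈ gamma G m) : f g ∈ gamma G' m :=
  Subgroup.lowerCentralSeries_mono (m - 1) le_top <|
    Subgroup.map_lowerCentralSeries ⊤ f (m - 1) ▸ Subgroup.mem_map_of_mem f hg

theorem commutatorElement_mem_gamma {i j m : ℕ} (hm : i + j = m) {g h : G}
    (hg : g ∈ gamma G i) (hh : h ∈ gamma G j) : ⁅g, h⁆ ∈ gamma G m := by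
  subst hm
  rcases Nat.eq_zero_or_pos i with rfl | hi
  · rw [zero_add]
    exact Subgroup.commutator_le_right ⊤ _ (Subgroup.commutator_mem_commutator trivial hh)
  rcases Nat.eq_zero_or_pos j with rfl | hj
  · exact Subgroup.commutator_le_left _ ⊤ (Subgroup.commutator_mem_commutator hg trivial)
  have := commutator_lowerCentralSeries_le (i - 1) (j - 1)
    (Subgroup.commutator_mem_commutator hg hh)
  rwa [show i - 1 + (j - 1) + 1 = i + j - 1 by lia] at this

theorem mk_mem_center_of_mem_gamma {m : ℕ} {g : G} (hg : g ∈ gamma G m) :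
    (g : G ⧸ gamma G (m + 1)) ∈ Subgroup.center (G ⧸ gamma G (m + 1)) := by
  rw [Subgroup.mem_center_iff]
  intro x
  induction x using QuotientGroup.induction_on with
  | H x =>
    rw [← commutatorElement_eq_one_iff_mul_comm, ← QuotientGroup.mk'_apply,
      ← QuotientGroup.mk'_apply, ← map_commutatorElement, QuotientGroup.mk'_apply,
      QuotientGroup.eq_one_iff]
    exact commutatorElement_mem_gamma (add_comm 1 m) (mem_gamma_one x) hg

end LowerCentralSeries

section GradedClass

variable {G : Type*} [Group G]

variable (G) in
/-- An additive group in which the quotient of consecutive terms of the lower central series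
embeds. -/
abbrev GradedPiece (m : ℕ) : Type _ := Additive (Subgroup.center (G ⧸ gamma G (m + 1)))

instance (m : ℕ) : AddCommGroup (GradedPiece G m) where
  add_comm a b := congrArg Additive.ofMul (Subtype.ext (a.toMul.2.comm b.toMul))

open Classical in
/-- The class of an element of `gamma G m` modulo `gamma G (m + 1)`, with value `0` on all other
elements. -/
noncomputable def gradedClass (m : ℕ) (g : G) : GradedPiece G m :=
  if hg : g ∈ gamma G m then Additive.ofMul ⟨g, mk_mem_center_of_mem_gamma hg⟩ else 0

theorem gradedClass_of_mem {m : ℕ} {g : G} (hg : g ∈ gamma G m) :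
    gradedClass m g = Additive.ofMul ⟨(g : G ⧸ gamma G (m + 1)), mk_mem_center_of_mem_gamma hg⟩ :=
  dif_pos hg

theorem gradedClass_mul {m : ℕ} {g h : G} (hg : g ∈ gamma G m) (hh : h ∈ gamma G m) :
    gradedClass m (g * h) = gradedClass m g + gradedClass m h := by
  rw [gradedClass_of_mem hg, gradedClass_of_mem hh, gradedClass_of_mem (mul_mem hg hh)]
  rfl

theorem gradedClass_eq_zero_iff {m : ℕ} {g : G} (hg : g ∈ gamma G m) :
    gradedClass m g = 0 ↔ g ∈ gamma G (m + 1) := by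
  rw [gradedClass_of_mem hg, ← QuotientGroup.eq_one_iff, ← ofMul_one,
    Additive.ofMul.injective.eq_iff]
  exact Subtype.ext_iff

theorem gradedClass_eq_zero {m : ℕ} {g : G} (hg : g ∈ gamma G (m + 1)) : gradedClass m g = 0 :=
  (gradedClass_eq_zero_iff (gamma_antitone m.le_succ hg)).2 hg

theorem gradedClass_one (m : ℕ) : gradedClass m (1 : G) = 0 := gradedClass_eq_zero (one_mem _)

theorem gradedClass_inv {m : ℕ} {g : G} (hg : g ∈ gamma G m) :
    gradedClass m g⁻¹ = -gradedClass m g := by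
  rw [eq_neg_iff_add_eq_zero, ← gradedClass_mul (inv_mem hg) hg, inv_mul_cancel, gradedClass_one]

theorem gradedClass_pow {m : ℕ} {g : G} (hg : g ∈ gamma G m) (c : ℕ) :
    gradedClass m (g ^ c) = c • gradedClass m g := by
  induction c with
  | zero => rw [pow_zero, gradedClass_one, zero_smul]
  | succ c ih => rw [pow_succ, gradedClass_mul (pow_mem hg c) hg, ih, succ_nsmul]

theorem gradedClass_conj {m : ℕ} {g : G} (hg : g ∈ gamma G m) (x : G) :
    gradedClass m (x * g * x⁻¹) = gradedClass m g := by
  have hxg : ⁅x, g⁆ ∈ gamma G (m + 1) :=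
    commutatorElement_mem_gamma (add_comm 1 m) (mem_gamma_one x) hg
  rw [show x * g * x⁻¹ = ⁅x, g⁆ * g by group, gradedClass_mul (gamma_antitone m.le_succ hxg) hg,
    gradedClass_eq_zero hxg, zero_add]

variable {i j m : ℕ}

section Commutator

variable (hm : i + j = m) {g h h' : G}
include hm

theorem gradedClass_commutator_mul_right (hg : g ∈ gamma G i) (hh : h ∈ gamma G j)
    (hh' : h' ∈ gamma G j) :
    gradedClass m ⁅g, h * h'⁆ = gradedClass m ⁅g, h⁆ + gradedClass m ⁅g, h'⁆ := by
  have h₂ := commutatorElement_mem_gamma hm hg hh'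
  rw [show ⁅g, h * h'⁆ = ⁅g, h⁆ * (h * ⁅g, h'⁆ * h⁻¹) by simp only [commutatorElement_def]; group,
    gradedClass_mul (commutatorElement_mem_gamma hm hg hh)
      (Subgroup.Normal.conj_mem inferInstance _ h₂ _), gradedClass_conj h₂]

theorem gradedClass_commutator_swap (hg : g ∈ gamma G i) (hh : h ∈ gamma G j) :
    gradedClass m ⁅g, h⁆ = -gradedClass m ⁅h, g⁆ := by
  rw [← gradedClass_inv (commutatorElement_mem_gamma ((add_comm j i).trans hm) hh hg),
    commutatorElement_inv]

theorem gradedClass_commutator_inv_right (hg : g ∈ gamma G i) (hh : h ∈ gamma G j) :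
    gradedClass m ⁅g, h⁻¹⁆ = -gradedClass m ⁅g, h⁆ := by
  have := gradedClass_commutator_mul_right hm hg (inv_mem hh) hh
  rw [inv_mul_cancel, commutatorElement_one_right, gradedClass_one] at this
  exact eq_neg_of_add_eq_zero_left this.symm

theorem gradedClass_commutator_inv_left (hg : g ∈ gamma G i) (hh : h ∈ gamma G j) :
    gradedClass m ⁅g⁻¹, h⁆ = -gradedClass m ⁅g, h⁆ := by
  have hm' := (add_comm j i).trans hm
  rw [gradedClass_commutator_swap hm (inv_mem hg) hh, gradedClass_commutator_inv_right hm' hh hg,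
    gradedClass_commutator_swap hm hg hh]

theorem gradedClass_commutator_pow_right (hg : g ∈ gamma G i) (hh : h ∈ gamma G j) (c : ℕ) :
    gradedClass m ⁅g, h ^ c⁆ = c • gradedClass m ⁅g, h⁆ := by
  induction c with
  | zero => rw [pow_zero, commutatorElement_one_right, gradedClass_one, zero_smul]
  | succ c ih =>
    rw [pow_succ, gradedClass_commutator_mul_right hm hg (pow_mem hh c) hh, ih, succ_nsmul]

theorem gradedClass_commutator_congr_right (hg : g ∈ gamma G i) (hh : h ∈ gamma G j)
    (hh' : h' ∈ gamma G j) (e : gradedClass j h = gradedClass j h') :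
    gradedClass m ⁅g, h⁆ = gradedClass m ⁅g, h'⁆ := by
  have hquot : h * h'⁻¹ ∈ gamma G (j + 1) := by
    rw [← gradedClass_eq_zero_iff (mul_mem hh (inv_mem hh')), gradedClass_mul hh (inv_mem hh'),
      gradedClass_inv hh', e, add_neg_cancel]
  have hmul := gradedClass_commutator_mul_right hm hg (gamma_antitone j.le_succ hquot) hh'
  rwa [inv_mul_cancel_right, gradedClass_eq_zero (commutatorElement_mem_gamma (by lia) hg hquot),
    zero_add] at hmul

end Commutator

/-- The Hall–Witt identity. -/
theorem commutator_commutator_eq_mul (x a b : G) :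
    ⁅x, ⁅a, b⁆⁆ = ((a * x) * ⁅b, ⁅x⁻¹, a⁻¹⁆⁆⁻¹ * (a * x)⁻¹) *
      ((a * b) * ⁅a⁻¹, ⁅b⁻¹, x⁆⁆⁻¹ * (a * b)⁻¹) := by
  simp [commutatorElement_def, mul_assoc]

theorem gradedClass_jacobi (hm : 1 + (i + j) = m) (x : G) {a b : G} (ha : a ∈ gamma G i)
    (hb : b ∈ gamma G j) :
    gradedClass m ⁅⁅x, a⁆, b⁆ = gradedClass m ⁅x, ⁅a, b⁆⁆ - gradedClass m ⁅a, ⁅x, b⁆⁆ := by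
  have hx := mem_gamma_one x
  have hxa : ⁅x⁻¹, a⁻¹⁆ ∈ gamma G (1 + i) :=
    commutatorElement_mem_gamma rfl (inv_mem hx) (inv_mem ha)
  have hbx : ⁅b⁻¹, x⁆ ∈ gamma G (j + 1) := commutatorElement_mem_gamma rfl (inv_mem hb) hx
  have hxb : ⁅x, b⁆ ∈ gamma G (j + 1) := commutatorElement_mem_gamma (add_comm 1 j) hx hb
  have hxa' : ⁅x, a⁆ ∈ gamma G (1 + i) := commutatorElement_mem_gamma rfl hx ha
  have h₁ : ⁅b, ⁅x⁻¹, a⁻¹⁆⁆ ∈ gamma G m := commutatorElement_mem_gamma (by lia) hb hxa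
  have h₂ : ⁅a⁻¹, ⁅b⁻¹, x⁆⁆ ∈ gamma G m := commutatorElement_mem_gamma (by lia) (inv_mem ha) hbx
  have e₁ : gradedClass (1 + i) ⁅x⁻¹, a⁻¹⁆ = gradedClass (1 + i) ⁅x, a⁆ := by
    rw [gradedClass_commutator_inv_left rfl hx (inv_mem ha),
      gradedClass_commutator_inv_right rfl hx ha, neg_neg]
  have e₂ : gradedClass (j + 1) ⁅b⁻¹, x⁆ = gradedClass (j + 1) ⁅x, b⁆ := by
    rw [gradedClass_commutator_inv_left rfl hb hx, gradedClass_commutator_swap rfl hb hx, neg_neg]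
  rw [commutator_commutator_eq_mul,
    gradedClass_mul (Subgroup.Normal.conj_mem inferInstance _ (inv_mem h₁) _)
      (Subgroup.Normal.conj_mem inferInstance _ (inv_mem h₂) _),
    gradedClass_conj (inv_mem h₁), gradedClass_conj (inv_mem h₂), gradedClass_inv h₁,
    gradedClass_inv h₂, gradedClass_commutator_inv_left (by lia) ha hbx,
    gradedClass_commutator_congr_right (by lia) hb hxa hxa' e₁,
    gradedClass_commutator_congr_right (by lia) ha hbx hxb e₂,
    gradedClass_commutator_swap (by lia) hxa' hb, neg_neg, add_sub_cancel_right]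

end GradedClass

/-- The `N`-th power of every element is trivial. -/
class ExponentDvd (N : ℕ) (G : Type*) [Group G] : Prop where
  pow_eq_one : ∀ g : G, g ^ N = 1

/-- The group is nilpotent of class less than `p`. -/
class IsLazardGroup (p : ℕ) (G : Type*) [Group G] : Prop where
  gamma_eq_bot : gamma G p = ⊥

section RightNormed

variable {ι G : Type*} [Group G]

/-- The right normed commutator `⁅h i₁, ⁅h i₂, … ⁅h iₘ₋₁, h iₘ⁆ … ⁆⁆` attached to a word
`i₁ i₂ … iₘ`; the empty word gives `1`. -/
def rightNormed (h : ι → G) (w : FreeMonoid ι) : G :=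
  go w.toList
where
  /-- `rightNormed` on lists of letters. -/
  go : List ι → G
    | [] => 1
    | [i] => h i
    | i :: j :: l => ⁅h i, go (j :: l)⁆

theorem rightNormed_of (h : ι → G) (i : ι) : rightNormed h (.of i) = h i := rfl

theorem rightNormed_of_mul (h : ι → G) (i : ι) {w : FreeMonoid ι} (hw : 1 ≤ w.length) :
    rightNormed h (.of i * w) = ⁅h i, rightNormed h w⁆ := by
  cases w using FreeMonoid.casesOn with
  | one => simp at hw
  | of_mul j w => rfl

theorem length_of_mul (i : ι) (w : FreeMonoid ι) :
    (FreeMonoid.of i * w).length = w.length + 1 := by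
  rw [FreeMonoid.length_mul, FreeMonoid.length_of, add_comm]

@[elab_as_elim]
theorem nonempty_word_induction {C : ∀ w : FreeMonoid ι, 1 ≤ w.length → Prop}
    (of : ∀ i, C (.of i) le_rfl)
    (of_mul : ∀ i w (hw : 1 ≤ w.length), C w hw →
      C (.of i * w) (length_of_mul i w ▸ Nat.le_add_left ..))
    (w : FreeMonoid ι) (hw : 1 ≤ w.length) : C w hw := by
  induction w using FreeMonoid.recOn with
  | one => simp at hw
  | of_mul i w ih =>
    rcases Nat.eq_zero_or_pos w.length with hw | hw
    · obtain rfl := FreeMonoid.length_eq_zero.1 hw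
      exact of i
    · exact of_mul i w hw (ih hw)

theorem rightNormed_mem_gamma (h : ι → G) (w : FreeMonoid ι) :
    rightNormed h w ∈ gamma G w.length := by
  rcases Nat.eq_zero_or_pos w.length with hw | hw
  · rw [hw]
    exact Subgroup.mem_top _
  induction w, hw using nonempty_word_induction with
  | of i => exact mem_gamma_one _
  | of_mul i w hw ih =>
    rw [rightNormed_of_mul h i hw, length_of_mul]
    exact commutatorElement_mem_gamma (add_comm ..) (mem_gamma_one _) ih

end RightNormed

section WordClass

variable {N p : ℕ} {ι G : Type*} [Group G] [ExponentDvd N G]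

instance (m : ℕ) : Module (ZMod N) (GradedPiece G m) :=
  AddCommGroup.zmodModule fun q ↦ by
    obtain ⟨g, hg⟩ := q
    refine Additive.toMul.injective (Subtype.ext (?_ : g ^ N = 1))
    induction g using QuotientGroup.induction_on with
    | H g => rw [← QuotientGroup.mk_pow, ExponentDvd.pow_eq_one, QuotientGroup.mk_one]

variable [IsLazardGroup p G]

variable (N p) in
/-- The linear map sending a word of length `m` to the class of its right normed commutator, and
the words of other lengths to `0`. -/
noncomputable def wordClass (h : ι → G) (m : ℕ) :
    TruncFree (ZMod N) ι p →ₗ[ZMod N] GradedPiece G m :=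
  liftLinear (fun w ↦ if w.length = m then gradedClass m (rightNormed h w) else 0) fun w hw ↦ by
    split_ifs with hm
    · have := gamma_antitone hw (rightNormed_mem_gamma h w)
      rw [IsLazardGroup.gamma_eq_bot, Subgroup.mem_bot] at this
      rw [this, gradedClass_one]
    · rfl

variable (h : ι → G)

theorem wordClass_word (w : FreeMonoid ι) :
    wordClass N p h w.length (word (ZMod N) p w) = gradedClass w.length (rightNormed h w) :=
  (liftLinear_word ..).trans (if_pos rfl)

theorem wordClass_word_of_ne {m : ℕ} {w : FreeMonoid ι} (hw : w.length ≠ m) :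
    wordClass N p h m (word (ZMod N) p w) = 0 :=
  (liftLinear_word ..).trans (if_neg hw)

theorem wordClass_letter (i : ι) :
    wordClass N p h 1 (letter (ZMod N) p i) = gradedClass 1 (h i) :=
  wordClass_word h (.of i)

theorem wordClass_eq_zero {m : ℕ} {a : TruncFree (ZMod N) ι p}
    (ha : a ∈ layer (ZMod N) ι p (m + 1)) : wordClass N p h m a = 0 := by
  have hle : layer (ZMod N) ι p (m + 1) ≤ LinearMap.ker (wordClass N p h m) :=
    layer_le_iff.2 fun w hw ↦ wordClass_word_of_ne h (by lia)
  exact hle ha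

variable [NeZero N]

theorem exists_wordClass_eq {m : ℕ} (hm : 1 ≤ m) (a : TruncFree (ZMod N) ι p) :
    ∃ g ∈ gamma G m, wordClass N p h m a = gradedClass m g ∧
      ∀ i, wordClass N p h (m + 1) (letter (ZMod N) p i * a) = gradedClass (m + 1) ⁅h i, g⁆ := by
  have hm' := add_comm 1 m
  induction a using TruncFree.induction with
  | word w =>
    simp only [letter, ← map_mul]
    by_cases hw : w.length = m
    · subst hw
      refine ⟨_, rightNormed_mem_gamma h w, wordClass_word h w, fun i ↦ ?_⟩
      rw [← rightNormed_of_mul h i hm, ← length_of_mul i, wordClass_word]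
    · refine ⟨1, one_mem _, ?_, fun i ↦ ?_⟩
      · rw [wordClass_word_of_ne h hw, gradedClass_one]
      · rw [wordClass_word_of_ne h (by rwa [length_of_mul, Nat.add_right_cancel_iff.ne]),
          commutatorElement_one_right, gradedClass_one]
  | add a b ha hb =>
    obtain ⟨g, hg, ha₁, ha₂⟩ := ha
    obtain ⟨g', hg', hb₁, hb₂⟩ := hb
    refine ⟨g * g', mul_mem hg hg', ?_, fun i ↦ ?_⟩
    · rw [map_add, gradedClass_mul hg hg', ha₁, hb₁]
    · rw [mul_add, map_add, ha₂, hb₂,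
        gradedClass_commutator_mul_right hm' (mem_gamma_one _) hg hg']
  | smul c a ha =>
    obtain ⟨g, hg, ha₁, ha₂⟩ := ha
    rw [← ZMod.natCast_zmod_val c, Nat.cast_smul_eq_nsmul]
    refine ⟨g ^ c.val, pow_mem hg _, ?_, fun i ↦ ?_⟩
    · rw [map_nsmul, gradedClass_pow hg, ha₁]
    · rw [mul_smul_comm, map_nsmul, ha₂,
        gradedClass_commutator_pow_right hm' (mem_gamma_one _) hg]

theorem wordClass_letter_mul {m : ℕ} (hm : 1 ≤ m) {a : TruncFree (ZMod N) ι p} {g : G}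
    (hg : g ∈ gamma G m) (e : wordClass N p h m a = gradedClass m g) (i : ι) :
    wordClass N p h (m + 1) (letter (ZMod N) p i * a) = gradedClass (m + 1) ⁅h i, g⁆ := by
  obtain ⟨g', hg', h₁, h₂⟩ := exists_wordClass_eq h hm a
  rw [h₂, gradedClass_commutator_congr_right (add_comm 1 m) (mem_gamma_one _) hg' hg
    (h₁.symm.trans e)]

variable [IsLazardBase (ZMod N) p]

theorem dynkin_word_of_mul {k : Type*} [CommRing k] [IsLazardBase k p] (i : ι) {w : FreeMonoid ι}
    (hw : 1 ≤ w.length) :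
    dynkin (letter k p) (word k p (.of i * w)) =
      letter k p i * dynkin (letter k p) (word k p w) -
        dynkin (letter k p) (word k p w) * letter k p i := by
  rw [word_of_mul, dynkin_letter_mul, counit_eq_zero (word_mem_layer hw), zero_smul, add_zero,
    Ring.lie_def]

/- Peeling the first letter off `u` is the Jacobi identity. -/
theorem wordClass_dynkin_word_mul_word (u v : FreeMonoid ι) (hu : 1 ≤ u.length)
    (hv : 1 ≤ v.length) {m : ℕ} (hm : u.length + v.length = m) :
    wordClass N p h m (dynkin (letter (ZMod N) p) (word (ZMod N) p u) * word (ZMod N) p v) =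
      gradedClass m ⁅rightNormed h u, rightNormed h v⁆ := by
  subst hm
  induction u, hu using nonempty_word_induction generalizing v with
  | of i =>
    rw [FreeMonoid.length_of, add_comm 1, ← length_of_mul i, rightNormed_of,
      ← rightNormed_of_mul h i hv, ← wordClass_word (N := N) (p := p),
      word_of_mul, ← letter, dynkin_letter]
  | of_mul i u hu ih =>
    have hku := rightNormed_mem_gamma h u
    have hkv := rightNormed_mem_gamma h v
    have hlen : (FreeMonoid.of i * u).length + v.length = u.length + v.length + 1 := by
      rw [length_of_mul, add_right_comm]
    have ih' := ih (.of i * v) (by rw [length_of_mul]; lia)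
    rw [length_of_mul, ← add_assoc] at ih'
    rw [hlen, dynkin_word_of_mul i hu, sub_mul, map_sub, mul_assoc, mul_assoc, ← word_of_mul, ih',
      wordClass_letter_mul h (by lia) (commutatorElement_mem_gamma rfl hku hkv) (ih v hv) i,
      rightNormed_of_mul h i hu, rightNormed_of_mul h i hv,
      gradedClass_jacobi (by lia) (h i) hku hkv]

theorem wordClass_dynkin_word (w : FreeMonoid ι) (hw : 1 ≤ w.length) :
    wordClass N p h w.length (dynkin (letter (ZMod N) p) (word (ZMod N) p w)) =
      w.length • gradedClass w.length (rightNormed h w) := by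
  induction w, hw using nonempty_word_induction with
  | of i =>
    rw [FreeMonoid.length_of, one_smul, rightNormed_of, ← wordClass_letter (N := N) (p := p)]
    exact congrArg _ (dynkin_letter _ i)
  | of_mul i w hw ih =>
    have hkw := rightNormed_mem_gamma h w
    have hswap := wordClass_dynkin_word_mul_word (N := N) (p := p) h w (.of i) hw le_rfl rfl
    rw [FreeMonoid.length_of, rightNormed_of] at hswap
    rw [← gradedClass_pow hkw] at ih
    rw [length_of_mul, dynkin_word_of_mul i hw, map_sub, letter,
      ← letter, wordClass_letter_mul h hw (pow_mem hkw _) ih, letter, hswap,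
      gradedClass_commutator_pow_right (add_comm ..) (mem_gamma_one _) hkw,
      rightNormed_of_mul h i hw, gradedClass_commutator_swap rfl hkw (mem_gamma_one _),
      sub_neg_eq_add, succ_nsmul]

theorem wordClass_dynkin {m : ℕ} (hm : 1 ≤ m) {a : TruncFree (ZMod N) ι p}
    (ha : a ∈ layer (ZMod N) ι p m) :
    wordClass N p h m (dynkin (letter (ZMod N) p) a) = m • wordClass N p h m a := by
  have hle : layer (ZMod N) ι p m ≤
      LinearMap.eqLocus (wordClass N p h m ∘ₗ dynkin (letter (ZMod N) p))
        (m • wordClass N p h m) := by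
    refine layer_le_iff.2 fun w hw ↦ ?_
    rw [LinearMap.mem_eqLocus, LinearMap.comp_apply, LinearMap.smul_apply]
    rcases hw.eq_or_lt with rfl | hw
    · rw [wordClass_dynkin_word h w hm, wordClass_word]
    · rw [wordClass_eq_zero h (dynkin_mem_layer (word_mem_layer hw)),
        wordClass_eq_zero h (word_mem_layer hw), smul_zero]
  exact hle ha

end WordClass

/-! ### The group of Lie elements is free -/

section Generators

variable {ι G : Type*} [Group G] {h : ι → G}

theorem gamma_succ_le_of_commutator_mem (hgen : Subgroup.closure (Set.range h) = ⊤) {m : ℕ}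
    (hm : 1 ≤ m) {S : Subgroup G} (hS : gamma G (m + 1 + 1) ≤ S)
    (hh : ∀ i, ∀ g ∈ gamma G m, ⁅h i, g⁆ ∈ S) : gamma G (m + 1) ≤ S := by
  rw [gamma_succ hm, Subgroup.commutator_le]
  intro g hg y hy
  rw [← commutatorElement_inv, inv_mem_iff]
  have hconj (x y : G) (hy : ⁅y, g⁆ ∈ S) : x * ⁅y, g⁆ * x⁻¹ ∈ S := by
    have hmem := commutatorElement_mem_gamma (add_comm 1 (m + 1)) (mem_gamma_one x)
      (commutatorElement_mem_gamma (add_comm 1 m) (mem_gamma_one y) hg)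
    rw [show x * ⁅y, g⁆ * x⁻¹ = ⁅x, ⁅y, g⁆⁆ * ⁅y, g⁆ by group]
    exact mul_mem (hS hmem) hy
  rw [← hgen] at hy
  induction hy using Subgroup.closure_induction with
  | mem x hx =>
    obtain ⟨i, rfl⟩ := hx
    exact hh i g hg
  | one => exact (commutatorElement_one_left g).symm ▸ one_mem S
  | mul x y _ _ hx hy =>
    rw [show ⁅x * y, g⁆ = x * ⁅y, g⁆ * x⁻¹ * ⁅x, g⁆ by group]
    exact mul_mem (hconj x y hy) hx
  | inv x _ hx =>
    rw [show ⁅x⁻¹, g⁆ = (x⁻¹ * ⁅x, g⁆ * x⁻¹⁻¹)⁻¹ by group]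
    exact inv_mem (hconj x⁻¹ x hx)

end Generators

section BchGroup

variable {k ι : Type*} [CommRing k] {p : ℕ} [IsLazardBase k p]

variable (k ι p) in
/-- The Lie elements with the Baker–Campbell–Hausdorff product as group law. -/
def BchGroup : Type _ := lieElements k ι p

variable (k ι p) in
/-- The identity map between the Lie algebra and the group carried by the Lie elements. -/
def toBch : lieElements k ι p ≃ BchGroup k ι p := Equiv.refl _

noncomputable instance : Group (BchGroup k ι p) :=
  letI : Mul (BchGroup k ι p) := ⟨fun u v ↦ toBch k ι p (bch u v)⟩
  letI : One (BchGroup k ι p) := ⟨toBch k ι p 0⟩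
  letI : Inv (BchGroup k ι p) := ⟨fun u ↦ toBch k ι p (-(toBch k ι p).symm u)⟩
  Group.ofLeftAxioms bch_assoc zero_bch neg_bch

variable (k ι p) in
/-- The exponential map from the Lie elements to the truncated free algebra. -/
noncomputable def expHom : BchGroup k ι p →* TruncFree k ι p where
  toFun g := truncExp k p ((toBch k ι p).symm g).1
  map_one' := truncExp_truncFree_zero
  map_mul' := truncExp_bch

theorem expHom_toBch (u : lieElements k ι p) : expHom k ι p (toBch k ι p u) = truncExp k p u.1 :=
  rfl

theorem expHom_injective : Function.Injective (expHom k ι p) := truncExp_coe_injective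

theorem toBch_nsmul (m : ℕ) (u : lieElements k ι p) :
    toBch k ι p (m • u) = toBch k ι p u ^ m := by
  refine expHom_injective ?_
  induction m with
  | zero => rw [zero_smul, pow_zero]; rfl
  | succ m ih =>
    rw [pow_succ, map_mul, ← ih, expHom_toBch, expHom_toBch, expHom_toBch, succ_nsmul,
      AddMemClass.coe_add, truncExp_add_of_commute (m • u).2.1 u.2.1]
    exact (Commute.refl u.1).smul_left m

instance (N : ℕ) [IsLazardBase (ZMod N) p] : ExponentDvd N (BchGroup (ZMod N) ι p) where
  pow_eq_one g := by
    obtain ⟨u, rfl⟩ := (toBch (ZMod N) ι p).surjective g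
    rw [← toBch_nsmul, ← Nat.cast_smul_eq_nsmul (ZMod N), ZMod.natCast_self, zero_smul]
    rfl

theorem expHom_sub_one_mem_layer_one (g : BchGroup k ι p) : expHom k ι p g - 1 ∈ layer k ι p 1 :=
  (filtration k ι p).truncExp_sub_one_mem (IsLazardBase.two_le k) le_rfl
    ((toBch k ι p).symm g).2.1

theorem expHom_mul_expHom_inv (g : BchGroup k ι p) : expHom k ι p g * expHom k ι p g⁻¹ = 1 := by
  rw [← map_mul, mul_inv_cancel, map_one]

theorem mul_expHom_mem_layer {m : ℕ} {a : TruncFree k ι p} (ha : a ∈ layer k ι p m)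
    (g : BchGroup k ι p) : a * expHom k ι p g ∈ layer k ι p m := by
  simpa only [add_zero] using mul_mem_layer ha (mem_layer_zero (expHom k ι p g))

theorem expHom_commutator_sub_mem_layer {i j m : ℕ} (hm : i + j + 1 = m) {g g' : BchGroup k ι p}
    (hg : expHom k ι p g - 1 ∈ layer k ι p i) (hg' : expHom k ι p g' - 1 ∈ layer k ι p j) :
    expHom k ι p ⁅g, g'⁆ - 1 - ⁅expHom k ι p g - 1, expHom k ι p g' - 1⁆ ∈ layer k ι p m := by
  have hmul : (expHom k ι p ⁅g, g'⁆ - 1) * expHom k ι p (g' * g) =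
      ⁅expHom k ι p g - 1, expHom k ι p g' - 1⁆ := by
    rw [sub_mul, ← map_mul, show ⁅g, g'⁆ * (g' * g) = g * g' by group, map_mul, map_mul,
      Ring.lie_def]
    noncomm_ring
  have hsub : expHom k ι p ⁅g, g'⁆ - 1 - ⁅expHom k ι p g - 1, expHom k ι p g' - 1⁆ =
      ⁅expHom k ι p g - 1, expHom k ι p g' - 1⁆ * (expHom k ι p (g' * g)⁻¹ - 1) := by
    rw [mul_sub, ← hmul, mul_assoc, expHom_mul_expHom_inv]
    noncomm_ring
  rw [hsub, ← hm]
  exact mul_mem_layer (lie_mem_layer hg hg') (expHom_sub_one_mem_layer_one _)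

variable (k ι p) in
/-- The group elements whose exponential is congruent to `1` modulo terms of degree `m`. -/
noncomputable def bchLayer (m : ℕ) : Subgroup (BchGroup k ι p) where
  carrier := {g | expHom k ι p g - 1 ∈ layer k ι p m}
  one_mem' := by simp
  mul_mem' {g g'} hg hg' := by
    have e : expHom k ι p (g * g') - 1 = (expHom k ι p g - 1) * expHom k ι p g' +
        (expHom k ι p g' - 1) := by rw [map_mul]; noncomm_ring
    rw [Set.mem_ofPred, e]
    exact add_mem (mul_expHom_mem_layer hg g') hg'
  inv_mem' {g} hg := by
    have e : expHom k ι p g⁻¹ - 1 = -((expHom k ι p g - 1) * expHom k ι p g⁻¹) := by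
      rw [sub_mul, expHom_mul_expHom_inv]; noncomm_ring
    rw [Set.mem_ofPred, e]
    exact neg_mem (mul_expHom_mem_layer hg g⁻¹)

theorem mem_bchLayer {m : ℕ} {g : BchGroup k ι p} :
    g ∈ bchLayer k ι p m ↔ expHom k ι p g - 1 ∈ layer k ι p m := Iff.rfl

theorem gamma_le_bchLayer {m : ℕ} (hm : 1 ≤ m) :
    gamma (BchGroup k ι p) m ≤ bchLayer k ι p m := by
  induction m, hm using Nat.le_induction with
  | base => exact fun g _ ↦ expHom_sub_one_mem_layer_one g
  | succ m hm ih =>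
    rw [gamma_succ hm, Subgroup.commutator_le]
    intro g hg g' _
    have hg' := expHom_sub_one_mem_layer_one g'
    have h := expHom_commutator_sub_mem_layer rfl (ih hg) hg'
    rw [mem_bchLayer]
    simpa using add_mem (layer_antitone (by lia) h) (lie_mem_layer (ih hg) hg')

instance : IsLazardGroup p (BchGroup k ι p) where
  gamma_eq_bot := by
    have hp := IsLazardBase.two_le (k := k) (p := p)
    refine eq_bot_iff.2 fun g hg ↦ expHom_injective ?_
    rw [map_one, ← sub_eq_zero]
    exact eq_zero_of_mem_layer le_rfl (gamma_le_bchLayer (by lia) hg)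

end BchGroup

section LeadingTerm

variable {N p : ℕ} [IsLazardBase (ZMod N) p] {ι G : Type*} [Group G] {h : ι → G}
  {τ : G →* BchGroup (ZMod N) ι p}

theorem expHom_map_sub_one_mem_layer {m : ℕ} (hm : 1 ≤ m) {g : G} (hg : g ∈ gamma G m) :
    expHom (ZMod N) ι p (τ g) - 1 ∈ layer (ZMod N) ι p m :=
  gamma_le_bchLayer hm (map_mem_gamma τ hg)

variable [ExponentDvd N G] [IsLazardGroup p G]

/-- The homogeneous tensor `a` of degree `m` represents the class of `g` in the lower central
series, and its image under the Dynkin operator is the leading term of the exponential of `τ g`. -/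
structure IsLeadingTerm (h : ι → G) (τ : G →* BchGroup (ZMod N) ι p) (m : ℕ)
    (a : TruncFree (ZMod N) ι p) (g : G) : Prop where
  mem_gamma : g ∈ gamma G m
  mem_layer : a ∈ layer (ZMod N) ι p m
  wordClass_eq : wordClass N p h m a = gradedClass m g
  sub_dynkin_mem_layer : expHom (ZMod N) ι p (τ g) - 1 - dynkin (letter (ZMod N) p) a ∈
    layer (ZMod N) ι p (m + 1)

namespace IsLeadingTerm

variable {m : ℕ} {a a' : TruncFree (ZMod N) ι p} {g g' : G}

theorem of_mem_gamma_succ (hg : g ∈ gamma G (m + 1)) : IsLeadingTerm h τ m 0 g where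
  mem_gamma := gamma_antitone m.le_succ hg
  mem_layer := zero_mem _
  wordClass_eq := by rw [map_zero, gradedClass_eq_zero hg]
  sub_dynkin_mem_layer := by
    rw [map_zero, sub_zero]
    exact expHom_map_sub_one_mem_layer (by lia) hg

theorem one_of_mem_layer_succ (ha : a ∈ layer (ZMod N) ι p (m + 1)) :
    IsLeadingTerm h τ m a 1 where
  mem_gamma := one_mem _
  mem_layer := layer_antitone m.le_succ ha
  wordClass_eq := by rw [wordClass_eq_zero h ha, gradedClass_one]
  sub_dynkin_mem_layer := by
    rw [map_one, map_one, sub_self, zero_sub]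
    exact neg_mem (dynkin_mem_layer ha)

theorem mul (hm : 1 ≤ m) (hg : IsLeadingTerm h τ m a g) (hg' : IsLeadingTerm h τ m a' g') :
    IsLeadingTerm h τ m (a + a') (g * g') where
  mem_gamma := mul_mem hg.mem_gamma hg'.mem_gamma
  mem_layer := add_mem hg.mem_layer hg'.mem_layer
  wordClass_eq := by
    rw [map_add, gradedClass_mul hg.mem_gamma hg'.mem_gamma, hg.wordClass_eq, hg'.wordClass_eq]
  sub_dynkin_mem_layer := by
    have hmul := mul_mem_layer (expHom_map_sub_one_mem_layer (τ := τ) hm hg.mem_gamma)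
      (expHom_map_sub_one_mem_layer (τ := τ) hm hg'.mem_gamma)
    convert add_mem (add_mem hg.sub_dynkin_mem_layer hg'.sub_dynkin_mem_layer)
      (layer_antitone (by lia) hmul) using 1
    rw [map_mul, map_mul, map_add]
    noncomm_ring

theorem pow (hm : 1 ≤ m) (hg : IsLeadingTerm h τ m a g) (c : ℕ) :
    IsLeadingTerm h τ m (c • a) (g ^ c) := by
  induction c with
  | zero => rw [zero_smul, pow_zero]; exact of_mem_gamma_succ (one_mem _)
  | succ c ih => rw [succ_nsmul, pow_succ]; exact ih.mul hm hg

theorem inv (hm : 1 ≤ m) (hg : IsLeadingTerm h τ m a g) : IsLeadingTerm h τ m (-a) g⁻¹ where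
  mem_gamma := inv_mem hg.mem_gamma
  mem_layer := neg_mem hg.mem_layer
  wordClass_eq := by rw [map_neg, gradedClass_inv hg.mem_gamma, hg.wordClass_eq]
  sub_dynkin_mem_layer := by
    have hmul := mul_mem_layer (expHom_map_sub_one_mem_layer (τ := τ) hm hg.mem_gamma)
      (expHom_map_sub_one_mem_layer (τ := τ) hm (inv_mem hg.mem_gamma))
    convert sub_mem (neg_mem hg.sub_dynkin_mem_layer) (layer_antitone (by lia) hmul) using 1
    rw [mul_sub, sub_mul, map_inv, expHom_mul_expHom_inv, map_neg]
    noncomm_ring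

section Letters

variable (hτ : ∀ i, τ (h i) = toBch _ _ _ (lieLetter (ZMod N) p i))
include hτ

theorem letter (i : ι) : IsLeadingTerm h τ 1 (letter (ZMod N) p i) (h i) where
  mem_gamma := mem_gamma_one _
  mem_layer := letter_mem_layer_one i
  wordClass_eq := wordClass_letter h i
  sub_dynkin_mem_layer := by
    rw [hτ, dynkin_letter, expHom_toBch]
    exact (filtration _ ι p).truncExp_sub_one_sub_mem (IsLazardBase.two_le (ZMod N)) le_rfl
      (letter_mem_layer_one i)

variable [NeZero N]

theorem commutator_letter (hm : 1 ≤ m) (hg : IsLeadingTerm h τ m a g) (i : ι) :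
    IsLeadingTerm h τ (m + 1) (TruncFree.letter (ZMod N) p i * a) ⁅h i, g⁆ where
  mem_gamma := commutatorElement_mem_gamma (add_comm ..) (mem_gamma_one _) hg.mem_gamma
  mem_layer := add_comm 1 m ▸ mul_mem_layer (letter_mem_layer_one i) hg.mem_layer
  wordClass_eq := wordClass_letter_mul h hm hg.mem_gamma hg.wordClass_eq i
  sub_dynkin_mem_layer := by
    have hi := (letter hτ i).sub_dynkin_mem_layer
    have hexp := expHom_map_sub_one_mem_layer (τ := τ) hm hg.mem_gamma
    have hlie := expHom_commutator_sub_mem_layer (add_right_comm 1 m 1)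
      (expHom_sub_one_mem_layer_one (τ (h i))) hexp
    rw [dynkin_letter] at hi
    rw [dynkin_letter_mul, counit_eq_zero (layer_antitone hm hg.mem_layer), zero_smul, add_zero,
      map_commutatorElement]
    have e (x y x' y' z : TruncFree (ZMod N) ι p) :
        z - ⁅x', y'⁆ = z - ⁅x, y⁆ + ⁅x - x', y⁆ + ⁅x', y - y'⁆ := by
      simp only [Ring.lie_def]
      noncomm_ring
    rw [e (expHom (ZMod N) ι p (τ (h i)) - 1) (expHom (ZMod N) ι p (τ g) - 1)]
    refine add_mem (add_mem ?_ ?_) ?_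
    · exact layer_antitone (by lia) hlie
    · exact layer_antitone (by lia) (lie_mem_layer hi hexp)
    · exact layer_antitone (by lia)
        (lie_mem_layer (letter_mem_layer_one i) hg.sub_dynkin_mem_layer)

theorem exists_left (hgen : Subgroup.closure (Set.range h) = ⊤) (hm : 1 ≤ m)
    (hg : g ∈ gamma G m) : ∃ a, IsLeadingTerm h τ m a g := by
  let S {m : ℕ} (hm : 1 ≤ m) : Subgroup G :=
    { carrier := {g | ∃ a, IsLeadingTerm h τ m a g}
      one_mem' := ⟨0, of_mem_gamma_succ (one_mem _)⟩
      mul_mem' := fun ⟨_, hx⟩ ⟨_, hy⟩ ↦ ⟨_, hx.mul hm hy⟩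
      inv_mem' := fun ⟨_, hx⟩ ↦ ⟨_, hx.inv hm⟩ }
  suffices hS : gamma G m ≤ S hm from hS hg
  clear hg
  induction m, hm using Nat.le_induction with
  | base =>
    have hle : Subgroup.closure (Set.range h) ≤ S le_rfl := by
      rw [Subgroup.closure_le]
      rintro _ ⟨i, rfl⟩
      exact ⟨_, letter hτ i⟩
    exact hgen ▸ le_top |>.trans hle
  | succ m hm ih =>
    refine gamma_succ_le_of_commutator_mem hgen hm (fun g hg ↦ ⟨0, of_mem_gamma_succ hg⟩) ?_
    intro i g hg
    obtain ⟨a, ha⟩ := ih hg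
    exact ⟨_, ha.commutator_letter hτ hm i⟩

theorem exists_right (hm : 1 ≤ m) (ha : a ∈ layer (ZMod N) ι p m) :
    ∃ g, IsLeadingTerm h τ m a g := by
  have hword (w : FreeMonoid ι) (hw : 1 ≤ w.length) :
      IsLeadingTerm h τ w.length (word (ZMod N) p w) (rightNormed h w) := by
    induction w, hw using nonempty_word_induction with
    | of i => exact letter hτ i
    | of_mul i w hw ih =>
      rw [rightNormed_of_mul h i hw, word_of_mul, length_of_mul]
      exact ih.commutator_letter hτ hw i
  let S : Submodule (ZMod N) (TruncFree (ZMod N) ι p) :=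
    { carrier := {a | ∃ g, IsLeadingTerm h τ m a g}
      zero_mem' := ⟨1, of_mem_gamma_succ (one_mem _)⟩
      add_mem' := fun ⟨_, hx⟩ ⟨_, hy⟩ ↦ ⟨_, hx.mul hm hy⟩
      smul_mem' := fun c _ ⟨g, hg⟩ ↦ ⟨g ^ c.val, by
        simpa only [← Nat.cast_smul_eq_nsmul (ZMod N), ZMod.natCast_zmod_val]
          using hg.pow hm c.val⟩ }
  suffices hS : layer (ZMod N) ι p m ≤ S from hS ha
  refine layer_le_iff.2 fun w hw ↦ ?_
  rcases hw.eq_or_lt with rfl | hw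
  · exact ⟨_, hword w hm⟩
  · exact ⟨1, one_of_mem_layer_succ (word_mem_layer hw)⟩

end Letters

end IsLeadingTerm

variable [NeZero N] (hτ : ∀ i, τ (h i) = toBch _ _ _ (lieLetter (ZMod N) p i))
include hτ

theorem injective_of_map_eq_toBch_lieLetter (hgen : Subgroup.closure (Set.range h) = ⊤) :
    Function.Injective τ := by
  have hp := IsLazardBase.two_le (k := ZMod N) (p := p)
  refine (injective_iff_map_eq_one τ).2 fun g hg ↦ ?_
  have key {m : ℕ} (hm : 1 ≤ m) (hmp : m ≤ p) : g ∈ gamma G m := by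
    induction m, hm using Nat.le_induction with
    | base => exact mem_gamma_one g
    | succ m hm ih =>
      obtain ⟨a, ha⟩ := IsLeadingTerm.exists_left hτ hgen hm (ih (by lia))
      have hdynkin := ha.sub_dynkin_mem_layer
      rw [hg, map_one, sub_self, zero_sub, neg_mem_iff] at hdynkin
      have hzero := wordClass_eq_zero h hdynkin
      rw [wordClass_dynkin h hm ha.mem_layer, ← Nat.cast_smul_eq_nsmul (ZMod N)] at hzero
      have hunit : IsUnit (m : ZMod N) :=
        isUnit_natCast_of_lt IsLazardBase.isUnit_factorial (by lia) (by lia : m < p)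
      rw [← gradedClass_eq_zero_iff ha.mem_gamma, ← ha.wordClass_eq, hunit.smul_eq_zero.1 hzero]
  simpa [IsLazardGroup.gamma_eq_bot] using key (by lia) le_rfl

theorem exists_mem_gamma_map_eq_toBch {m : ℕ} (hm : 1 ≤ m) (u : lieElements (ZMod N) ι p)
    (hu : u.1 ∈ layer (ZMod N) ι p m) : ∃ g ∈ gamma G m, τ g = toBch _ _ _ u := by
  induction hd : p - m generalizing m u with
  | zero =>
    obtain rfl : u = 0 := Subtype.ext (eq_zero_of_mem_layer (by lia) hu)
    exact ⟨1, one_mem _, map_one τ⟩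
  | succ d ih =>
    have hexp := (filtration _ ι p).truncExp_sub_one_sub_mem (IsLazardBase.two_le (ZMod N)) hm hu
    obtain ⟨g, hg⟩ := IsLeadingTerm.exists_right hτ hm (eulerInv_mem_layer hu)
    have hlead := hg.sub_dynkin_mem_layer
    rw [dynkin_eulerInv_of_mem_lieElements u.2] at hlead
    obtain ⟨v, hv⟩ := (toBch (ZMod N) ι p).surjective (toBch _ _ _ u * (τ g)⁻¹)
    have hv' : v.1 ∈ layer (ZMod N) ι p (m + 1) := by
      refine (filtration _ ι p).mem_layer_of_truncExp_sub_one_mem (IsLazardBase.two_le (ZMod N))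
        v.2.1 ?_
      have hmul := mul_expHom_mem_layer (sub_mem hexp hlead) (τ g)⁻¹
      rwa [sub_sub_sub_cancel_right, sub_sub_sub_cancel_right, sub_mul, expHom_mul_expHom_inv,
        ← expHom_toBch, ← map_mul, ← hv] at hmul
    obtain ⟨g', hg', hτg'⟩ := ih (by lia) v hv' (by lia)
    refine ⟨g' * g, mul_mem (gamma_antitone m.le_succ hg') hg.mem_gamma, ?_⟩
    rw [map_mul, hτg', hv, inv_mul_cancel_right]

end LeadingTerm

theorem ExponentDvd.of_injective {N : ℕ} {G H : Type*} [Group G] [Group H] [ExponentDvd N H]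
    {f : G →* H} (hf : Function.Injective f) : ExponentDvd N G where
  pow_eq_one g := hf (by rw [map_pow, pow_eq_one, map_one])

theorem IsLazardGroup.of_injective {p : ℕ} {G H : Type*} [Group G] [Group H] [IsLazardGroup p H]
    {f : G →* H} (hf : Function.Injective f) : IsLazardGroup p G where
  gamma_eq_bot := eq_bot_iff.2 fun g hg ↦ hf <| by
    have hfg := map_mem_gamma f hg
    rwa [gamma_eq_bot, Subgroup.mem_bot, ← map_one f] at hfg

instance {N : ℕ} {G H : Type*} [Group G] [Group H] [ExponentDvd N G] [ExponentDvd N H] :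
    ExponentDvd N (G × H) where
  pow_eq_one g := Prod.ext (ExponentDvd.pow_eq_one g.1) (ExponentDvd.pow_eq_one g.2)

instance {p : ℕ} {G H : Type*} [Group G] [Group H] [IsLazardGroup p G] [IsLazardGroup p H] :
    IsLazardGroup p (G × H) where
  gamma_eq_bot := eq_bot_iff.2 fun g hg ↦ Prod.ext
    (by simpa [IsLazardGroup.gamma_eq_bot] using map_mem_gamma (MonoidHom.fst G H) hg)
    (by simpa [IsLazardGroup.gamma_eq_bot] using map_mem_gamma (MonoidHom.snd G H) hg)

instance {N : ℕ} {G : Type*} [Group G] [ExponentDvd N G] (H : Subgroup G) : ExponentDvd N H :=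
  .of_injective H.subtype_injective

instance {p : ℕ} {G : Type*} [Group G] [IsLazardGroup p G] (H : Subgroup G) : IsLazardGroup p H :=
  .of_injective H.subtype_injective

/-- The homomorphism of Baker–Campbell–Hausdorff groups underlying a Lie algebra homomorphism. -/
noncomputable def mapBch {k ι κ : Type*} [CommRing k] {p : ℕ} [IsLazardBase k p]
    (θ : lieElements k κ p →ₗ⁅k⁆ lieElements k ι p) : BchGroup k κ p →* BchGroup k ι p where
  toFun g := toBch k ι p (θ ((toBch k κ p).symm g))
  map_one' := map_zero θ
  map_mul' := map_bch θ

section UniversalProperty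

variable {N p : ℕ} [NeZero N] [IsLazardBase (ZMod N) p] {ι : Type*}

variable (N p) in
/-- The letters as generators of the Baker–Campbell–Hausdorff group. -/
noncomputable def bchLetter (i : ι) : BchGroup (ZMod N) ι p := toBch _ _ _ (lieLetter (ZMod N) p i)

theorem toBch_mem_gamma {m : ℕ} (hm : 1 ≤ m) {u : lieElements (ZMod N) ι p}
    (hu : u.1 ∈ layer (ZMod N) ι p m) : toBch _ _ _ u ∈ gamma (BchGroup (ZMod N) ι p) m := by
  obtain ⟨g, hg, rfl⟩ := exists_mem_gamma_map_eq_toBch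
    (τ := MonoidHom.id (BchGroup (ZMod N) ι p)) (h := bchLetter N p) (fun _ ↦ rfl) hm u hu
  exact hg

/-- The canonical generators of the subgroup generated by a family. -/
def closureRangeMk {G : Type*} [Group G] (h : ι → G) (i : ι) : Subgroup.closure (Set.range h) :=
  ⟨h i, Subgroup.subset_closure ⟨i, rfl⟩⟩

theorem closure_range_closureRangeMk {G : Type*} [Group G] (h : ι → G) :
    Subgroup.closure (Set.range (closureRangeMk h)) = ⊤ := by
  rw [← Subgroup.closure_closure_coe_preimage (k := Set.range h)]
  congr 1
  ext ⟨g, hg⟩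
  simp [closureRangeMk, Subtype.ext_iff]

theorem surjective_of_map_eq_bchLetter {H : Type*} [Group H] [ExponentDvd N H]
    [IsLazardGroup p H] {h : ι → H} {τ : H →* BchGroup (ZMod N) ι p}
    (hτ : ∀ i, τ (h i) = bchLetter N p i) : Function.Surjective τ := fun g ↦ by
  obtain ⟨x, -, hx⟩ := exists_mem_gamma_map_eq_toBch hτ le_rfl ((toBch _ _ _).symm g)
    ((toBch _ _ _).symm g).2.1
  exact ⟨x, hx⟩

variable {G : Type*} [Group G]

theorem bch_hom_ext {φ ψ : BchGroup (ZMod N) ι p →* G}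
    (h : ∀ i, φ (bchLetter N p i) = ψ (bchLetter N p i)) : φ = ψ := by
  ext g
  obtain ⟨⟨x, hx⟩, rfl⟩ := surjective_of_map_eq_bchLetter (h := closureRangeMk (bchLetter N p))
    (τ := Subgroup.subtype _) (fun _ ↦ rfl) g
  have hle : Subgroup.closure (Set.range (bchLetter N p)) ≤ φ.eqLocus ψ := by
    rw [Subgroup.closure_le]
    rintro _ ⟨i, rfl⟩
    exact h i
  exact hle hx

variable [ExponentDvd N G] [IsLazardGroup p G] (f : ι → G)

theorem bijective_fst_closure : Function.Bijective ((MonoidHom.fst (BchGroup (ZMod N) ι p) G).comp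
    (Subgroup.closure (Set.range fun i ↦ (bchLetter N p i, f i))).subtype) :=
  ⟨injective_of_map_eq_toBch_lieLetter (fun _ ↦ rfl) (closure_range_closureRangeMk _),
    surjective_of_map_eq_bchLetter (h := closureRangeMk fun i ↦ (bchLetter N p i, f i))
      fun _ ↦ rfl⟩

/-- The universal property of the Baker–Campbell–Hausdorff group: it is the free group of class
less than `p` and exponent dividing `N`. The graph of the homomorphism extending `f` is the
subgroup generated by the graph of `f`. -/
noncomputable def bchLift : BchGroup (ZMod N) ι p →* G :=
  ((MonoidHom.snd _ G).comp (Subgroup.subtype _)).comp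
    (MulEquiv.ofBijective _ (bijective_fst_closure f)).symm.toMonoidHom

theorem bchLift_bchLetter (i : ι) : bchLift f (bchLetter N p i) = f i := by
  have h : (MulEquiv.ofBijective _ (bijective_fst_closure (N := N) (p := p) f)).symm
      (bchLetter N p i) = closureRangeMk (fun i ↦ (bchLetter N p i, f i)) i :=
    (MulEquiv.symm_apply_eq _).2 rfl
  exact congrArg (fun x ↦ x.1.2) h

end UniversalProperty

/-! ### The Lazard correspondence -/

section Transfer

theorem ExponentDvd.of_surjective {N : ℕ} {G H : Type*} [Group G] [Group H] [ExponentDvd N G]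
    {f : G →* H} (hf : Function.Surjective f) : ExponentDvd N H where
  pow_eq_one := hf.forall.2 fun g ↦ by rw [← map_pow, pow_eq_one, map_one]

theorem IsLazardGroup.of_surjective {p : ℕ} {G H : Type*} [Group G] [Group H] [IsLazardGroup p G]
    {f : G →* H} (hf : Function.Surjective f) : IsLazardGroup p H where
  gamma_eq_bot := by
    rw [gamma, ← Subgroup.map_top_of_surjective f hf, ← Subgroup.map_lowerCentralSeries,
      show Subgroup.lowerCentralSeries _ _ = ⊥ from gamma_eq_bot (G := G), Subgroup.map_bot]

theorem IsLazardLie.of_surjective {p : ℕ} {L L' : Type*} [LieRing L] [LieRing L'] [IsLazardLie p L]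
    {f : L →ₗ⁅ℤ⁆ L'} (hf : Function.Surjective f) : IsLazardLie p L' where
  lowerCentralSeries_eq_bot := by
    rw [← LieIdeal.lowerCentralSeries_map_eq (p - 1) hf, lowerCentralSeries_eq_bot,
      (LieIdeal.gc_map_comap f).l_bot]

theorem IsLazardLie.of_injective {p : ℕ} {L L' : Type*} [LieRing L] [LieRing L']
    [IsLazardLie p L'] {f : L →ₗ⁅ℤ⁆ L'} (hf : Function.Injective f) : IsLazardLie p L where
  lowerCentralSeries_eq_bot := eq_bot_iff.2 fun x hx ↦ hf <| by
    rw [map_zero]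
    exact eq_zero_of_mem (p := p) (by lia)
      (LieIdeal.map_lowerCentralSeries_le (p - 1) (LieIdeal.mem_map hx))

instance {k ι : Type*} [CommRing k] {p : ℕ} [IsLazardBase k p] :
    IsLazardLie p (lieElements k ι p) :=
  .of_injective (f := { (lieElements k ι p).incl.toLinearMap.toAddMonoidHom.toIntLinearMap with
    map_lie' := rfl }) Subtype.val_injective

end Transfer

section GroupOf

variable {k ι Λ : Type*} [CommRing k] {p : ℕ} [IsLazardBase k p] [LieRing Λ] [LieAlgebra k Λ]
  [IsLazardLie p Λ]

theorem map_lieLift {Λ' : Type*} [LieRing Λ'] [LieAlgebra k Λ'] [IsLazardLie p Λ']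
    (θ : Λ →ₗ⁅k⁆ Λ') (f : ι → Λ) (u : lieElements k ι p) :
    θ (lieLift f u) = lieLift (fun i ↦ θ (f i)) u :=
  LieHom.congr_fun (f := θ.comp (lieLift f)) (lieElements_hom_ext fun i ↦ by
    rw [LieHom.comp_apply, lieLift_lieLetter, lieLift_lieLetter]) u

/-- A Lie algebra of class less than `p`, to be endowed with the Baker–Campbell–Hausdorff product:
this is the Lazard correspondence from Lie algebras to groups. -/
def GroupOf (_k : Type*) (_p : ℕ) (Λ : Type*) : Type _ := Λ

/-- The identity map from a Lie algebra to the group it carries. -/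
def toGroup (k : Type*) (p : ℕ) (Λ : Type*) : Λ ≃ GroupOf k p Λ := Equiv.refl _

noncomputable instance : Mul (GroupOf k p Λ) where
  mul x y := toGroup k p Λ (lieLift ![(toGroup k p Λ).symm x, (toGroup k p Λ).symm y]
    (bch (lieLetter k p 0) (lieLetter k p 1)))

theorem toGroup_lieLift_bch (f : ι → Λ) (u v : lieElements k ι p) :
    toGroup k p Λ (lieLift f (bch u v)) =
      toGroup k p Λ (lieLift f u) * toGroup k p Λ (lieLift f v) := by
  have h := map_bch (lieLift ![u, v]) (lieLetter k p 0) (lieLetter k p 1)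
  rw [lieLift_lieLetter, lieLift_lieLetter] at h
  have hf : (fun i ↦ lieLift f (![u, v] i)) = ![lieLift f u, lieLift f v] :=
    funext (Fin.forall_fin_two.2 ⟨rfl, rfl⟩)
  exact congrArg (toGroup k p Λ) (h ▸ hf ▸ map_lieLift (lieLift f) ![u, v] _)

theorem surjective_lieLift_id : Function.Surjective (lieLift (k := k) (p := p) (id : Λ → Λ)) :=
  fun x ↦ ⟨lieLetter k p x, lieLift_lieLetter _ x⟩

theorem surjective_toGroup_lieLift_id : Function.Surjective
    fun u : lieElements k Λ p ↦ toGroup k p Λ (lieLift id u) :=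
  (toGroup k p Λ).surjective.comp surjective_lieLift_id

noncomputable instance : Group (GroupOf k p Λ) :=
  letI : One (GroupOf k p Λ) := ⟨toGroup k p Λ 0⟩
  letI : Inv (GroupOf k p Λ) := ⟨fun x ↦ toGroup k p Λ (-(toGroup k p Λ).symm x)⟩
  have hone : 1 = toGroup k p Λ (lieLift id 0) :=
    congrArg (toGroup k p Λ) (map_zero (lieLift id)).symm
  have hinv (u : lieElements k Λ p) : (toGroup k p Λ (lieLift id u))⁻¹ =
      toGroup k p Λ (lieLift id (-u)) := congrArg (toGroup k p Λ) (map_neg (lieLift id) u).symm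
  Group.ofLeftAxioms
    (surjective_toGroup_lieLift_id.forall₃.2 fun u v w ↦ by
      simp only [← toGroup_lieLift_bch, bch_assoc])
    (surjective_toGroup_lieLift_id.forall.2 fun u ↦ by
      rw [hone, ← toGroup_lieLift_bch, zero_bch])
    (surjective_toGroup_lieLift_id.forall.2 fun u ↦ by
      rw [hone, hinv, ← toGroup_lieLift_bch, neg_bch])

/-- The group homomorphism underlying `lieLift`. -/
noncomputable def lieLiftGroup (f : ι → Λ) : BchGroup k ι p →* GroupOf k p Λ where
  toFun g := toGroup k p Λ (lieLift f ((toBch k ι p).symm g))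
  map_one' := congrArg (toGroup k p Λ) (map_zero (lieLift f))
  map_mul' := toGroup_lieLift_bch f

theorem lieLiftGroup_toBch (f : ι → Λ) (u : lieElements k ι p) :
    lieLiftGroup f (toBch k ι p u) = toGroup k p Λ (lieLift f u) := rfl

theorem surjective_lieLiftGroup_id : Function.Surjective
    (lieLiftGroup (k := k) (p := p) (id : Λ → Λ)) :=
  surjective_toGroup_lieLift_id

instance {N : ℕ} [IsLazardBase (ZMod N) p] [LieAlgebra (ZMod N) Λ] :
    ExponentDvd N (GroupOf (ZMod N) p Λ) :=
  .of_surjective surjective_lieLiftGroup_id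

instance : IsLazardGroup p (GroupOf k p Λ) :=
  .of_surjective surjective_lieLiftGroup_id

theorem toGroup_nsmul (m : ℕ) (x : Λ) : toGroup k p Λ (m • x) = toGroup k p Λ x ^ m := by
  obtain ⟨u, rfl⟩ := surjective_lieLift_id (k := k) (p := p) x
  rw [← map_nsmul, ← lieLiftGroup_toBch, ← lieLiftGroup_toBch, toBch_nsmul, map_pow]

variable (k p) in
/-- The group isomorphism underlying a Lie algebra isomorphism. -/
noncomputable def mapGroupOf {Λ' : Type*} [LieRing Λ'] [LieAlgebra k Λ'] [IsLazardLie p Λ']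
    (e : Λ ≃ₗ⁅k⁆ Λ') : GroupOf k p Λ ≃* GroupOf k p Λ' where
  toEquiv := (toGroup k p Λ).symm.trans (e.toLinearEquiv.toEquiv.trans (toGroup k p Λ'))
  map_mul' := surjective_toGroup_lieLift_id.forall₂.2 fun u v ↦ by
    rw [← toGroup_lieLift_bch]
    change toGroup k p Λ' (e.toLieHom (lieLift id (bch u v))) =
      toGroup k p Λ' (e.toLieHom (lieLift id u)) * toGroup k p Λ' (e.toLieHom (lieLift id v))
    simp only [map_lieLift, toGroup_lieLift_bch]

end GroupOf

section LieOf

/-- Lie rings killed by `N` are Lie algebras over `ℤ/N`. -/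
abbrev zmodLieAlgebra (N : ℕ) (L : Type*) [LieRing L] (h : ∀ x : L, N • x = 0) :
    LieAlgebra (ZMod N) L :=
  letI := AddCommGroup.zmodModule h
  { lie_smul := fun c x y ↦ ZMod.map_smul (AddMonoidHom.mk' (⁅x, ·⁆) (lie_add x)) c y }

variable {N p : ℕ} [NeZero N] [IsLazardBase (ZMod N) p] {ι κ G H : Type*}
  [Group G] [ExponentDvd N G] [IsLazardGroup p G] [Group H] [ExponentDvd N H] [IsLazardGroup p H]

theorem map_bchLift (φ : G →* H) (f : ι → G) (g : BchGroup (ZMod N) ι p) :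
    φ (bchLift f g) = bchLift (fun i ↦ φ (f i)) g :=
  DFunLike.congr_fun (f := φ.comp (bchLift f)) (bch_hom_ext fun i ↦ by
    rw [MonoidHom.comp_apply, bchLift_bchLetter, bchLift_bchLetter]) g

/-- A group of class less than `p` and exponent dividing `N`, to be endowed with the sum and the
bracket which invert the Baker–Campbell–Hausdorff formula: this is the Lazard correspondence from
groups to Lie algebras. -/
def LieOf (_N _p : ℕ) (G : Type*) : Type _ := G

/-- The identity map from a group to the Lie algebra it carries. -/
def toLie (N p : ℕ) (G : Type*) : G ≃ LieOf N p G := Equiv.refl _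

/-- The value of a Lie element on a family of elements of a group. -/
noncomputable def lieEval (f : ι → G) (u : lieElements (ZMod N) ι p) : LieOf N p G :=
  toLie N p G (bchLift f (toBch _ _ _ u))

theorem lieEval_lieLift (f : κ → G) (F : ι → lieElements (ZMod N) κ p)
    (W : lieElements (ZMod N) ι p) :
    lieEval f (lieLift F W) = lieEval (fun i ↦ (toLie N p G).symm (lieEval f (F i))) W :=
  congrArg (toLie N p G) <|
    DFunLike.congr_fun (f := (bchLift f).comp (mapBch (lieLift F))) (bch_hom_ext fun i ↦ by
      rw [bchLift_bchLetter]
      exact congrArg (fun u ↦ bchLift f (toBch _ _ _ u)) (lieLift_lieLetter F i)) (toBch _ _ _ W)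

theorem lieEval_lieLift_pair (f : ι → G) (u v : lieElements (ZMod N) ι p)
    (W : lieElements (ZMod N) (Fin 2) p) : lieEval f (lieLift ![u, v] W) =
      lieEval ![(toLie N p G).symm (lieEval f u), (toLie N p G).symm (lieEval f v)] W := by
  rw [lieEval_lieLift]
  congr 1
  exact funext (Fin.forall_fin_two.2 ⟨rfl, rfl⟩)

theorem surjective_lieEval_id : Function.Surjective (lieEval (N := N) (p := p) (id : G → G)) :=
  fun x ↦ ⟨lieLetter (ZMod N) p x, bchLift_bchLetter (id : G → G) x⟩

noncomputable instance : Add (LieOf N p G) where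
  add x y := lieEval ![(toLie N p G).symm x, (toLie N p G).symm y]
    (lieLetter (ZMod N) p 0 + lieLetter (ZMod N) p 1)

noncomputable instance : Bracket (LieOf N p G) (LieOf N p G) where
  bracket x y := lieEval ![(toLie N p G).symm x, (toLie N p G).symm y]
    ⁅lieLetter (ZMod N) p (0 : Fin 2), lieLetter (ZMod N) p 1⁆

instance : Zero (LieOf N p G) := ⟨toLie N p G 1⟩

instance : Neg (LieOf N p G) := ⟨fun x ↦ toLie N p G ((toLie N p G).symm x)⁻¹⟩

theorem lieEval_add (f : ι → G) (u v : lieElements (ZMod N) ι p) :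
    lieEval f (u + v) = lieEval f u + lieEval f v := by
  have h := lieEval_lieLift_pair f u v (lieLetter (ZMod N) p 0 + lieLetter (ZMod N) p 1)
  rwa [map_add, lieLift_lieLetter, lieLift_lieLetter] at h

theorem lieEval_lie (f : ι → G) (u v : lieElements (ZMod N) ι p) :
    lieEval f ⁅u, v⁆ = ⁅lieEval f u, lieEval f v⁆ := by
  have h := lieEval_lieLift_pair f u v ⁅lieLetter (ZMod N) p (0 : Fin 2), lieLetter (ZMod N) p 1⁆
  rwa [LieHom.map_lie, lieLift_lieLetter, lieLift_lieLetter] at h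

theorem lieEval_zero (f : ι → G) : lieEval f (0 : lieElements (ZMod N) ι p) = 0 :=
  congrArg (toLie N p G) (map_one (bchLift f))

theorem lieEval_neg (f : ι → G) (u : lieElements (ZMod N) ι p) : lieEval f (-u) = -lieEval f u :=
  congrArg (toLie N p G) (map_inv (bchLift f) (toBch _ _ _ u))

noncomputable instance : AddCommGroup (LieOf N p G) :=
  { AddGroup.ofLeftAxioms
      (surjective_lieEval_id.forall₃.2 fun u v w ↦ by simp only [← lieEval_add, add_assoc])
      (surjective_lieEval_id.forall.2 fun u ↦ by
        rw [← lieEval_zero id, ← lieEval_add, zero_add])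
      (surjective_lieEval_id.forall.2 fun u ↦ by
        rw [← lieEval_zero id, ← lieEval_neg, ← lieEval_add, neg_add_cancel]) with
    add_comm := surjective_lieEval_id.forall₂.2 fun u v ↦ by simp only [← lieEval_add, add_comm] }

noncomputable instance : LieRing (LieOf N p G) where
  add_lie := surjective_lieEval_id.forall₃.2 fun u v w ↦ by
    simp only [← lieEval_add, ← lieEval_lie, add_lie]
  lie_add := surjective_lieEval_id.forall₃.2 fun u v w ↦ by
    simp only [← lieEval_add, ← lieEval_lie, lie_add]
  lie_self := surjective_lieEval_id.forall.2 fun u ↦ by rw [← lieEval_lie, lie_self, lieEval_zero]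
  leibniz_lie := surjective_lieEval_id.forall₃.2 fun u v w ↦ by
    simp only [← lieEval_add, ← lieEval_lie, leibniz_lie u v w]

/-- `lieEval` as an additive homomorphism. -/
noncomputable def lieEvalHom (f : ι → G) : lieElements (ZMod N) ι p →+ LieOf N p G :=
  AddMonoidHom.mk' (lieEval f) (lieEval_add f)

theorem toLie_pow (m : ℕ) (x : G) : toLie N p G (x ^ m) = m • toLie N p G x := by
  obtain ⟨u, hu⟩ := surjective_lieEval_id (toLie N p G x)
  obtain rfl : bchLift id (toBch (ZMod N) G p u) = x := hu
  rw [← map_pow, ← toBch_nsmul]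
  exact map_nsmul (lieEvalHom id) m u

noncomputable instance : LieAlgebra (ZMod N) (LieOf N p G) :=
  zmodLieAlgebra N _ fun x ↦ by
    obtain ⟨x, rfl⟩ := (toLie N p G).surjective x
    rw [← toLie_pow, ExponentDvd.pow_eq_one]
    rfl

instance : IsLazardLie p (LieOf N p G) :=
  .of_surjective (f := { (lieEvalHom id).toIntLinearMap with map_lie' := lieEval_lie id _ _ })
    surjective_lieEval_id

theorem lieEval_eq_lieLift (f : ι → G) (u : lieElements (ZMod N) ι p) :
    lieEval f u = lieLift (fun i ↦ toLie N p G (f i)) u :=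
  letI θ : lieElements (ZMod N) ι p →ₗ⁅ZMod N⁆ LieOf N p G :=
    { (lieEvalHom (N := N) (p := p) f).toZModLinearMap N with map_lie' := lieEval_lie f _ _ }
  LieHom.congr_fun (f := θ) (g := lieLift fun i ↦ toLie N p G (f i)) (lieElements_hom_ext fun i ↦ by
    rw [lieLift_lieLetter]
    exact congrArg (toLie N p G) (bchLift_bchLetter f i)) u

theorem toLie_map_symm_lieEval (φ : G →* H) (f : ι → G) (u : lieElements (ZMod N) ι p) :
    toLie N p H (φ ((toLie N p G).symm (lieEval f u))) = lieEval (fun i ↦ φ (f i)) u :=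
  congrArg (toLie N p H) (map_bchLift φ f (toBch _ _ _ u))

variable (N p) in
/-- The Lie algebra isomorphism underlying a group isomorphism. -/
noncomputable def mapLieOf (e : G ≃* H) : LieOf N p G ≃ₗ⁅ZMod N⁆ LieOf N p H :=
  letI f := (toLie N p G).symm.trans (e.toEquiv.trans (toLie N p H))
  have hf (u : lieElements (ZMod N) G p) : f (lieEval id u) = lieEval e u :=
    toLie_map_symm_lieEval e.toMonoidHom id u
  { f, (AddMonoidHom.mk' f <| surjective_lieEval_id.forall₂.2 fun u v ↦ by
        simp only [← lieEval_add, hf]).toZModLinearMap N with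
    map_lie' := fun {x y} ↦ (surjective_lieEval_id.forall₂ (p := fun x y ↦ f ⁅x, y⁆ = ⁅f x, f y⁆)).2
      (fun u v ↦ by simp only [← lieEval_lie, hf]) x y }

end LieOf

section LieLiftMem

variable {k ι Λ : Type*} [CommRing k] {p : ℕ} [IsLazardBase k p] [LieRing Λ] [LieAlgebra k Λ]
  [IsLazardLie p Λ]

theorem lieLift_mem {S : LieSubalgebra k Λ} {f : ι → Λ} (hf : ∀ i, f i ∈ S)
    (u : lieElements k ι p) : lieLift f u ∈ S := by
  induction u using lieElements_induction with
  | zero => rw [map_zero]; exact zero_mem S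
  | add u v hu hv => rw [map_add]; exact add_mem hu hv
  | smul c u hu => rw [map_smul]; exact S.smul_mem c hu
  | letter i => rw [lieLift_lieLetter]; exact hf i
  | lie i u hu => rw [LieHom.map_lie, lieLift_lieLetter]; exact S.lie_mem (hf i) hu

theorem dynkin_mem_of_mem_layer_two {S : Submodule k Λ} (hS : ∀ a b : Λ, ⁅a, b⁆ ∈ S) (f : ι → Λ)
    {a : TruncFree k ι p} (ha : a ∈ layer k ι p 2) : dynkin f a ∈ S := by
  have h : layer k ι p 2 ≤ S.comap (dynkin f) := layer_le_iff.2 fun w hw ↦ by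
    cases w using FreeMonoid.casesOn with
    | one => simp at hw
    | of_mul i w =>
      have hw1 : word k p w ∈ layer k ι p 1 :=
        word_mem_layer (by rw [length_of_mul] at hw; lia)
      rw [Submodule.mem_comap, word_of_mul, dynkin_letter_mul, counit_eq_zero hw1, zero_smul,
        add_zero]
      exact hS _ _
  exact h ha

theorem mem_layer_of_toBch_mem_bchLayer {m : ℕ} {u : lieElements k ι p}
    (hu : toBch k ι p u ∈ bchLayer k ι p m) : u.1 ∈ layer k ι p m :=
  (filtration k ι p).mem_layer_of_truncExp_sub_one_mem (IsLazardBase.two_le (k := k)) u.2.1 hu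

theorem commutatorElement_pow_eq_one {q : ℕ} (h : ∀ a b : Λ, q • ⁅a, b⁆ = 0)
    (x y : GroupOf k p Λ) : ⁅x, y⁆ ^ q = 1 := by
  obtain ⟨a, rfl⟩ := (toGroup k p Λ).surjective x
  obtain ⟨b, rfl⟩ := (toGroup k p Λ).surjective y
  obtain ⟨u, hu⟩ := (toBch k (Fin 2) p).surjective
    ⁅toBch k (Fin 2) p (lieLetter k p 0), toBch k (Fin 2) p (lieLetter k p 1)⁆
  have hu2 : u.1 ∈ layer k (Fin 2) p 2 := mem_layer_of_toBch_mem_bchLayer <|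
    gamma_le_bchLayer one_le_two <|
      hu ▸ commutatorElement_mem_gamma one_add_one_eq_two (mem_gamma_one _) (mem_gamma_one _)
  have hxy : ⁅toGroup k p Λ a, toGroup k p Λ b⁆ = toGroup k p Λ (lieLift ![a, b] u) := by
    rw [← lieLiftGroup_toBch, hu, map_commutatorElement, lieLiftGroup_toBch, lieLiftGroup_toBch,
      lieLift_lieLetter, lieLift_lieLetter]
    rfl
  let S : Submodule k Λ := LinearMap.ker ((q : k) • LinearMap.id)
  have hS : lieLift ![a, b] u ∈ S := dynkin_mem_of_mem_layer_two (fun a b ↦ by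
    simpa [S, Nat.cast_smul_eq_nsmul] using h a b) _ (eulerInv_mem_layer hu2)
  rw [hxy, ← toGroup_nsmul, show q • lieLift ![a, b] u = 0 by
    simpa [S, Nat.cast_smul_eq_nsmul] using hS]
  rfl

end LieLiftMem

section RoundTrip

variable {N p : ℕ} [NeZero N] [IsLazardBase (ZMod N) p] {ι : Type*}

theorem toBch_lie_lieLetter_mem_gamma (i j : ι) :
    toBch _ _ _ ⁅lieLetter (ZMod N) p i, lieLetter (ZMod N) p j⁆ ∈
      gamma (BchGroup (ZMod N) ι p) 2 :=
  toBch_mem_gamma one_le_two <| layer_antitone one_add_one_eq_two.ge <|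
    lie_mem_layer (letter_mem_layer_one i) (letter_mem_layer_one j)

section Lie

variable {L : Type*} [LieRing L] [LieAlgebra (ZMod N) L] [IsLazardLie p L]

theorem bchLift_toGroup (f : ι → L) :
    bchLift (N := N) (fun i ↦ toGroup (ZMod N) p L (f i)) = lieLiftGroup f :=
  bch_hom_ext fun i ↦ by
    rw [bchLift_bchLetter]
    exact congrArg (toGroup (ZMod N) p L) (lieLift_lieLetter f i).symm

variable (N p L) in
/-- A Lie algebra is recovered from its group. -/
noncomputable def lieOfGroupOf : L ≃ₗ⁅ZMod N⁆ LieOf N p (GroupOf (ZMod N) p L) :=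
  letI f := (toGroup (ZMod N) p L).trans (toLie N p _)
  have hf (u : lieElements (ZMod N) L p) : f (lieLift id u) = lieEval (toGroup (ZMod N) p L) u :=
    congrArg (toLie N p _) (DFunLike.congr_fun (bchLift_toGroup id) (toBch _ _ _ u)).symm
  { f, (AddMonoidHom.mk' f <| (surjective_lieLift_id (k := ZMod N) (p := p)).forall₂.2 fun u v ↦ by
        simp only [← map_add, hf, lieEval_add]).toZModLinearMap N with
    map_lie' := fun {x y} ↦ ((surjective_lieLift_id (k := ZMod N) (p := p)).forall₂
      (p := fun x y ↦ f ⁅x, y⁆ = ⁅f x, f y⁆)).2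
      (fun u v ↦ by simp only [← LieHom.map_lie, hf, lieEval_lie]) x y }

end Lie

section Group

variable {G : Type*} [Group G] [ExponentDvd N G] [IsLazardGroup p G]

theorem surjective_bchLift_id : Function.Surjective (bchLift (N := N) (p := p) (id : G → G)) :=
  surjective_lieEval_id

variable (N p G) in
/-- A group is recovered from its Lie algebra. -/
noncomputable def groupOfLieOf : G ≃* GroupOf (ZMod N) p (LieOf N p G) :=
  letI f := (toLie N p G).trans (toGroup (ZMod N) p _)
  have hf (g : BchGroup (ZMod N) G p) : f (bchLift id g) = lieLiftGroup (toLie N p G) g :=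
    congrArg (toGroup _ p _) (lieEval_eq_lieLift id ((toBch _ _ _).symm g))
  { f with
    map_mul' := (surjective_bchLift_id.forall₂ (p := fun x y ↦ f (x * y) = f x * f y)).2
      fun g h ↦ by rw [← map_mul, hf, hf, hf, map_mul] }

variable (N p) in
/-- The elements of order dividing `q`: they form a subgroup since they are the elements killed by
`q` in the associated Lie algebra. -/
noncomputable def omega (q : ℕ) : Subgroup G where
  carrier := {x | x ^ q = 1}
  one_mem' := one_pow q
  inv_mem' {x} hx := by rw [Set.mem_ofPred] at hx ⊢; rw [inv_pow, hx, inv_one]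
  mul_mem' {x y} hx hy := by
    let S : LieSubalgebra (ZMod N) (LieOf N p G) :=
      { LinearMap.ker ((q : ZMod N) • LinearMap.id) with
        lie_mem' := fun {a b} _ hb ↦ by
          simp_all [← lie_smul] }
    have hS {z : G} : toLie N p G z ∈ S ↔ z ^ q = 1 := by
      rw [← (toLie N p G).injective.eq_iff, toLie_pow, ← Nat.cast_smul_eq_nsmul (ZMod N)]
      rfl
    have hmul : lieEval ![x, y] ((toBch _ _ _).symm (bchLetter N p 0 * bchLetter N p 1)) =
        toLie N p G (x * y) := by
      rw [lieEval, Equiv.apply_symm_apply, map_mul, bchLift_bchLetter, bchLift_bchLetter]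
      rfl
    rw [Set.mem_ofPred, ← hS, ← hmul, lieEval_eq_lieLift]
    exact lieLift_mem (Fin.forall_fin_two.2 ⟨hS.2 hx, hS.2 hy⟩) _

theorem mem_omega {q : ℕ} {x : G} : x ∈ omega N p q ↔ x ^ q = 1 := Iff.rfl

theorem lie_eq_toLie (a b : LieOf N p G) :
    ⁅a, b⁆ = toLie N p G (bchLift ![(toLie N p G).symm a, (toLie N p G).symm b]
      (toBch (ZMod N) (Fin 2) p ⁅lieLetter (ZMod N) p (0 : Fin 2), lieLetter (ZMod N) p 1⁆)) := rfl

theorem nsmul_lie_eq_zero {q : ℕ} (h : ∀ x y : G, ⁅x, y⁆ ^ q = 1) (a b : LieOf N p G) :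
    q • ⁅a, b⁆ = 0 := by
  have hle : gamma G 2 ≤ omega N p q := by
    rw [gamma_succ le_rfl, Subgroup.commutator_le]
    exact fun x _ y _ ↦ h x y
  have hc := hle (map_mem_gamma (bchLift ![(toLie N p G).symm a, (toLie N p G).symm b])
    (toBch_lie_lieLetter_mem_gamma (N := N) (p := p) 0 1))
  rw [lie_eq_toLie, ← toLie_pow, mem_omega.1 hc]
  rfl

end Group

end RoundTrip

theorem isLazardBase_zmod_pow {p : ℕ} (hp : p.Prime) (n : ℕ) : IsLazardBase (ZMod (p ^ n)) p where
  two_le := hp.two_le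
  isUnit_factorial := by
    rw [ZMod.isUnit_iff_coprime]
    exact ((hp.coprime_factorial_of_lt (Nat.sub_lt hp.pos one_pos)).symm).pow_right n

theorem two_le_of_not_isCyclic {p : ℕ} (hp : p.Prime) {m : ℕ} {G : Type*} [Group G]
    (hG : Nat.card G = p ^ m) (h : ¬ IsCyclic G) : 2 ≤ m := by
  have := Fact.mk hp
  by_contra! hm
  obtain rfl | rfl : m = 0 ∨ m = 1 := by lia
  · have := (Nat.card_eq_one_iff_unique.1 (hG.trans (pow_zero p))).1
    exact h inferInstance
  · exact h (isCyclic_of_prime_card (hG.trans (pow_one p)))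

theorem nilpotencyClass_le_max {p : ℕ} (hp : p.Prime) {n : ℕ} {G : Type*} [Group G]
    (hG : Nat.card G = p ^ n) : Group.nilpotencyClass G ≤ max (n - 1) 1 := by
  have := Fact.mk hp
  induction n using Nat.strong_induction_on generalizing G with | _ n ih
  have : Finite G := Nat.finite_of_card_ne_zero (hG.trans_ne (pow_pos hp.pos n).ne')
  have hpG : IsPGroup p G := .of_card hG
  have := hpG.isNilpotent
  by_cases hcyc : IsCyclic (G ⧸ Subgroup.center G)
  · exact (Group.IsNilpotent.nilpotencyClass_le_one_iff.2
      (isMulCommutative_of_isCyclic_quotient_center_self G)).trans (le_max_right _ _)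
  obtain ⟨m, hm⟩ := IsPGroup.iff_card.1 (hpG.to_quotient (Subgroup.center G))
  have hm2 : 2 ≤ m := two_le_of_not_isCyclic hp hm hcyc
  have hmn : m < n := by
    have : Nontrivial G := by
      by_contra h
      have := not_nontrivial_iff_subsingleton.1 h
      exact hcyc inferInstance
    have := hpG.center_nontrivial
    have hcard := Subgroup.card_eq_card_quotient_mul_card_subgroup (Subgroup.center G)
    rw [hG, hm] at hcard
    rw [← Nat.pow_lt_pow_iff_right hp.one_lt, hcard]
    exact lt_mul_of_one_lt_right (pow_pos hp.pos m) Finite.one_lt_card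
  have hclass := ih m hmn hm
  rw [Group.nilpotencyClass_quotient_center] at hclass
  lia

theorem IsLazardGroup.of_card_eq_pow {p n : ℕ} (hp : p.Prime) (hn : n ≤ p) {G : Type*} [Group G]
    (hG : Nat.card G = p ^ n) : IsLazardGroup p G where
  gamma_eq_bot := by
    have := Fact.mk hp
    have : Finite G := Nat.finite_of_card_ne_zero (hG.trans_ne (pow_pos hp.pos n).ne')
    have := (IsPGroup.of_card hG).isNilpotent
    have := nilpotencyClass_le_max hp hG
    have := hp.two_le
    rw [gamma, Subgroup.lowerCentralSeries_eq_bot_iff_nilpotencyClass_le]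
    lia

section Lie

variable {L : Type*} [LieRing L]

theorem lowerCentralSeries_succ_lt [LieRing.IsNilpotent L] {k : ℕ}
    (hk : LieModule.lowerCentralSeries ℤ L L k ≠ ⊥) :
    LieModule.lowerCentralSeries ℤ L L (k + 1) < LieModule.lowerCentralSeries ℤ L L k := by
  refine (LieModule.antitone_lowerCentralSeries ℤ L L k.le_succ).lt_of_ne fun h ↦ hk ?_
  have hconst (j : ℕ) : LieModule.lowerCentralSeries ℤ L L (k + j) =
      LieModule.lowerCentralSeries ℤ L L k := by
    induction j with
    | zero => rfl
    | succ j ih => rw [← add_assoc, LieModule.lowerCentralSeries_succ, ih,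
        ← LieModule.lowerCentralSeries_succ, h]
  obtain ⟨m, hm⟩ := LieModule.IsNilpotent.nilpotent ℤ L L
  rw [← hconst m, eq_bot_iff, ← hm]
  exact LieModule.antitone_lowerCentralSeries ℤ L L (Nat.le_add_left m k)

/-- The lower central series as a chain of subgroups of the additive group. -/
def lowerCentralAddSubgroup (L : Type*) [LieRing L] (k : ℕ) : AddSubgroup L :=
  (LieModule.lowerCentralSeries ℤ L L k).toSubmodule.toAddSubgroup

theorem lie_mem_lowerCentralAddSubgroup (x : L) {k : ℕ} {y : L}
    (hy : y ∈ lowerCentralAddSubgroup L k) : ⁅x, y⁆ ∈ lowerCentralAddSubgroup L (k + 1) :=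
  (LieModule.lowerCentralSeries_succ ℤ L L k).ge
    (LieSubmodule.lie_mem_lie (LieSubmodule.mem_top x) hy)

theorem lowerCentralSeries_one_eq_bot_of_isAddCyclic [LieRing.IsNilpotent L]
    [IsAddCyclic (L ⧸ lowerCentralAddSubgroup L 1)] :
    LieModule.lowerCentralSeries ℤ L L 1 = ⊥ := by
  by_contra hne
  refine (lowerCentralSeries_succ_lt hne).not_ge fun y hy ↦ ?_
  obtain ⟨q, hq⟩ := IsAddCyclic.exists_generator (α := L ⧸ lowerCentralAddSubgroup L 1)
  obtain ⟨x, rfl⟩ := QuotientAddGroup.mk_surjective q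
  have hx (a : L) : ∃ c : ℤ, ∃ a' ∈ lowerCentralAddSubgroup L 1, a = c • x + a' := by
    obtain ⟨c, hc⟩ := hq a
    exact ⟨c, -(c • x) + a, QuotientAddGroup.eq.1 hc, by abel⟩
  refine mem_of_mem_lowerCentralSeries_succ (F := fun _ ↦ lowerCentralAddSubgroup L 2)
    (fun a b ↦ ?_) (fun _ a b hb ↦ ?_) (m := 0) hy
  · obtain ⟨c, a', ha', rfl⟩ := hx a
    obtain ⟨d, b', hb', rfl⟩ := hx b
    rw [lie_add, lie_zsmul, add_lie, zsmul_lie, lie_self, zsmul_zero, zero_add, ← lie_skew]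
    exact add_mem (zsmul_mem (neg_mem (lie_mem_lowerCentralAddSubgroup x ha')) d)
      (lie_mem_lowerCentralAddSubgroup _ hb')
  · exact LieModule.antitone_lowerCentralSeries ℤ L L (by lia)
      (lie_mem_lowerCentralAddSubgroup a hb)

theorem pow_succ_dvd_index_lowerCentralAddSubgroup {p : ℕ} (hp : p.Prime) {n : ℕ}
    (hL : Nat.card L = p ^ n) [LieRing.IsNilpotent L] {k : ℕ} (hk : 1 ≤ k)
    (hne : LieModule.lowerCentralSeries ℤ L L k ≠ ⊥) :
    p ^ (k + 1) ∣ (lowerCentralAddSubgroup L k).index := by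
  induction k, hk using Nat.le_induction with
  | base =>
    obtain ⟨m, -, hm⟩ := (Nat.dvd_prime_pow hp).1
      (hL ▸ (lowerCentralAddSubgroup L 1).index_dvd_card)
    rw [hm]
    refine pow_dvd_pow p (two_le_of_not_isCyclic hp
      (G := Multiplicative (L ⧸ lowerCentralAddSubgroup L 1)) hm fun hcyc ↦ hne ?_)
    have := isCyclic_multiplicative_iff.1 hcyc
    exact lowerCentralSeries_one_eq_bot_of_isAddCyclic
  | succ k _ ih =>
    have hne' : LieModule.lowerCentralSeries ℤ L L k ≠ ⊥ := fun h ↦ hne <| eq_bot_iff.2 <|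
      (LieModule.antitone_lowerCentralSeries ℤ L L k.le_succ).trans_eq h
    have hlt := lowerCentralSeries_succ_lt hne'
    have hle : lowerCentralAddSubgroup L (k + 1) ≤ lowerCentralAddSubgroup L k := hlt.le
    rw [← AddSubgroup.relIndex_mul_index hle, pow_succ']
    obtain ⟨m, -, hm⟩ := (Nat.dvd_prime_pow hp).1 (hL ▸ (AddSubgroup.relIndex_dvd_card
      (lowerCentralAddSubgroup L (k + 1)) (lowerCentralAddSubgroup L k)).trans
      (AddSubgroup.card_addSubgroup_dvd_card _))
    refine mul_dvd_mul (hm.symm ▸ dvd_pow_self p fun hm0 ↦ hlt.not_ge ?_) (ih hne')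
    exact AddSubgroup.relIndex_eq_one.1 (by rw [hm, hm0, pow_zero])

theorem IsLazardLie.of_card_eq_pow {p n : ℕ} (hp : p.Prime) (hn : n ≤ p)
    (hL : Nat.card L = p ^ n) [LieRing.IsNilpotent L] : IsLazardLie p L where
  lowerCentralSeries_eq_bot := by
    by_contra hne
    have : Finite L := Nat.finite_of_card_ne_zero (hL.trans_ne (pow_pos hp.pos n).ne')
    have hdvd := pow_succ_dvd_index_lowerCentralAddSubgroup hp hL
      (Nat.le_sub_one_of_lt hp.one_lt) hne
    rw [Nat.sub_add_cancel hp.one_le] at hdvd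
    have hcard := (lowerCentralAddSubgroup L (p - 1)).card_mul_index
    obtain ⟨x, hx, hx0⟩ := Submodule.exists_mem_ne_zero_of_ne_bot
      (mt (LieSubmodule.toSubmodule_eq_bot _).1 hne)
    have : Nontrivial (lowerCentralAddSubgroup L (p - 1)) := 
      ⟨⟨x, hx⟩, 0, fun h ↦ hx0 (congrArg Subtype.val h)⟩
    have hlt : (lowerCentralAddSubgroup L (p - 1)).index < p ^ n := by
      rw [← hL, ← hcard]
      exact lt_mul_of_one_lt_left (Nat.pos_of_ne_zero (AddSubgroup.index_ne_zero_of_finite))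
        Finite.one_lt_card
    exact (Nat.le_of_dvd (Nat.pos_of_ne_zero AddSubgroup.index_ne_zero_of_finite)
      hdvd).not_gt (hlt.trans_le (Nat.pow_le_pow_right hp.pos hn))

theorem IsLazardLie.isNilpotent (p : ℕ) [IsLazardLie p L] : LieRing.IsNilpotent L :=
  LieModule.IsNilpotent.mk L (IsLazardLie.lowerCentralSeries_eq_bot (p := p))

end Lie

/-- The conditions of the typed correspondence on a Lie algebra `L` over `O`, with `π` in the role
of `T`: it is nilpotent of order `p ^ n` and type `lam`, and its brackets are killed by `π`. -/
def IsTypedLie {O : Type*} [CommRing O] (π : O) (p n : ℕ) {ι : Type*} [Fintype ι] (lam : ι → ℕ)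
    (L : Type*) [LieRing L] [LieAlgebra O L] : Prop :=
  Nat.card L = p ^ n ∧
    (∀ i : ℕ, Nat.card {x : L // π ^ i • x = 0} = p ^ (∑ j, min (lam j) i)) ∧
    LieRing.IsNilpotent L ∧
    ∀ a b : L, π • ⁅a, b⁆ = 0

/-- The conditions of the typed correspondence on a group `G`: it has order `p ^ n` and type `lam`,
and the `p`-th powers of its commutators are trivial. -/
def IsTypedGroup (p n : ℕ) {ι : Type*} [Fintype ι] (lam : ι → ℕ) (G : Type*) [Group G] : Prop :=
  Nat.card G = p ^ n ∧
    (∀ i : ℕ, Nat.card {x : G // x ^ p ^ i = 1} = p ^ (∑ j, min (lam j) i)) ∧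
    ∀ x y : G, ⁅x, y⁆ ^ p = 1

/-- Bundled Lie algebras over `O` satisfying `IsTypedLie`; this is `TypedLie` for `O = R_n`. -/
def TypedLieOver {O : Type} [CommRing O] (π : O) (p n : ℕ) {ι : Type} [Fintype ι]
    (lam : ι → ℕ) : Type 1 :=
  { q : Σ (L : Type) (lr : LieRing L), @LieAlgebra O L _ lr //
      letI := q.2.1; letI := q.2.2; IsTypedLie π p n lam q.1 }

/-- Isomorphism of bundled Lie algebras over `O`. -/
def typedLieOverIsoRel {O : Type} [CommRing O] (π : O) (p n : ℕ) {ι : Type} [Fintype ι]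
    (lam : ι → ℕ) (q₁ q₂ : TypedLieOver π p n lam) : Prop :=
  letI := q₁.1.2.1; letI := q₁.1.2.2; letI := q₂.1.2.1; letI := q₂.1.2.2
  Nonempty (q₁.1.1 ≃ₗ⁅O⁆ q₂.1.1)

theorem typedLieOverIsoRel_equivalence {O : Type} [CommRing O] (π : O) (p n : ℕ) {ι : Type}
    [Fintype ι] (lam : ι → ℕ) : Equivalence (typedLieOverIsoRel π p n lam) where
  refl q := letI := q.1.2.1; letI := q.1.2.2; ⟨.refl⟩
  symm {q₁ q₂} := by
    let := q₁.1.2.1; let := q₁.1.2.2; let := q₂.1.2.1; let := q₂.1.2.2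
    exact fun ⟨e⟩ ↦ ⟨e.symm⟩
  trans {q₁ q₂ q₃} := by
    let := q₁.1.2.1; let := q₁.1.2.2; let := q₂.1.2.1; let := q₂.1.2.2
    let := q₃.1.2.1; let := q₃.1.2.2
    exact fun ⟨e⟩ ⟨e'⟩ ↦ ⟨e.trans e'⟩

theorem nonempty_quot_equiv {α β : Type*} {r : α → α → Prop} {s : β → β → Prop}
    (hs : Equivalence s) (f : α → β) (hf : ∀ a b, r a b ↔ s (f a) (f b))
    (hsurj : ∀ b, ∃ a, s (f a) b) : Nonempty (Quot r ≃ Quot s) := by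
  refine ⟨.ofBijective (Quot.map f fun a b ↦ (hf a b).1) ⟨?_, ?_⟩⟩
  · rintro ⟨a⟩ ⟨b⟩ h
    exact Quot.sound ((hf a b).2 (hs.eqvGen_iff.1 (Quot.eqvGen_exact h)))
  · rintro ⟨b⟩
    obtain ⟨a, ha⟩ := hsurj b
    exact ⟨Quot.mk r a, Quot.sound ha⟩

/-- A Lie algebra isomorphism is linear over every quotient of `ℤ` acting on both sides. -/
def lieEquivOfIntCastSurjective {R S L L' : Type*} [CommRing R] [CommRing S]
    (hS : Function.Surjective (Int.cast : ℤ → S)) [LieRing L] [LieRing L'] [LieAlgebra R L]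
    [LieAlgebra R L'] [LieAlgebra S L] [LieAlgebra S L'] (e : L ≃ₗ⁅R⁆ L') : L ≃ₗ⁅S⁆ L' :=
  { e with
    map_smul' := hS.forall.2 fun m x ↦ by
      simpa using map_intCast_smul e.toLinearEquiv S S m x }

section GroupLie

variable {p n : ℕ} {ι : Type} [Fintype ι] {lam : ι → ℕ}

theorem natCast_pow_smul {O M : Type*} [CommRing O] [AddCommGroup M] [Module O M] (q i : ℕ)
    (x : M) : (q : O) ^ i • x = q ^ i • x := by
  rw [← Nat.cast_pow, Nat.cast_smul_eq_nsmul]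

theorem isTypedLie_lieOf [NeZero (p ^ n)] [IsLazardBase (ZMod (p ^ n)) p] {G : Type*} [Group G]
    [ExponentDvd (p ^ n) G] [IsLazardGroup p G] (h : IsTypedGroup p n lam G) :
    IsTypedLie (p : ℤ) p n lam (LieOf (p ^ n) p G) := by
  obtain ⟨hcard, htype, hcomm⟩ := h
  refine ⟨hcard, fun i ↦ ?_, IsLazardLie.isNilpotent p, fun a b ↦ ?_⟩
  · rw [← htype]
    refine (Nat.card_congr ((toLie (p ^ n) p G).subtypeEquiv fun x ↦ ?_)).symm
    rw [natCast_pow_smul, ← toLie_pow]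
    exact (toLie (p ^ n) p G).injective.eq_iff.symm
  · rw [Nat.cast_smul_eq_nsmul]
    exact nsmul_lie_eq_zero hcomm a b

theorem isTypedGroup_groupOf {k O L : Type*} [CommRing k] [IsLazardBase k p] [LieRing L]
    [LieAlgebra k L] [IsLazardLie p L] [CommRing O] [LieAlgebra O L]
    (h : IsTypedLie (p : O) p n lam L) : IsTypedGroup p n lam (GroupOf k p L) := by
  obtain ⟨hcard, htype, -, hlie⟩ := h
  refine ⟨hcard, fun i ↦ ?_, commutatorElement_pow_eq_one fun a b ↦ ?_⟩
  · rw [← htype]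
    refine (Nat.card_congr ((toGroup k p L).subtypeEquiv fun x ↦ ?_)).symm
    rw [natCast_pow_smul, ← toGroup_nsmul]
    exact (toGroup k p L).injective.eq_iff.symm
  · rw [← Nat.cast_smul_eq_nsmul O, hlie]

theorem exponentDvd_of_card_eq {N : ℕ} {G : Type*} [Group G] (hG : Nat.card G = N) :
    ExponentDvd N G :=
  ⟨fun _ ↦ hG ▸ pow_card_eq_one'⟩

variable {t : ℕ} {lam : Fin t → ℕ}

theorem nonempty_quot_typedGroup_equiv (hp : p.Prime) (hn : n ≤ p) :
    Nonempty (Quot (typedGroupIsoRel p n t lam) ≃ Quot (typedLieOverIsoRel (p : ℤ) p n lam)) := by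
  have := isLazardBase_zmod_pow hp n
  have : NeZero (p ^ n) := ⟨pow_ne_zero n hp.ne_zero⟩
  have hexp (G : Type) [Group G] (hG : Nat.card G = p ^ n) := exponentDvd_of_card_eq hG
  have hcls (G : Type) [Group G] (hG : Nat.card G = p ^ n) := IsLazardGroup.of_card_eq_pow hp hn hG
  have hint : Function.Surjective (Int.cast : ℤ → ℤ) := fun m ↦ ⟨m, Int.cast_id⟩
  refine nonempty_quot_equiv (typedLieOverIsoRel_equivalence _ _ _ _) (fun ⟨⟨G, _⟩, hG⟩ ↦
    haveI := hexp G hG.1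
    haveI := hcls G hG.1
    ⟨⟨LieOf (p ^ n) p G, inferInstance, inferInstance⟩, isTypedLie_lieOf (G := G) hG⟩) ?_ ?_
  · rintro ⟨⟨G, _⟩, hG⟩ ⟨⟨H, _⟩, hH⟩
    have := hexp G hG.1
    have := hcls G hG.1
    have := hexp H hH.1
    have := hcls H hH.1
    exact ⟨fun ⟨e⟩ ↦ ⟨lieEquivOfIntCastSurjective (L := LieOf (p ^ n) p G)
        (L' := LieOf (p ^ n) p H) hint (mapLieOf (p ^ n) p e)⟩,
      fun ⟨e⟩ ↦ ⟨(groupOfLieOf (p ^ n) p G).trans ((mapGroupOf _ p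
        (lieEquivOfIntCastSurjective ZMod.intCast_surjective e)).trans
        (groupOfLieOf (p ^ n) p H).symm)⟩⟩
  · rintro ⟨⟨L, _, _⟩, hL⟩
    have : LieRing.IsNilpotent L := hL.2.2.1
    have := IsLazardLie.of_card_eq_pow hp hn hL.1
    let := zmodLieAlgebra (p ^ n) L fun _ ↦ hL.1 ▸ card_nsmul_eq_zero'
    have := hcls (GroupOf (ZMod (p ^ n)) p L) hL.1
    exact ⟨⟨⟨GroupOf (ZMod (p ^ n)) p L, inferInstance⟩, isTypedGroup_groupOf (L := L) hL⟩,
      ⟨lieEquivOfIntCastSurjective (L := LieOf (p ^ n) p (GroupOf (ZMod (p ^ n)) p L)) (L' := L)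
        hint (lieOfGroupOf (p ^ n) p L).symm⟩⟩

end GroupLie

/-! ### Modules of a given type -/

section Partition

variable {ι κ : Type*} [Fintype ι] [Fintype κ]

theorem two_mul_sum_min (lam : ι → ℕ) (i : ℕ) :
    2 * ∑ j, min (lam j) (i + 1) =
      ∑ j, min (lam j) i + ∑ j, min (lam j) (i + 2) + Nat.card {j // lam j = i + 1} := by
  classical
  rw [Nat.card_eq_fintype_card, Fintype.card_subtype, Finset.card_filter, Finset.mul_sum,
    ← Finset.sum_add_distrib, ← Finset.sum_add_distrib]
  exact Finset.sum_congr rfl fun j _ ↦ by split_ifs <;> lia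

theorem exists_equiv_of_sum_min_eq {lam : ι → ℕ} {mu : κ → ℕ} (hlam : ∀ j, lam j ≠ 0)
    (hmu : ∀ j, mu j ≠ 0) (h : ∀ i, ∑ j, min (lam j) i = ∑ j, min (mu j) i) :
    ∃ σ : ι ≃ κ, ∀ j, mu (σ j) = lam j := by
  have hcard (c : ℕ) : Nat.card {j // lam j = c} = Nat.card {j // mu j = c} := by
    rcases c with _ | i
    · simp [hlam, hmu]
    · have hl := two_mul_sum_min lam i
      have hm := two_mul_sum_min mu i
      rw [h, h, h] at hl
      lia
  let e (c : ℕ) : {j // lam j = c} ≃ {j // mu j = c} := (Finite.card_eq.1 (hcard c)).some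
  exact ⟨.ofFiberEquiv e, Equiv.ofFiberEquiv_map e⟩

end Partition

section Cyclic

/-- `F` is the residue field of `O` at the principal ideal generated by `π`. -/
class IsResidueFieldAt {O : Type*} [CommRing O] (π : O) (F : Type*) [Field F]
    [Algebra O F] : Prop where
  algebraMap_surjective : Function.Surjective (algebraMap O F)
  algebraMap_eq_zero_iff : ∀ c : O, algebraMap O F c = 0 ↔ π ∣ c

/-- The cyclic module `O / π ^ l`. -/
abbrev Cyclic {O : Type*} [CommRing O] (π : O) (l : ℕ) : Type _ :=
  O ⧸ Ideal.span {π ^ l}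

variable {O : Type*} [CommRing O] {π : O} {F : Type*} [Field F] [Algebra O F]

namespace Cyclic

theorem mk_eq_zero_iff {l : ℕ} {c : O} :
    (Ideal.Quotient.mk _ c : Cyclic π l) = 0 ↔ π ^ l ∣ c := by
  rw [Ideal.Quotient.eq_zero_iff_mem, Ideal.mem_span_singleton]

theorem smul_mk {l : ℕ} (c d : O) :
    c • (Ideal.Quotient.mk _ d : Cyclic π l) = Ideal.Quotient.mk _ (c * d) :=
  rfl

variable (π) in
/-- The map `O / π ^ a → O / π ^ b` given by multiplication by `π ^ (b - a)`, with truncated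
subtraction; it generates the module of all homomorphisms. -/
def shift (a b : ℕ) : Cyclic π a →ₗ[O] Cyclic π b :=
  Submodule.mapQ _ _ (LinearMap.mulLeft O (π ^ (b - a))) <| by
    refine Ideal.span_le.2 (Set.singleton_subset_iff.2 ?_)
    exact Ideal.mem_span_singleton.2
      ((pow_dvd_pow π (by lia : b ≤ b - a + a)).trans (pow_add π _ _).dvd)

theorem shift_mk (a b : ℕ) (c : O) :
    shift π a b (Ideal.Quotient.mk _ c) = Ideal.Quotient.mk _ (π ^ (b - a) * c) :=
  rfl

theorem shift_injective [IsDomain O] (hπ : π ≠ 0) {a b : ℕ} (hab : a ≤ b) :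
    Function.Injective (shift π a b) := by
  rw [injective_iff_map_eq_zero, Ideal.Quotient.mk_surjective.forall]
  intro c hc
  rw [shift_mk, mk_eq_zero_iff] at hc
  obtain ⟨k, rfl⟩ := Nat.exists_eq_add_of_le hab
  rw [Nat.add_sub_cancel_left, add_comm, pow_add] at hc
  exact mk_eq_zero_iff.2 ((mul_dvd_mul_iff_left (pow_ne_zero _ hπ)).1 hc)

theorem mem_range_shift_iff [IsDomain O] (hπ : π ≠ 0) {a b : ℕ} (hab : a ≤ b) {x : Cyclic π b} :
    x ∈ LinearMap.range (shift π a b) ↔ π ^ a • x = 0 := by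
  obtain ⟨k, rfl⟩ := Nat.exists_eq_add_of_le hab
  constructor
  · rintro ⟨y, rfl⟩
    obtain ⟨c, rfl⟩ := Ideal.Quotient.mk_surjective y
    rw [shift_mk, smul_mk, mk_eq_zero_iff,
      Nat.add_sub_cancel_left, ← mul_assoc, ← pow_add]
    exact dvd_mul_right _ _
  · obtain ⟨c, rfl⟩ := Ideal.Quotient.mk_surjective x
    intro hc
    rw [smul_mk, mk_eq_zero_iff, pow_add] at hc
    obtain ⟨d, rfl⟩ := (mul_dvd_mul_iff_left (pow_ne_zero _ hπ)).1 hc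
    exact ⟨Ideal.Quotient.mk _ d, by rw [shift_mk, Nat.add_sub_cancel_left]⟩

theorem exists_eq_smul_shift [IsDomain O] (hπ : π ≠ 0) {a b : ℕ}
    (f : Cyclic π a →ₗ[O] Cyclic π b) : ∃ q : O, f = q • shift π a b := by
  have hf : π ^ a • f (Ideal.Quotient.mk _ 1) = 0 := by
    rw [← map_smul, smul_mk, mul_one, mk_eq_zero_iff.2 dvd_rfl, map_zero]
  have hmem : f (Ideal.Quotient.mk _ 1) ∈ LinearMap.range (shift π a b) := by
    rcases le_total a b with hab | hba
    · exact (mem_range_shift_iff hπ hab).2 hf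
    · obtain ⟨c, hc⟩ := Ideal.Quotient.mk_surjective (f (Ideal.Quotient.mk _ 1))
      exact ⟨Ideal.Quotient.mk _ c, by
        rw [shift_mk, Nat.sub_eq_zero_of_le hba, pow_zero, one_mul, hc]⟩
  obtain ⟨y, hy⟩ := hmem
  obtain ⟨q, rfl⟩ := Ideal.Quotient.mk_surjective y
  refine ⟨q, Submodule.linearMap_qext _ (LinearMap.ext_ring ?_)⟩
  refine hy.symm.trans ?_
  rw [shift_mk, mul_comm, ← smul_mk]
  exact congrArg (q • Ideal.Quotient.mk _ ·) (mul_one _).symm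

variable (π F) in
/-- The projection of `O / π ^ (e + 1)` onto its quotient by `π`. -/
def head [IsResidueFieldAt π F] (e : ℕ) : Cyclic π (e + 1) →ₗ[O] F :=
  Submodule.liftQ _ (Algebra.linearMap O F) <| by
    refine Ideal.span_le.2 (Set.singleton_subset_iff.2 ?_)
    exact (IsResidueFieldAt.algebraMap_eq_zero_iff _).2 (dvd_pow_self π e.succ_ne_zero)

variable [IsResidueFieldAt π F]

theorem head_mk (e : ℕ) (c : O) : head π F e (Ideal.Quotient.mk _ c) = algebraMap O F c :=
  rfl

theorem head_surjective (e : ℕ) : Function.Surjective (head π F e) := fun a ↦ by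
  obtain ⟨c, rfl⟩ := IsResidueFieldAt.algebraMap_surjective π a
  exact ⟨_, head_mk e c⟩

theorem head_eq_zero_iff {e : ℕ} {x : Cyclic π (e + 1)} : head π F e x = 0 ↔ ∃ y, x = π • y := by
  obtain ⟨c, rfl⟩ := Ideal.Quotient.mk_surjective x
  rw [head_mk, IsResidueFieldAt.algebraMap_eq_zero_iff (π := π)]
  constructor
  · rintro ⟨d, rfl⟩
    exact ⟨Ideal.Quotient.mk _ d, map_mul _ _ _⟩
  · rintro ⟨y, hy⟩
    obtain ⟨d, rfl⟩ := Ideal.Quotient.mk_surjective y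
    have hdvd : π ^ (e + 1) ∣ c - π * d := by
      rw [← mk_eq_zero_iff, map_sub, sub_eq_zero]
      exact hy
    exact (dvd_iff_dvd_of_dvd_sub ((dvd_pow_self π e.succ_ne_zero).trans hdvd)).2
      (dvd_mul_right π d)

theorem head_zero_bijective : Function.Bijective (head π F 0) := by
  refine ⟨(injective_iff_map_eq_zero _).2 fun x hx ↦ ?_, head_surjective 0⟩
  obtain ⟨y, rfl⟩ := head_eq_zero_iff.1 hx
  obtain ⟨c, rfl⟩ := Ideal.Quotient.mk_surjective y
  rw [smul_mk, mk_eq_zero_iff, zero_add, pow_one]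
  exact dvd_mul_right π c

variable (π F) in
/-- The embedding of the residue field onto the kernel of `π` in `O / π ^ (e + 1)`. -/
noncomputable def socle (e : ℕ) : F →ₗ[O] Cyclic π (e + 1) :=
  shift π 1 (e + 1) ∘ₗ (LinearEquiv.ofBijective (head π F 0) head_zero_bijective).symm.toLinearMap

theorem socle_head_zero (e : ℕ) (x : Cyclic π 1) :
    socle π F e (head π F 0 x) = shift π 1 (e + 1) x :=
  congrArg _ (LinearEquiv.ofBijective_symm_apply_apply ..)

theorem socle_injective [IsDomain O] (hπ : π ≠ 0) (e : ℕ) : Function.Injective (socle π F e) :=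
  (shift_injective hπ (by lia)).comp (LinearEquiv.injective _)

theorem mem_range_socle_iff [IsDomain O] (hπ : π ≠ 0) {e : ℕ} {x : Cyclic π (e + 1)} :
    x ∈ LinearMap.range (socle π F e) ↔ π • x = 0 := by
  rw [socle, LinearEquiv.range_comp, mem_range_shift_iff hπ (by lia), pow_one]

theorem socle_algebraMap (e : ℕ) (c : O) :
    socle π F e (algebraMap O F c) = Ideal.Quotient.mk _ (π ^ e * c) := by
  rw [← head_mk (π := π) 0 c, socle_head_zero, shift_mk, Nat.add_sub_cancel]

theorem smul_socle (e : ℕ) (a : F) : π • socle π F e a = 0 := by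
  obtain ⟨c, rfl⟩ := IsResidueFieldAt.algebraMap_surjective π a
  rw [socle_algebraMap, smul_mk, mk_eq_zero_iff, ← mul_assoc, ← pow_succ']
  exact dvd_mul_right _ _

theorem head_socle (e : ℕ) (a : F) : head π F e (socle π F e a) = if e = 0 then a else 0 := by
  obtain ⟨c, rfl⟩ := IsResidueFieldAt.algebraMap_surjective π a
  rw [socle_algebraMap, head_mk]
  split_ifs with he
  · rw [he, pow_zero, one_mul]
  · exact (IsResidueFieldAt.algebraMap_eq_zero_iff _).2 ((dvd_pow_self π he).mul_right c)

theorem head_shift (a b : ℕ) (x : Cyclic π (a + 1)) :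
    head π F b (shift π (a + 1) (b + 1) x) = if b ≤ a then head π F a x else 0 := by
  obtain ⟨c, rfl⟩ := Ideal.Quotient.mk_surjective x
  rw [shift_mk, head_mk, head_mk, Nat.add_sub_add_right]
  split_ifs with hba
  · rw [Nat.sub_eq_zero_of_le hba, pow_zero, one_mul]
  · exact (IsResidueFieldAt.algebraMap_eq_zero_iff _).2
      ((dvd_pow_self π (by lia)).mul_right c)

theorem shift_socle (a b : ℕ) (v : F) :
    shift π (a + 1) (b + 1) (socle π F a v) = if a ≤ b then socle π F b v else 0 := by
  obtain ⟨c, rfl⟩ := IsResidueFieldAt.algebraMap_surjective π v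
  rw [socle_algebraMap, socle_algebraMap, shift_mk, Nat.add_sub_add_right]
  split_ifs with hab
  · rw [← mul_assoc, ← pow_add, Nat.sub_add_cancel hab]
  · exact mk_eq_zero_iff.2 (((pow_dvd_pow π (by lia)).mul_right c).mul_left _)

end Cyclic

end Cyclic

section Card

theorem pow_smul_eq_zero_of_card_eq {O : Type*} [CommRing O] {π : O}
    {ι M : Type*} [Fintype ι] [AddCommGroup M] [Module O M] [Finite M] {q : ℕ} {lam : ι → ℕ}
    (hcard : Nat.card M = q ^ ∑ j, lam j)
    (htype : ∀ i, Nat.card {x : M // π ^ i • x = 0} = q ^ ∑ j, min (lam j) i) (x : M) :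
    π ^ (∑ j, lam j) • x = 0 := by
  have hmin (j : ι) : min (lam j) (∑ j, lam j) = lam j :=
    min_eq_left (Finset.single_le_sum (fun _ _ ↦ Nat.zero_le _) (Finset.mem_univ j))
  have h := htype (∑ j, lam j)
  simp_rw [hmin, ← hcard] at h
  exact Set.eq_univ_iff_forall.1 ((Set.eq_univ_iff_ncard {x : M | π ^ (∑ j, lam j) • x = 0}).2 h) x

variable {O : Type*} [CommRing O] [IsDomain O] [IsPrincipalIdealRing O] {π : O}

namespace Cyclic

theorem card_eq (hπ : Irreducible π) (l : ℕ) :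
    Nat.card (Cyclic π l) = Nat.card (O ⧸ Ideal.span {π}) ^ l := by
  have hprime : (Ideal.span {π}).IsPrime := (Ideal.span_singleton_prime hπ.ne_zero).2 hπ.prime
  have hbot : Ideal.span {π} ≠ ⊥ := Ideal.span_singleton_eq_bot.not.2 hπ.ne_zero
  rw [← Submodule.cardQuot_apply, ← Submodule.cardQuot_apply, ← Ideal.span_singleton_pow,
    cardQuot_pow_of_prime hbot]

theorem card_ker_pow (hπ : Irreducible π) (l i : ℕ) :
    Nat.card {x : Cyclic π l // π ^ i • x = 0} = Nat.card (O ⧸ Ideal.span {π}) ^ min l i := by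
  have hiff (x : Cyclic π l) : π ^ i • x = 0 ↔ π ^ min l i • x = 0 := by
    rcases le_total i l with hil | hli
    · rw [min_eq_right hil]
    · obtain ⟨c, rfl⟩ := Ideal.Quotient.mk_surjective x
      rw [min_eq_left hli, smul_mk, smul_mk, mk_eq_zero_iff, mk_eq_zero_iff]
      exact iff_of_true ((pow_dvd_pow π hli).mul_right c) (dvd_mul_right _ c)
  rw [← card_eq hπ, Nat.card_congr (LinearEquiv.ofInjective (shift π (min l i) l)
    (shift_injective hπ.ne_zero (min_le_left ..))).toEquiv]
  refine Nat.card_congr (Equiv.subtypeEquivRight fun x ↦ ?_)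
  rw [hiff, mem_range_shift_iff hπ.ne_zero (min_le_left ..)]

theorem card_pi_ker_pow (hπ : Irreducible π) {ι : Type*} [Fintype ι] (lam : ι → ℕ) (i : ℕ) :
    Nat.card {x : ∀ j, Cyclic π (lam j) // π ^ i • x = 0} =
      Nat.card (O ⧸ Ideal.span {π}) ^ ∑ j, min (lam j) i := by
  simp_rw [← Finset.prod_pow_eq_pow_sum, ← card_ker_pow hπ, ← Nat.card_pi]
  refine Nat.card_congr ((Equiv.subtypeEquivRight fun x ↦ ?_).trans Equiv.subtypePiEquivPi)
  exact funext_iff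

end Cyclic

theorem exists_linearEquiv_pi_cyclic_ne_zero (hπ : Irreducible π) {M : Type*} [AddCommGroup M]
    [Module O M] [Module.Finite O M] (htors : Module.IsTorsion' M (Submonoid.powers π)) :
    ∃ (κ : Type) (_ : Fintype κ) (mu : κ → ℕ), (∀ j, mu j ≠ 0) ∧
      Nonempty (M ≃ₗ[O] ∀ j, Cyclic π (mu j)) := by
  obtain ⟨d, k, ⟨f⟩⟩ := Module.torsion_by_prime_power_decomposition hπ htors
  have hsub (j : Fin d) (hj : k j = 0) : Subsingleton (Cyclic π (k j)) :=
    Ideal.Quotient.subsingleton_iff.2 (by simp [hj])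
  let g : (∀ j, Cyclic π (k j)) →ₗ[O] ∀ j : {j // k j ≠ 0}, Cyclic π (k j) :=
    .pi fun j ↦ .proj j.1
  have hg : Function.Bijective g := by
    classical
    refine ⟨fun x y hxy ↦ funext fun j ↦ ?_, fun y ↦ ?_⟩
    · by_cases hj : k j = 0
      · exact (hsub j hj).elim _ _
      · exact congrFun hxy ⟨j, hj⟩
    · exact ⟨fun j ↦ if hj : k j ≠ 0 then y ⟨j, hj⟩ else 0, funext fun j ↦ dif_pos j.2⟩
  exact ⟨_, inferInstance, fun j : {j // k j ≠ 0} ↦ k j, fun j ↦ j.2,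
    ⟨f ≪≫ₗ DirectSum.linearEquivFunOnFintype O _ _ ≪≫ₗ .ofBijective g hg⟩⟩

theorem exists_linearEquiv_pi_cyclic (hπ : Irreducible π) [Finite (O ⧸ Ideal.span {π})]
    {ι M : Type*} [Fintype ι] [AddCommGroup M] [Module O M] [Finite M] {lam : ι → ℕ}
    (hlam : ∀ j, lam j ≠ 0) (hcard : Nat.card M = Nat.card (O ⧸ Ideal.span {π}) ^ ∑ j, lam j)
    (htype : ∀ i, Nat.card {x : M // π ^ i • x = 0} =
      Nat.card (O ⧸ Ideal.span {π}) ^ ∑ j, min (lam j) i) :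
    Nonempty (M ≃ₗ[O] ∀ j, Cyclic π (lam j)) := by
  obtain ⟨κ, _, mu, hmu, ⟨f⟩⟩ := exists_linearEquiv_pi_cyclic_ne_zero (M := M) hπ fun {x} ↦
    ⟨⟨_, _, rfl⟩, pow_smul_eq_zero_of_card_eq hcard htype x⟩
  have : (Ideal.span {π}).IsPrime := (Ideal.span_singleton_prime hπ.ne_zero).2 hπ.prime
  have hsum (i : ℕ) : ∑ j, min (lam j) i = ∑ j, min (mu j) i := by
    refine Nat.pow_right_injective (Finite.one_lt_card (α := O ⧸ Ideal.span {π})) ?_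
    beta_reduce
    rw [← htype, ← Cyclic.card_pi_ker_pow hπ]
    refine Nat.card_congr (f.toEquiv.subtypeEquiv fun x ↦ ?_)
    exact (f.map_eq_zero_iff.symm.trans (by rw [map_smul]; rfl))
  obtain ⟨σ, hσ⟩ := exists_equiv_of_sum_min_eq hlam hmu hsum
  obtain rfl : mu ∘ σ = lam := funext hσ
  exact ⟨f ≪≫ₗ (LinearEquiv.piCongrLeft O (fun j ↦ Cyclic π (mu j)) σ).symm⟩

end Card

/-- The module `⨁ O / π ^ (e j + 1)`, all of whose summands are nonzero. -/
abbrev CyclicSum {O ι : Type*} [CommRing O] (π : O) (e : ι → ℕ) : Type _ :=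
  ∀ j, Cyclic π (e j + 1)

namespace CyclicSum

variable {O : Type*} [CommRing O] {π : O} {F : Type*} [Field F] {ι : Type*} {e : ι → ℕ}

theorem pow_smul_eq_zero [Fintype ι] (x : CyclicSum π e) : π ^ (∑ j, (e j + 1)) • x = 0 := by
  funext j
  obtain ⟨c, hc⟩ := Ideal.Quotient.mk_surjective (x j)
  rw [Pi.smul_apply, ← hc, Cyclic.smul_mk]
  exact Cyclic.mk_eq_zero_iff.2 ((pow_dvd_pow π (Finset.single_le_sum
    (f := fun j ↦ e j + 1) (fun _ _ ↦ Nat.zero_le _) (Finset.mem_univ j))).mul_right c)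

section HeadSocle

variable (e) in
/-- The projection of `F ^ ι` onto the coordinates `j` with `e j = 0`, those at which
`O / π ^ (e j + 1)` is its own residue field. -/
def zeroPart : (ι → F) →ₗ[F] (ι → F) :=
  .pi fun j ↦ if e j = 0 then .proj j else 0

theorem zeroPart_apply (a : ι → F) (j : ι) : zeroPart e a j = if e j = 0 then a j else 0 := by
  rw [zeroPart, LinearMap.pi_apply]
  split_ifs <;> rfl

variable [Algebra O F] [IsResidueFieldAt π F]

variable (π F e) in
/-- The residues of the coordinates. -/
def head : CyclicSum π e →ₗ[O] ι → F :=
  LinearMap.pi fun j ↦ Cyclic.head π F (e j) ∘ₗ LinearMap.proj j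

variable (π F e) in
/-- The identification of `F ^ ι` with the kernel of `π`. -/
noncomputable def socle : (ι → F) →ₗ[O] CyclicSum π e :=
  LinearMap.pi fun j ↦ Cyclic.socle π F (e j) ∘ₗ LinearMap.proj j

theorem head_socle (a : ι → F) : head π F e (socle π F e a) = zeroPart e a :=
  funext fun j ↦ (Cyclic.head_socle (e j) (a j)).trans (zeroPart_apply a j).symm

theorem head_surjective : Function.Surjective (head π F e) := fun a ↦ by
  choose x hx using fun j ↦ Cyclic.head_surjective (π := π) (e j) (a j)
  exact ⟨x, funext hx⟩

theorem head_eq_zero_iff {x : CyclicSum π e} : head π F e x = 0 ↔ ∃ y, x = π • y := by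
  refine funext_iff.trans ((forall_congr' fun j ↦ Cyclic.head_eq_zero_iff).trans ?_)
  exact Classical.skolem.trans (exists_congr fun y ↦ funext_iff.symm)

theorem socle_injective [IsDomain O] (hπ : π ≠ 0) : Function.Injective (socle π F e) :=
  Function.Injective.piMap fun j ↦ Cyclic.socle_injective (F := F) hπ (e j)

theorem smul_socle (a : ι → F) : π • socle π F e a = 0 :=
  funext fun j ↦ Cyclic.smul_socle (e j) (a j)

theorem exists_socle_eq [IsDomain O] (hπ : π ≠ 0) {x : CyclicSum π e} (hx : π • x = 0) :
    ∃ a, socle π F e a = x := by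
  choose a ha using fun j ↦ (Cyclic.mem_range_socle_iff (F := F) hπ).2 (congrFun hx j)
  exact ⟨a, funext ha⟩

/-- Nakayama's lemma for the nilpotent action of `π`. -/
theorem bijective_of_surjective_head [Finite ι] (f : CyclicSum π e →ₗ[O] CyclicSum π e)
    (hf : Function.Surjective (head π F e ∘ₗ f)) : Function.Bijective f := by
  have := Fintype.ofFinite ι
  suffices hsurj : Function.Surjective f from
    ⟨OrzechProperty.injective_of_surjective_endomorphism f hsurj, hsurj⟩
  have happrox (k : ℕ) : ∀ x, ∃ y z, x = f y + π ^ k • z := by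
    induction k with
    | zero => exact fun x ↦ ⟨0, x, by simp⟩
    | succ k ih =>
      intro x
      obtain ⟨y, z, rfl⟩ := ih x
      obtain ⟨y', hy'⟩ := hf (head π F e z)
      obtain ⟨z', hz'⟩ := head_eq_zero_iff.1 ((map_sub (head π F e) z (f y')).trans
        (sub_eq_zero.2 hy'.symm))
      refine ⟨y + π ^ k • y', z', ?_⟩
      rw [sub_eq_iff_eq_add.1 hz', map_add, map_smul, pow_succ, mul_smul, smul_add]
      abel
  intro x
  obtain ⟨y, z, rfl⟩ := happrox (∑ j, (e j + 1)) x
  exact ⟨y, by rw [pow_smul_eq_zero, add_zero]⟩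

end HeadSocle

section Endomorphism

variable [Fintype ι]

variable (π e) in
/-- The endomorphism of `⨁ O / π ^ (e j + 1)` whose component from the `j`-th to the `i`-th summand
is `Q i j` times the generator of the homomorphisms between these. -/
def ofMatrix (Q : Matrix ι ι O) : CyclicSum π e →ₗ[O] CyclicSum π e :=
  LinearMap.pi fun i ↦ ∑ j, Q i j • Cyclic.shift π (e j + 1) (e i + 1) ∘ₗ LinearMap.proj j

theorem ofMatrix_apply (Q : Matrix ι ι O) (x : CyclicSum π e) (i : ι) :
    ofMatrix π e Q x i = ∑ j, Q i j • Cyclic.shift π (e j + 1) (e i + 1) (x j) := by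
  simp [ofMatrix]

theorem exists_eq_ofMatrix [IsDomain O] (hπ : π ≠ 0) (f : CyclicSum π e →ₗ[O] CyclicSum π e) :
    ∃ Q, f = ofMatrix π e Q := by
  classical
  choose Q hQ using fun i j ↦ Cyclic.exists_eq_smul_shift hπ
    ((LinearMap.proj i : CyclicSum π e →ₗ[O] _) ∘ₗ f ∘ₗ
      LinearMap.single O (fun j ↦ Cyclic π (e j + 1)) j)
  refine ⟨.of Q, LinearMap.pi_ext fun j x ↦ funext fun i ↦ ?_⟩
  rw [ofMatrix_apply, Finset.sum_eq_single j]
  · rw [Pi.single_eq_same]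
    exact LinearMap.congr_fun (hQ i j) x
  · intro k _ hk
    rw [Pi.single_eq_of_ne hk, map_zero, smul_zero]
  · simp

variable (e) in
/-- The action on residues of the endomorphism given by a matrix reducing to `C`. -/
def headMatrix (C : Matrix ι ι F) : Matrix ι ι F :=
  .of fun i j ↦ if e i ≤ e j then C i j else 0

variable (e) in
/-- The action on the kernel of `π` of the endomorphism given by a matrix reducing to `C`. -/
def socleMatrix (C : Matrix ι ι F) : Matrix ι ι F :=
  .of fun i j ↦ if e j ≤ e i then C i j else 0

variable [Algebra O F] [IsResidueFieldAt π F]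

theorem head_ofMatrix (Q : Matrix ι ι O) (x : CyclicSum π e) :
    head π F e (ofMatrix π e Q x) =
      (headMatrix e (Q.map (algebraMap O F))).mulVec (head π F e x) := by
  funext i
  refine (congrArg (Cyclic.head π F (e i)) (ofMatrix_apply Q x i)).trans ?_
  rw [map_sum, Matrix.mulVec, dotProduct]
  refine Finset.sum_congr rfl fun j _ ↦ ?_
  rw [map_smul, Cyclic.head_shift, headMatrix, Matrix.of_apply, Matrix.map_apply, ite_mul, zero_mul,
    Algebra.smul_def, mul_ite, mul_zero]
  rfl

theorem ofMatrix_socle (Q : Matrix ι ι O) (a : ι → F) :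
    ofMatrix π e Q (socle π F e a) =
      socle π F e ((socleMatrix e (Q.map (algebraMap O F))).mulVec a) := by
  funext i
  refine (ofMatrix_apply Q _ i).trans (Eq.trans ?_ (map_sum (Cyclic.socle π F (e i)) _ _).symm)
  refine Finset.sum_congr rfl fun j _ ↦ ?_
  refine (congrArg (Q i j • ·) (Cyclic.shift_socle (e j) (e i) (a j))).trans ?_
  change _ = Cyclic.socle π F (e i)
    ((if e j ≤ e i then algebraMap O F (Q i j) else 0) * a j)
  rw [ite_mul, zero_mul, ← Algebra.smul_def, apply_ite (Cyclic.socle π F (e i)), map_smul,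
    map_zero, smul_ite, smul_zero]

end Endomorphism

end CyclicSum

/-! ### Lie algebras with brackets killed by `π` -/

section Bracket

open CyclicSum (zeroPart)

variable {ι F : Type*} [Field F] (e : ι → ℕ)

variable (F) in
/-- The data describing a Lie bracket on `⨁ O / π ^ (e j + 1)` with values in the kernel of `π`:
such a bracket factors through the residues of its arguments. -/
structure BracketForm where
  /-- The bracket, as a map from pairs of residues to the kernel of `π`. -/
  toLinearMap : (ι → F) →ₗ[F] (ι → F) →ₗ[F] (ι → F)
  self (a : ι → F) : toLinearMap a a = 0
  leibniz (a b c : ι → F) : toLinearMap a (zeroPart e (toLinearMap b c)) =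
    toLinearMap (zeroPart e (toLinearMap a b)) c + toLinearMap b (zeroPart e (toLinearMap a c))

variable {e}

/-- The Lie ring of residues of the Lie algebras described by `β`. -/
def HeadLie (_β : BracketForm F e) : Type _ :=
  ι → F

namespace HeadLie

variable (β : BracketForm F e)

instance : AddCommGroup (HeadLie β) :=
  inferInstanceAs (AddCommGroup (ι → F))

instance : LieRing (HeadLie β) where
  bracket a b := zeroPart e (β.toLinearMap a b)
  add_lie a b c := (congrArg (zeroPart e) (β.toLinearMap.map_add₂ a b c)).trans (map_add _ _ _)
  lie_add a b c := (congrArg (zeroPart e) (map_add (β.toLinearMap a) b c)).trans (map_add _ _ _)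
  lie_self a := (congrArg (zeroPart e) (β.self a)).trans (map_zero _)
  leibniz_lie a b c := (congrArg (zeroPart e) (β.leibniz a b c)).trans (map_add _ _ _)

end HeadLie

/-- The Lie algebra over `O` described by `β`. -/
def LieModel {O : Type*} [CommRing O] (π : O) (_β : BracketForm F e) : Type _ :=
  ∀ j, Cyclic π (e j + 1)

namespace LieModel

variable {O : Type*} [CommRing O] {π : O} (β : BracketForm F e)

instance : AddCommGroup (LieModel π β) :=
  inferInstanceAs (AddCommGroup (∀ j, Cyclic π (e j + 1)))

instance : Module O (LieModel π β) :=
  inferInstanceAs (Module O (∀ j, Cyclic π (e j + 1)))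

variable [Algebra O F] [IsResidueFieldAt π F]

/-- `CyclicSum.head` on the underlying module of the Lie algebra described by `β`. -/
def head : LieModel π β →ₗ[O] ι → F :=
  CyclicSum.head π F e

/-- `CyclicSum.socle` into the underlying module of the Lie algebra described by `β`. -/
noncomputable def socle : (ι → F) →ₗ[O] LieModel π β :=
  CyclicSum.socle π F e

theorem head_socle (a : ι → F) : head β (π := π) (socle β a) = zeroPart e a :=
  CyclicSum.head_socle a

theorem head_surjective : Function.Surjective (head β (π := π)) :=
  CyclicSum.head_surjective

noncomputable instance : LieRing (LieModel π β) where
  bracket x y := socle β (β.toLinearMap (head β x) (head β y))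
  add_lie x y z := by
    change socle β (β.toLinearMap (head β (x + y)) _) = _
    rw [map_add, map_add, LinearMap.add_apply, map_add]
  lie_add x y z := by
    change socle β (β.toLinearMap _ (head β (y + z))) = _
    rw [map_add, map_add, map_add]
  lie_self x := by
    change socle β (β.toLinearMap _ _) = 0
    rw [β.self, map_zero]
  leibniz_lie x y z := by
    change socle β (β.toLinearMap _ (head β (socle β _))) =
      socle β (β.toLinearMap (head β (socle β _)) _) +
        socle β (β.toLinearMap _ (head β (socle β _)))
    rw [head_socle, head_socle, head_socle, β.leibniz, map_add]

theorem lie_def (x y : LieModel π β) :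
    ⁅x, y⁆ = socle β (β.toLinearMap (head β x) (head β y)) :=
  rfl

noncomputable instance : LieAlgebra O (LieModel π β) where
  lie_smul c x y := by
    rw [lie_def, map_smul, algebra_compatible_smul F c, map_smul, ← algebra_compatible_smul F c,
      map_smul, lie_def]

theorem smul_lie_eq_zero (x y : LieModel π β) : π • ⁅x, y⁆ = 0 :=
  CyclicSum.smul_socle _

variable (π) in
/-- Passing to residues is a homomorphism of Lie rings. -/
def headHom : LieModel π β →ₗ⁅ℤ⁆ HeadLie β :=
  { (head β (π := π)).toAddMonoidHom.toIntLinearMap with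
    map_lie' := head_socle β _ }

end LieModel

theorem lieRing_isNilpotent_iff_of_surjective {L L' : Type*} [LieRing L] [LieRing L']
    (f : L →ₗ⁅ℤ⁆ L') (hf : Function.Surjective f) (hker : f.ker ≤ LieAlgebra.center ℤ L) :
    LieRing.IsNilpotent L ↔ LieRing.IsNilpotent L' := by
  refine ⟨fun _ ↦ hf.lieAlgebra_isNilpotent, fun _ ↦ ?_⟩
  refine LieAlgebra.nilpotent_of_nilpotent_quotient hker ?_
  have hinj : Function.Injective f.range.incl := Subtype.val_injective
  exact (hinj.comp f.quotKerEquivRange.injective).lieAlgebra_isNilpotent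
    (f := f.range.incl.comp f.quotKerEquivRange.toLieHom)

theorem LieModel.isNilpotent_iff {O : Type*} [CommRing O] {π : O} [Algebra O F]
    [IsResidueFieldAt π F] (β : BracketForm F e) :
    LieRing.IsNilpotent (LieModel π β) ↔ LieRing.IsNilpotent (HeadLie β) := by
  refine lieRing_isNilpotent_iff_of_surjective (headHom π β) (head_surjective β)
    fun x hx y ↦ ?_
  rw [lie_def, show head β x = 0 from hx, map_zero, map_zero]

end Bracket

section Classification

open CyclicSum

variable {ι F : Type*} [Fintype ι] [Field F] {e : ι → ℕ}

/-- Two bracket forms are equivalent if a matrix, through its actions on residues and on the kernel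
of `π`, carries one to the other; neither `O` nor `π` enters this condition. -/
def BracketForm.IsEquivalent (β β' : BracketForm F e) : Prop :=
  ∃ C : Matrix ι ι F, Function.Surjective (headMatrix e C).mulVec ∧
    ∀ a b, (socleMatrix e C).mulVec (β.toLinearMap a b) =
      β'.toLinearMap ((headMatrix e C).mulVec a) ((headMatrix e C).mulVec b)

namespace LieModel

variable {O : Type*} [CommRing O] {π : O} [Algebra O F] [IsResidueFieldAt π F]

theorem nonempty_lieEquiv_of_isEquivalent {β β' : BracketForm F e} (h : β.IsEquivalent β') :
    Nonempty (LieModel π β ≃ₗ⁅O⁆ LieModel π β') := by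
  obtain ⟨C, hC, hβ⟩ := h
  choose q hq using IsResidueFieldAt.algebraMap_surjective π (F := F)
  obtain ⟨Q, rfl⟩ : ∃ Q : Matrix ι ι O, Q.map (algebraMap O F) = C :=
    ⟨C.map q, Matrix.ext fun i j ↦ hq (C i j)⟩
  have hbij : Function.Bijective (ofMatrix π e Q) :=
    bijective_of_surjective_head (F := F) _ fun a ↦ by
      obtain ⟨b, hb⟩ := hC a
      obtain ⟨x, rfl⟩ := CyclicSum.head_surjective (π := π) (e := e) b
      exact ⟨x, (head_ofMatrix Q x).trans hb⟩
  let f : LieModel π β →ₗ⁅O⁆ LieModel π β' :=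
    { ofMatrix π e Q with
      map_lie' := fun {x y} ↦ by
        refine (ofMatrix_socle Q _).trans (congrArg (CyclicSum.socle π F e) ?_)
        refine (hβ _ _).trans ?_
        exact congrArg₂ (fun a b ↦ β'.toLinearMap a b) (head_ofMatrix Q x).symm
          (head_ofMatrix Q y).symm }
  exact ⟨LieEquiv.ofBijective f hbij⟩

theorem isEquivalent_of_lieEquiv [IsDomain O] (hπ : π ≠ 0) {β β' : BracketForm F e}
    (f : LieModel π β ≃ₗ⁅O⁆ LieModel π β') : β.IsEquivalent β' := by
  obtain ⟨Q, hQ⟩ := exists_eq_ofMatrix hπ ((f.toLinearEquiv : LieModel π β →ₗ[O] LieModel π β') :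
    CyclicSum π e →ₗ[O] CyclicSum π e)
  have hhead (x : LieModel π β) :
      head β' (f x) = (headMatrix e (Q.map (algebraMap O F))).mulVec (head β x) :=
    (congrArg (CyclicSum.head π F e) (LinearMap.congr_fun hQ x)).trans (head_ofMatrix Q x)
  refine ⟨Q.map (algebraMap O F), fun a ↦ ?_, fun a b ↦ ?_⟩
  · obtain ⟨x, rfl⟩ := head_surjective β (π := π) a
    obtain ⟨y, rfl⟩ := f.surjective x
    exact ⟨_, (hhead y).symm⟩
  · obtain ⟨x, rfl⟩ := head_surjective β (π := π) a
    obtain ⟨y, rfl⟩ := head_surjective β (π := π) b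
    refine socle_injective hπ ((ofMatrix_socle Q _).symm.trans ?_)
    refine (LinearMap.congr_fun hQ ⁅x, y⁆).symm.trans ?_
    refine (LieEquiv.map_lie f x y).trans (congrArg (CyclicSum.socle π F e) ?_)
    exact congrArg₂ (fun a b ↦ β'.toLinearMap a b) (hhead x) (hhead y)

theorem nonempty_lieEquiv_iff [IsDomain O] (hπ : π ≠ 0) {β β' : BracketForm F e} :
    Nonempty (LieModel π β ≃ₗ⁅O⁆ LieModel π β') ↔ β.IsEquivalent β' :=
  ⟨fun ⟨f⟩ ↦ isEquivalent_of_lieEquiv hπ f, nonempty_lieEquiv_of_isEquivalent⟩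

end LieModel

end Classification

section Existence

open CyclicSum

variable {ι F : Type*} [Field F] {e : ι → ℕ} {O : Type*} [CommRing O] {π : O}
  [Algebra O F] [IsResidueFieldAt π F] {L : Type*} [LieRing L] [LieAlgebra O L]

theorem lie_eq_lie_of_head_eq_head (φ : L ≃ₗ[O] CyclicSum π e)
    (hL : ∀ x y : L, π • ⁅x, y⁆ = 0) {x x' y y' : L}
    (hx : head π F e (φ x) = head π F e (φ x'))
    (hy : head π F e (φ y) = head π F e (φ y')) : ⁅x, y⁆ = ⁅x', y'⁆ := by
  have hzero {z z' : L} (hz : head π F e (φ z) = head π F e (φ z')) (w : L) :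
      ⁅z - z', w⁆ = 0 := by
    rw [← sub_eq_zero, ← map_sub, ← map_sub] at hz
    obtain ⟨u, hu⟩ := head_eq_zero_iff.1 hz
    rw [← φ.symm_apply_apply (z - z'), hu, map_smul, smul_lie, hL]
  rw [← sub_eq_zero, ← sub_add_sub_cancel _ ⁅x', y⁆, ← sub_lie, ← lie_sub, hzero hx,
    ← lie_skew, hzero hy, neg_zero, add_zero]

theorem exists_socle_eq_lie [IsDomain O] (hπ : π ≠ 0) (φ : L ≃ₗ[O] CyclicSum π e)
    (hL : ∀ x y : L, π • ⁅x, y⁆ = 0) :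
    ∃ v : (ι → F) → (ι → F) → ι → F, ∀ x y : L,
      socle π F e (v (head π F e (φ x)) (head π F e (φ y))) = φ ⁅x, y⁆ := by
  choose s hs using (head_surjective (π := π) (F := F) (e := e)).comp φ.surjective
  choose v hv using fun a b ↦ exists_socle_eq (F := F) hπ
    ((map_smul φ π ⁅s a, s b⁆).symm.trans ((congrArg φ (hL _ _)).trans (map_zero φ)))
  exact ⟨v, fun x y ↦ (hv _ _).trans
    (congrArg φ (lie_eq_lie_of_head_eq_head (F := F) φ hL (hs _) (hs _)))⟩

theorem exists_linearMap_socle_eq_lie [IsDomain O] (hπ : π ≠ 0) (φ : L ≃ₗ[O] CyclicSum π e)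
    (hL : ∀ x y : L, π • ⁅x, y⁆ = 0) :
    ∃ B : (ι → F) →ₗ[F] (ι → F) →ₗ[F] (ι → F), ∀ x y : L,
      socle π F e (B (head π F e (φ x)) (head π F e (φ y))) = φ ⁅x, y⁆ := by
  obtain ⟨v, hv⟩ := exists_socle_eq_lie (F := F) hπ φ hL
  have hinj : Function.Injective (socle π F e) := socle_injective hπ
  have hsurj : Function.Surjective (fun x : L ↦ head π F e (φ x)) :=
    head_surjective.comp φ.surjective
  have hscalar := IsResidueFieldAt.algebraMap_surjective π (F := F)
  refine ⟨LinearMap.mk₂ F v ?_ ?_ ?_ ?_, hv⟩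
  · refine hsurj.forall₃.2 fun x y z ↦ hinj ?_
    rw [← map_add, ← map_add, hv, map_add (socle π F e), hv, hv, add_lie, map_add]
  · refine hscalar.forall.2 fun c ↦ hsurj.forall₂.2 fun x y ↦ hinj ?_
    rw [algebraMap_smul, algebraMap_smul, ← map_smul, ← map_smul, hv,
      map_smul (socle π F e), hv, smul_lie, map_smul]
  · refine hsurj.forall₃.2 fun x y z ↦ hinj ?_
    rw [← map_add, ← map_add, hv, map_add (socle π F e), hv, hv, lie_add, map_add]
  · refine hscalar.forall.2 fun c ↦ hsurj.forall₂.2 fun x y ↦ hinj ?_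
    rw [algebraMap_smul, algebraMap_smul, ← map_smul, ← map_smul, hv,
      map_smul (socle π F e), hv, lie_smul, map_smul]

theorem exists_nonempty_lieEquiv_lieModel [IsDomain O] (hπ : π ≠ 0) (φ : L ≃ₗ[O] CyclicSum π e)
    (hL : ∀ x y : L, π • ⁅x, y⁆ = 0) :
    ∃ β : BracketForm F e, Nonempty (L ≃ₗ⁅O⁆ LieModel π β) := by
  obtain ⟨B, hB⟩ := exists_linearMap_socle_eq_lie (F := F) hπ φ hL
  have hzero (x y : L) : zeroPart e (B (head π F e (φ x)) (head π F e (φ y))) =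
      head π F e (φ ⁅x, y⁆) := by
    rw [← head_socle (π := π), hB]
  have hsurj (a : ι → F) : ∃ x : L, head π F e (φ x) = a :=
    head_surjective.comp φ.surjective a
  let β : BracketForm F e :=
    { toLinearMap := B
      self a := by
        obtain ⟨x, rfl⟩ := hsurj a
        refine socle_injective (π := π) (e := e) hπ ?_
        rw [hB, lie_self, map_zero, map_zero]
      leibniz a b c := by
        obtain ⟨x, rfl⟩ := hsurj a
        obtain ⟨y, rfl⟩ := hsurj b
        obtain ⟨z, rfl⟩ := hsurj c
        refine socle_injective (π := π) (e := e) hπ ?_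
        rw [hzero, hzero, hzero, map_add, hB, hB, hB, leibniz_lie, map_add] }
  exact ⟨β, ⟨{ φ with map_lie' := fun {x y} ↦ (hB x y).symm }⟩⟩

end Existence

section Transfer

variable {F O : Type} [Field F] [CommRing O] {π : O} [Algebra O F] [IsResidueFieldAt π F]

variable (π F) in
theorem card_quotient_eq : Nat.card (O ⧸ Ideal.span {π}) = Nat.card F := by
  have h := Nat.card_congr (Equiv.ofBijective _ (Cyclic.head_zero_bijective (π := π) (F := F)))
  rwa [zero_add, Cyclic, pow_one] at h

variable [IsDomain O] [IsPrincipalIdealRing O] {ι : Type} [Fintype ι] {e : ι → ℕ}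

theorem LieModel.isTypedLie (hπ : Irreducible π) {β : BracketForm F e}
    (hβ : LieRing.IsNilpotent (HeadLie β)) :
    IsTypedLie π (Nat.card F) (∑ j, (e j + 1)) (fun j ↦ e j + 1) (LieModel π β) := by
  rw [← card_quotient_eq F π]
  refine ⟨?_, Cyclic.card_pi_ker_pow hπ _, (isNilpotent_iff β).2 hβ, smul_lie_eq_zero β⟩
  rw [← Finset.prod_pow_eq_pow_sum]
  exact Nat.card_pi.trans (Finset.prod_congr rfl fun j _ ↦ Cyclic.card_eq hπ _)

theorem nonempty_quot_isEquivalent_equiv [Finite F] (hπ : Irreducible π) :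
    Nonempty (Quot (α := {β : BracketForm F e // LieRing.IsNilpotent (HeadLie β)})
        (InvImage BracketForm.IsEquivalent Subtype.val) ≃
      Quot (typedLieOverIsoRel π (Nat.card F) (∑ j, (e j + 1)) (fun j ↦ e j + 1))) := by
  refine nonempty_quot_equiv (typedLieOverIsoRel_equivalence _ _ _ _) (fun β ↦
    ⟨⟨LieModel π β.1, inferInstance, inferInstance⟩, LieModel.isTypedLie hπ β.2⟩)
    (fun β β' ↦ (LieModel.nonempty_lieEquiv_iff hπ.ne_zero).symm) ?_
  rintro ⟨⟨L, _, _⟩, hcard, htype, hnil, hlie⟩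
  have hF := card_quotient_eq F π
  have : Finite L := Nat.finite_of_card_ne_zero (hcard ▸ pow_ne_zero _ Nat.card_pos.ne')
  have : Finite (O ⧸ Ideal.span {π}) := Nat.finite_of_card_ne_zero (hF ▸ Nat.card_pos.ne')
  rw [← hF] at hcard htype
  obtain ⟨φ⟩ := exists_linearEquiv_pi_cyclic hπ (fun j ↦ (e j).succ_ne_zero) hcard htype
  obtain ⟨β, ⟨f⟩⟩ := exists_nonempty_lieEquiv_lieModel (F := F) hπ.ne_zero φ hlie
  have : LieRing.IsNilpotent (LieModel π β) :=
    Function.Surjective.lieAlgebra_isNilpotent (f := f.toLieHom) f.surjective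
  exact ⟨⟨β, (LieModel.isNilpotent_iff β).1 this⟩, ⟨f.symm⟩⟩

end Transfer

section Quotient

variable {O : Type} [CommRing O] {π : O} {ι : Type} [Fintype ι] {p n : ℕ} {lam : ι → ℕ}

theorem isTypedLie_algebraMap_iff {S L : Type*} [CommRing S] [Algebra O S] [LieRing L]
    [LieAlgebra O L] [LieAlgebra S L] [IsScalarTower O S L] :
    IsTypedLie (algebraMap O S π) p n lam L ↔ IsTypedLie π p n lam L := by
  simp only [IsTypedLie, ← map_pow, algebraMap_smul]

theorem nonempty_lieEquiv_iff_of_surjective {S L L' : Type*} [CommRing S] [Algebra O S] [LieRing L]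
    [LieRing L'] [LieAlgebra O L] [LieAlgebra S L] [IsScalarTower O S L] [LieAlgebra O L']
    [LieAlgebra S L'] [IsScalarTower O S L'] (hS : Function.Surjective (algebraMap O S)) :
    Nonempty (L ≃ₗ⁅S⁆ L') ↔ Nonempty (L ≃ₗ⁅O⁆ L') :=
  ⟨fun ⟨e⟩ ↦ ⟨{ e with map_smul' := (e.toLinearMap.restrictScalars O).map_smul }⟩,
    fun ⟨e⟩ ↦ ⟨{ e with map_smul' := (e.toLinearMap.extendScalarsOfSurjective hS).map_smul }⟩⟩

/-- Restriction of scalars for Lie algebras, without a change of carrier. -/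
abbrev restrictLieAlgebra (O : Type*) {S L : Type*} [CommRing O] [CommRing S] [Algebra O S]
    [LieRing L] [LieAlgebra S L] : LieAlgebra O L :=
  letI := Module.compHom L (algebraMap O S)
  { lie_smul := fun c x y ↦ lie_smul (algebraMap O S c) x y }

/-- Lie algebras over `O` killed by the ideal `I` are Lie algebras over `O ⧸ I`. -/
abbrev quotientLieAlgebra {I : Ideal O} {L : Type*} [LieRing L] [LieAlgebra O L]
    (hL : Module.IsTorsionBySet O L I) : LieAlgebra (O ⧸ I) L :=
  letI := hL.module
  { lie_smul := Ideal.Quotient.mk_surjective.forall.2 fun c x y ↦ lie_smul c x y }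

theorem nonempty_quot_quotient_equiv (hsum : ∑ j, lam j = n) (hp : p ≠ 0) :
    Nonempty (Quot (typedLieOverIsoRel (Ideal.Quotient.mk (Ideal.span {π ^ n}) π) p n lam) ≃
      Quot (typedLieOverIsoRel π p n lam)) := by
  set I := Ideal.span {π ^ n}
  refine nonempty_quot_equiv (typedLieOverIsoRel_equivalence _ _ _ _) (fun ⟨⟨L, _, _⟩, hL⟩ ↦
    letI : LieAlgebra O L := restrictLieAlgebra O (S := O ⧸ I)
    haveI : IsScalarTower O (O ⧸ I) L := .of_algebraMap_smul fun _ _ ↦ rfl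
    ⟨⟨L, inferInstance, inferInstance⟩, isTypedLie_algebraMap_iff.1 hL⟩) ?_ ?_
  · rintro ⟨⟨L, _, _⟩, hL⟩ ⟨⟨L', _, _⟩, hL'⟩
    let : LieAlgebra O L := restrictLieAlgebra O (S := O ⧸ I)
    have : IsScalarTower O (O ⧸ I) L := .of_algebraMap_smul fun _ _ ↦ rfl
    let : LieAlgebra O L' := restrictLieAlgebra O (S := O ⧸ I)
    have : IsScalarTower O (O ⧸ I) L' := .of_algebraMap_smul fun _ _ ↦ rfl
    exact nonempty_lieEquiv_iff_of_surjective Ideal.Quotient.mk_surjective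
  · rintro ⟨⟨L, _, _⟩, hL⟩
    have : Finite L := Nat.finite_of_card_ne_zero (hL.1 ▸ pow_ne_zero _ hp)
    have htors : Module.IsTorsionBySet O L I :=
      (Module.isTorsionBySet_span_singleton_iff _).2 fun x ↦
        hsum ▸ pow_smul_eq_zero_of_card_eq (hsum.symm ▸ hL.1) hL.2.1 x
    let := quotientLieAlgebra htors
    exact ⟨⟨⟨L, inferInstance, inferInstance⟩, isTypedLie_algebraMap_iff.2 hL⟩, ⟨.refl⟩⟩

end Quotient

section Comparison

theorem nonempty_quot_typedLieOver_equiv (F : Type) [Field F] [Finite F] {O O' : Type} [CommRing O]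
    [IsDomain O] [IsPrincipalIdealRing O] [CommRing O'] [IsDomain O'] [IsPrincipalIdealRing O']
    {π : O} {π' : O'} [Algebra O F] [IsResidueFieldAt π F] [Algebra O' F] [IsResidueFieldAt π' F]
    (hπ : Irreducible π) (hπ' : Irreducible π') {ι : Type} [Fintype ι] {lam : ι → ℕ}
    (hlam : ∀ j, lam j ≠ 0) :
    Nonempty (Quot (typedLieOverIsoRel π (Nat.card F) (∑ j, lam j) lam) ≃
      Quot (typedLieOverIsoRel π' (Nat.card F) (∑ j, lam j) lam)) := by
  choose e he using fun j ↦ Nat.exists_eq_succ_of_ne_zero (hlam j)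
  obtain rfl : lam = fun j ↦ e j + 1 := funext he
  obtain ⟨f⟩ := nonempty_quot_isEquivalent_equiv (F := F) (e := e) hπ
  obtain ⟨f'⟩ := nonempty_quot_isEquivalent_equiv (F := F) (e := e) hπ'
  exact ⟨f.symm.trans f'⟩

theorem isResidueFieldAt_intCast (p : ℕ) [Fact p.Prime] : IsResidueFieldAt (p : ℤ) (ZMod p) where
  algebraMap_surjective := ZMod.intCast_surjective
  algebraMap_eq_zero_iff c := ZMod.intCast_zmod_eq_zero_iff_dvd c p

/-- The residue field `F` of `F[X]` at `X`, through evaluation at `0`. -/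
noncomputable abbrev polynomialAlgebra (F : Type*) [Field F] : Algebra F[X] F :=
  (evalRingHom 0).toAlgebra

theorem isResidueFieldAt_X (F : Type*) [Field F] :
    letI := polynomialAlgebra F
    IsResidueFieldAt (X : F[X]) F :=
  letI := polynomialAlgebra F
  { algebraMap_surjective := fun a ↦ ⟨C a, eval_C⟩
    algebraMap_eq_zero_iff := fun _ ↦ dvd_iff_isRoot.symm.trans (by simp) }

end Comparison

end Lazard

/-- For `p ≥ n` prime and a partition `λ₁ ≥ ⋯ ≥ λ_t` of `n`, there is a bijection between
isomorphism classes of groups of order `p ^ n` of type `λ` with `⁅x,y⁆ ^ p = 1`,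
and isomorphism classes of nilpotent `R_n`-Lie algebras of type `λ` with `T • ⁅a,b⁆ = 0`. -/
theorem typed_correspondence (p n t : ℕ) (hp : p.Prime) (hn : 1 ≤ n) (hpn : n ≤ p)
    (lam : Fin t → ℕ) (hmono : Antitone lam) (hpos : ∀ j, 1 ≤ lam j)
    (hsum : ∑ j, lam j = n) :
    Nonempty (Quot (typedGroupIsoRel p n t lam) ≃ Quot (typedLieIsoRel p n t lam)) := by
  have : Fact p.Prime := ⟨hp⟩
  have := Lazard.isResidueFieldAt_intCast p
  let := Lazard.polynomialAlgebra (ZMod p)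
  have := Lazard.isResidueFieldAt_X (ZMod p)
  obtain ⟨toLie⟩ := Lazard.nonempty_quot_typedGroup_equiv (lam := lam) hp hpn
  obtain ⟨changeBase⟩ := Lazard.nonempty_quot_typedLieOver_equiv (ZMod p)
    (Nat.prime_iff_prime_int.1 hp).irreducible (irreducible_X (R := ZMod p))
    fun j ↦ Nat.one_le_iff_ne_zero.1 (hpos j)
  obtain ⟨toQuotient⟩ :=
    Lazard.nonempty_quot_quotient_equiv (π := (X : (ZMod p)[X])) hsum hp.ne_zero
  rw [Nat.card_zmod, hsum] at changeBase
  exact ⟨toLie.trans (changeBase.trans toQuotient.symm)⟩
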